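/- arXiv:2508.16960 — 3 statements merged into one kernel-verified Lean document; each statement's English description precedes it below -/
import Mathlib

section
/- For every r > 3/4 there exists a constant C = C(r) > 0 such that for every T with 0 ≤ T ≤ 1 and every Schwartz function φ₀ on ℝ²: (∫_ℝ (sup_{(x₂,t) ∈ ℝ×[0,T]} |(U(t)φ₀)(x₁,x₂)|)² dx₁)^{1/2} ≤ C ‖φ₀‖_{H^r(ℝ²)}. -/
/-!
The estimate follows from a `TT*` argument applied to a measurable linearization of the supremum.

Under the change of variables `ξ₁ = a + b`, `ξ₂ = √3 (a - b)` (`rot`) the symbol `ξ₁(ξ₁² + ξ₂²)` becomes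
`4(a³ + b³)`. Hence the convolution kernel of `U(t)` localized by a tensor cutoff `χ_j(a) χ_k(b)` is a
product of two one-dimensional integrals `∫ e^{i(za + τa³)} χ(a) da` (`exists_kernel_eq`). Each of them
obeys, at frequency scale `M`, a trivial bound `M`, a van der Corput bound `(M|τ|)^{-1/2}`
(`Amp.osc_vdc`, from Weyl differencing and the non-stationary phase lemma `nonstat`), and the decay
`M⁻¹ z⁻²` when `|z|` is much larger than `|τ| M²`; `exists_dyadic` supplies the cutoffs. Multiplying
these bounds (`pair_bound`) shows that for `|t| ≤ 1` the kernel at scales `2^j`, `2^k` is dominated,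
uniformly in `x₂` and `t`, by
`C (N^{7/6} |x₁|^{-5/6} 1_{|x₁| ≤ 384 N²} + N / (1 + x₁²))` with `N = 2^max(j,k)`, a function of `x₁` whose
integral is `≲ N^{3/2}` (`lintegral_maj`).

Let `Y`, `T` be measurable functions of `x₁`, with `0 ≤ T ≤ 1`. By `TT*` and the bound
`|uv| ≤ |u|² + |v|²` (`dual_bound`), the adjoint of `F ↦ ∫ e^{iθ(x₁, Y(x₁), T(x₁), ξ)} F(ξ) dξ`, where
`θ` is the phase of the group, localized to the block `(j, k)`, has squared `L²` norm `≲ N^{3/2}`.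
Summation against the weight `(1 + |ξ|²)^{-r} ≲ N^{-2r}` converges precisely because `r > 3/4`
(`exists_dual_weight`), and duality gives the linearized estimate with a constant independent of
`Y` and `T` (`linearized_bound`).

Finally `(x₁, x₂, t) ↦ U(t)φ(x₁, x₂)` is continuous, so the supremum may be taken over a countable dense
set; a finite maximum is attained at a measurable index, and monotone convergence passes to the full
supremum (`exists_maximal`). Enlarging the time interval to `[0, 1]` covers every `T ≤ 1`.
-/

open MeasureTheory
open scoped ENNReal NNReal

noncomputable section

/-- Fourier transform on ℝ² (realized as ℝ × ℝ). -/
def FT (f : ℝ × ℝ → ℂ) : ℝ × ℝ → ℂ := fun ξ =>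
  ∫ x : ℝ × ℝ,
    Complex.exp (((-(2 * Real.pi * (x.1 * ξ.1 + x.2 * ξ.2)) : ℝ) : ℂ) * Complex.I) * f x

/-- Inverse Fourier transform on ℝ². -/
def FTinv (f : ℝ × ℝ → ℂ) : ℝ × ℝ → ℂ := fun x =>
  ∫ ξ : ℝ × ℝ,
    Complex.exp ((((2 * Real.pi * (x.1 * ξ.1 + x.2 * ξ.2)) : ℝ) : ℂ) * Complex.I) * f ξ

/-- The linear Zakharov–Kuznetsov group `U(t)φ = F⁻¹(e^{i t ξ₁(ξ₁²+ξ₂²)} Fφ)`. -/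
def U (t : ℝ) (φ : ℝ × ℝ → ℂ) : ℝ × ℝ → ℂ :=
  FTinv (fun ξ => Complex.exp (Complex.I * ((t * ξ.1 * (ξ.1 ^ 2 + ξ.2 ^ 2) : ℝ) : ℂ)) * FT φ ξ)

/-- Fractional derivative in the first variable: `D^r_{x₁} f = F⁻¹(|ξ₁|^r F f)`. -/
def Dx1 (r : ℝ) (f : ℝ × ℝ → ℂ) : ℝ × ℝ → ℂ :=
  FTinv (fun ξ => ((|ξ.1| ^ r : ℝ) : ℂ) * FT f ξ)

/-- Fractional derivative in the second variable: `D^r_{x₂} f = F⁻¹(|ξ₂|^r F f)`. -/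
def Dx2 (r : ℝ) (f : ℝ × ℝ → ℂ) : ℝ × ℝ → ℂ :=
  FTinv (fun ξ => ((|ξ.2| ^ r : ℝ) : ℂ) * FT f ξ)

/-- Partial derivative ∂_{x₁}. -/
def pd1 (f : ℝ × ℝ → ℂ) : ℝ × ℝ → ℂ := fun x => fderiv ℝ f x (1, 0)

/-- Partial derivative ∂_{x₂}. -/
def pd2 (f : ℝ × ℝ → ℂ) : ℝ × ℝ → ℂ := fun x => fderiv ℝ f x (0, 1)

/-- Duhamel integral `∫₀^t U(t-τ) g(τ) dτ`. -/
def Duh (g : ℝ → ℝ × ℝ → ℂ) (t : ℝ) : ℝ × ℝ → ℂ := fun x =>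
  ∫ τ in (0:ℝ)..t, U (t - τ) (g τ) x

/-- Sobolev norm `‖f‖_{H^s(ℝ²)}`. -/
def HsNorm (s : ℝ) (f : ℝ × ℝ → ℂ) : ℝ≥0∞ :=
  (∫⁻ ξ : ℝ × ℝ,
      ENNReal.ofReal ((1 + ξ.1 ^ 2 + ξ.2 ^ 2) ^ s) * (‖FT f ξ‖₊ : ℝ≥0∞) ^ (2 : ℝ)) ^ ((1:ℝ)/2)

/-- The mixed norm `‖f‖_{L^{9/4}_T L^∞_x}`. -/
def L94LinfNorm (T : ℝ) (f : ℝ → ℝ × ℝ → ℂ) : ℝ≥0∞ :=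
  (∫⁻ t in Set.Icc (0:ℝ) T, (eLpNorm (f t) ⊤ volume) ^ ((9:ℝ)/4)) ^ ((4:ℝ)/9)

/-- The mixed norm `‖f‖_{L²_{x₁} L^∞_{x₂ T}}` (with genuine suprema). -/
def L2x1LinfNorm (T : ℝ) (f : ℝ → ℝ × ℝ → ℂ) : ℝ≥0∞ :=
  (∫⁻ x₁ : ℝ,
      (⨆ x₂ : ℝ, ⨆ t ∈ Set.Icc (0:ℝ) T, (‖f t (x₁, x₂)‖₊ : ℝ≥0∞)) ^ (2 : ℝ)) ^ ((1:ℝ)/2)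

/-- The mixed norm `‖f‖_{L^∞_{x₁} L²_{x₂ T}}`. -/
def LinfX1L2Norm (T : ℝ) (f : ℝ → ℝ × ℝ → ℂ) : ℝ≥0∞ :=
  ⨆ x₁ : ℝ,
    (∫⁻ x₂ : ℝ, ∫⁻ t in Set.Icc (0:ℝ) T, (‖f t (x₁, x₂)‖₊ : ℝ≥0∞) ^ (2 : ℝ)) ^ ((1:ℝ)/2)

/-- The mixed norm `‖g‖_{L¹_{x₁} L²_{x₂ T}}`. -/
def L1x1L2Norm (T : ℝ) (g : ℝ → ℝ × ℝ → ℂ) : ℝ≥0∞ :=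
  ∫⁻ x₁ : ℝ,
    (∫⁻ x₂ : ℝ, ∫⁻ τ in Set.Icc (0:ℝ) T, (‖g τ (x₁, x₂)‖₊ : ℝ≥0∞) ^ (2 : ℝ)) ^ ((1:ℝ)/2)

/-! ### Non-stationary phase -/

/-- The unimodular exponential `e^{iθ}`. -/
def ex (θ : ℝ) : ℂ := Complex.exp ((θ : ℂ) * Complex.I)

lemma norm_ex (θ : ℝ) : ‖ex θ‖ = 1 := Complex.norm_exp_ofReal_mul_I θ

lemma ex_add (θ θ' : ℝ) : ex (θ + θ') = ex θ * ex θ' := by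
  simp only [ex, Complex.ofReal_add, add_mul, Complex.exp_add]

lemma conj_ex (θ : ℝ) : (starRingEnd ℂ) (ex θ) = ex (-θ) := by
  simp [ex, ← Complex.exp_conj]

lemma continuous_ex : Continuous ex := by unfold ex; fun_prop

lemma hasDerivAt_ex {φ : ℝ → ℝ} {p x : ℝ} (h : HasDerivAt φ p x) :
    HasDerivAt (fun x => ex (φ x)) (ex (φ x) * (p * Complex.I)) x := by
  unfold ex
  exact (h.ofReal_comp.mul_const Complex.I).cexp

/-- Non-stationary phase. For an amplitude `f0` vanishing to first order at both endpoints and a phase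
`φ` with derivatives `p`, `q`, `s` satisfying `|p| ≥ lam` and `|q|, |s| ≤ E * lam`, two integrations by
parts gain `lam⁻²`. Here `f1`, `f2` are the first two derivatives of `f0`. -/
lemma nonstat {l r lam E B : ℝ} (hlr : l ≤ r) (hlam : 0 < lam) (hE : 0 ≤ E)
    {f0 f1 f2 φ p q s : ℝ → ℝ}
    (hf0 : ∀ x, HasDerivAt f0 (f1 x) x) (hf1 : ∀ x, HasDerivAt f1 (f2 x) x) (hf2 : Continuous f2)
    (hφ : ∀ x, HasDerivAt φ (p x) x) (hp : ∀ x, HasDerivAt p (q x) x)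
    (hq : ∀ x, HasDerivAt q (s x) x) (hs : Continuous s)
    (b0 : ∀ x, |f0 x| ≤ B) (b1 : ∀ x, |f1 x| ≤ B) (b2 : ∀ x, |f2 x| ≤ B)
    (bp : ∀ x ∈ Set.Icc l r, lam ≤ |p x|) (bq : ∀ x ∈ Set.Icc l r, |q x| ≤ E * lam)
    (bs : ∀ x ∈ Set.Icc l r, |s x| ≤ E * lam)
    (e0 : f0 l = 0) (e1 : f0 r = 0) (e2 : f1 l = 0) (e3 : f1 r = 0) :
    ‖∫ x in l..r, ex (φ x) * f0 x‖ ≤ B * (1 + 4 * E + 3 * E ^ 2) / lam ^ 2 * (r - l) := by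
  have hB : 0 ≤ B := (abs_nonneg _).trans (b0 0)
  have pne : ∀ x ∈ Set.Icc l r, p x ≠ 0 := fun x hx h0 => by
    have := bp x hx; rw [h0, abs_zero] at this; linarith
  -- `e^{iφ} (-i k0 + k1)` is an antiderivative of `e^{iφ} (f0 + k2)`: each of `k0`, `k1` arises from
  -- one integration by parts, and `k2` is what is left.
  set k0 : ℝ → ℝ := fun x => f0 x / p x with hk0
  set k1 : ℝ → ℝ := fun x => f1 x / p x ^ 2 - f0 x * q x / p x ^ 3 with hk1
  set k2 : ℝ → ℝ := fun x => f2 x / p x ^ 2 - 3 * (f1 x * q x / p x ^ 3) - f0 x * s x / p x ^ 3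
    + 3 * (f0 x * q x ^ 2 / p x ^ 4) with hk2
  have d0 : ∀ x ∈ Set.Icc l r, HasDerivAt k0 (p x * k1 x) x := fun x hx => by
    have h := pne x hx
    refine ((hf0 x).div (hp x) h).congr_deriv ?_
    simp only [hk1]; field_simp
  have d1 : ∀ x ∈ Set.Icc l r, HasDerivAt k1 (k2 x) x := fun x hx => by
    have h := pne x hx
    refine (((hf1 x).div ((hp x).pow 2) (pow_ne_zero 2 h)).sub
      (((hf0 x).mul (hq x)).div ((hp x).pow 3) (pow_ne_zero 3 h))).congr_deriv ?_
    simp only [hk2, Pi.mul_apply, Pi.pow_apply]; field_simp; ring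
  have cf0 : Continuous f0 := continuous_iff_continuousAt.2 fun x => (hf0 x).continuousAt
  have cf1 : Continuous f1 := continuous_iff_continuousAt.2 fun x => (hf1 x).continuousAt
  have cφ : Continuous φ := continuous_iff_continuousAt.2 fun x => (hφ x).continuousAt
  have cp : Continuous p := continuous_iff_continuousAt.2 fun x => (hp x).continuousAt
  have cq : Continuous q := continuous_iff_continuousAt.2 fun x => (hq x).continuousAt
  have ck2 : ContinuousOn k2 (Set.Icc l r) := by
    refine ContinuousOn.add (ContinuousOn.sub (ContinuousOn.sub ?_ ?_) ?_) ?_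
    · exact hf2.continuousOn.div (by fun_prop) fun x hx => pow_ne_zero _ (pne x hx)
    · exact continuousOn_const.mul
        (ContinuousOn.div (by fun_prop) (by fun_prop) fun x hx => pow_ne_zero _ (pne x hx))
    · exact ContinuousOn.div (by fun_prop) (by fun_prop) fun x hx => pow_ne_zero _ (pne x hx)
    · exact continuousOn_const.mul
        (ContinuousOn.div (by fun_prop) (by fun_prop) fun x hx => pow_ne_zero _ (pne x hx))
  have cex : Continuous fun x => ex (φ x) := continuous_ex.comp cφ
  have dW : ∀ x ∈ Set.Icc l r, HasDerivAt
      (fun x => ex (φ x) * (-Complex.I * (k0 x : ℂ) + (k1 x : ℂ)))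
      (ex (φ x) * f0 x + ex (φ x) * k2 x) x := fun x hx => by
    have h := pne x hx
    refine ((hasDerivAt_ex (hφ x)).mul (((d0 x hx).ofReal_comp.const_mul (-Complex.I)).add
      (d1 x hx).ofReal_comp)).congr_deriv ?_
    have : (f0 x : ℂ) = p x * k0 x := by
      simp only [hk0]; norm_cast; field_simp
    rw [this]; push_cast; simp only [Pi.add_apply]
    linear_combination (-(ex (φ x) * p x * k0 x)) * Complex.I_mul_I
  have ci1 : IntervalIntegrable (fun x => ex (φ x) * (f0 x : ℂ)) volume l r :=
    (cex.mul (Complex.continuous_ofReal.comp cf0)).intervalIntegrable _ _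
  have ci2 : IntervalIntegrable (fun x => ex (φ x) * (k2 x : ℂ)) volume l r := by
    apply ContinuousOn.intervalIntegrable
    rw [Set.uIcc_of_le hlr]
    exact cex.continuousOn.mul (Complex.continuous_ofReal.comp_continuousOn ck2)
  have ftc := intervalIntegral.integral_eq_sub_of_hasDerivAt
    (fun x hx => dW x (by rwa [Set.uIcc_of_le hlr] at hx)) (ci1.add ci2)
  rw [intervalIntegral.integral_add ci1 ci2] at ftc
  have hz : (∫ x in l..r, ex (φ x) * (f0 x : ℂ)) = -∫ x in l..r, ex (φ x) * (k2 x : ℂ) := by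
    rw [eq_neg_iff_add_eq_zero, ftc]
    simp [hk0, hk1, e0, e1, e2, e3]
  rw [hz, norm_neg]
  have := intervalIntegral.norm_integral_le_of_norm_le_const (a := l) (b := r)
    (f := fun x => ex (φ x) * (k2 x : ℂ)) (C := B * (1 + 4 * E + 3 * E ^ 2) / lam ^ 2) ?_
  · rwa [abs_of_nonneg (sub_nonneg.2 hlr)] at this
  intro x hx
  rw [Set.uIoc_of_le hlr] at hx
  have hx' : x ∈ Set.Icc l r := ⟨hx.1.le, hx.2⟩
  rw [norm_mul, norm_ex, one_mul, Complex.norm_real, Real.norm_eq_abs]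
  have P := bp x hx'
  have P0 : 0 < |p x| := hlam.trans_le P
  have t2 : |f2 x / p x ^ 2| ≤ B / lam ^ 2 := by
    rw [abs_div, abs_pow]; gcongr; exact b2 x
  have t1 : |f1 x * q x / p x ^ 3| ≤ B * E / lam ^ 2 := by
    rw [abs_div, abs_mul, abs_pow]
    calc |f1 x| * |q x| / |p x| ^ 3 ≤ B * (E * lam) / lam ^ 3 := by
          gcongr; exacts [b1 x, bq x hx']
      _ = _ := by field_simp
  have t0 : |f0 x * s x / p x ^ 3| ≤ B * E / lam ^ 2 := by
    rw [abs_div, abs_mul, abs_pow]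
    calc |f0 x| * |s x| / |p x| ^ 3 ≤ B * (E * lam) / lam ^ 3 := by
          gcongr; exacts [b0 x, bs x hx']
      _ = _ := by field_simp
  have t3 : |f0 x * q x ^ 2 / p x ^ 4| ≤ B * E ^ 2 / lam ^ 2 := by
    rw [abs_div, abs_mul, abs_pow, abs_pow]
    calc |f0 x| * |q x| ^ 2 / |p x| ^ 4 ≤ B * (E * lam) ^ 2 / lam ^ 4 := by
          gcongr; exacts [b0 x, bq x hx']
      _ = _ := by field_simp
  have e : B * (1 + 4 * E + 3 * E ^ 2) / lam ^ 2 =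
    B / lam ^ 2 + 3 * (B * E / lam ^ 2) + B * E / lam ^ 2 + 3 * (B * E ^ 2 / lam ^ 2) := by ring
  rw [e]
  rw [abs_le] at *
  simp only [hk2]
  constructor <;> linarith [t0.1, t0.2, t1.1, t1.2, t2.1, t2.2, t3.1, t3.2]

/-! ### Cubic oscillatory integrals -/

/-- The cubic oscillatory integral `∫ e^{i(α u + β u³)} ρ(u) du`. -/
def osc (ρ : ℝ → ℝ) (α β : ℝ) : ℂ := ∫ u, ex (α * u + β * u ^ 3) * ρ u

/-- A `C²` amplitude supported in `[-3, 3]` whose derivatives of order at most two are bounded by `B`. -/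
structure Amp (ρ : ℝ → ℝ) (B : ℝ) : Prop where
  smooth : ContDiff ℝ 2 ρ
  supp : ∀ u, 3 ≤ |u| → ρ u = 0
  b0 : ∀ u, |ρ u| ≤ B
  b1 : ∀ u, |deriv ρ u| ≤ B
  b2 : ∀ u, |deriv (deriv ρ) u| ≤ B

namespace Amp
variable {ρ : ℝ → ℝ} {B : ℝ}

lemma nonneg (h : Amp ρ B) : 0 ≤ B := (abs_nonneg _).trans (h.b0 0)

lemma d0 (h : Amp ρ B) (u : ℝ) : HasDerivAt ρ (deriv ρ u) u :=
  ((h.smooth.differentiable (by norm_num)) u).hasDerivAt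

lemma smooth1 (h : Amp ρ B) : ContDiff ℝ 1 (deriv ρ) :=
  (contDiff_succ_iff_deriv (n := 1)).1 h.smooth |>.2.2

lemma d1 (h : Amp ρ B) (u : ℝ) : HasDerivAt (deriv ρ) (deriv (deriv ρ) u) u :=
  ((h.smooth1.differentiable (by norm_num)) u).hasDerivAt

lemma c0 (h : Amp ρ B) : Continuous ρ := h.smooth.continuous
lemma c1 (h : Amp ρ B) : Continuous (deriv ρ) := h.smooth1.continuous
lemma c2 (h : Amp ρ B) : Continuous (deriv (deriv ρ)) := h.smooth1.continuous_deriv le_rfl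

lemma deriv_zero {ρ : ℝ → ℝ} {U : Set ℝ} (hU : IsOpen U) (h0 : ∀ u ∈ U, ρ u = 0) {u : ℝ}
    (hu : u ∈ U) : deriv ρ u = 0 := by
  have : ρ =ᶠ[nhds u] fun _ => 0 := by
    filter_upwards [hU.mem_nhds hu] with v hv using h0 v hv
  rw [this.deriv_eq]; simp

lemma deriv_supp (h : Amp ρ B) {u : ℝ} (hu : 3 < |u|) : deriv ρ u = 0 :=
  deriv_zero (U := {u | 3 < |u|}) (isOpen_lt continuous_const continuous_abs)
    (fun v hv => h.supp v (le_of_lt hv)) hu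

lemma hasCompactSupport (h : Amp ρ B) : HasCompactSupport ρ := by
  refine HasCompactSupport.intro (K := Set.Icc (-3) 3) isCompact_Icc fun x hx => h.supp x ?_
  by_contra hc
  exact hx ⟨(abs_lt.1 (not_le.1 hc)).1.le, (abs_lt.1 (not_le.1 hc)).2.le⟩

lemma of_bump {c : ℝ} (f : ContDiffBump c) (hc : |c| + f.rOut ≤ 3) : ∃ B, Amp f B := by
  have hs : ContDiff ℝ 2 f := f.contDiff
  have hsupp : HasCompactSupport f := f.hasCompactSupport
  have hs1 : ContDiff ℝ 1 (deriv f) := (contDiff_succ_iff_deriv (n := 1)).1 hs |>.2.2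
  obtain ⟨B0, h0⟩ := hsupp.exists_bound_of_continuous hs.continuous
  obtain ⟨B1, h1⟩ := hsupp.deriv.exists_bound_of_continuous hs1.continuous
  obtain ⟨B2, h2⟩ := hsupp.deriv.deriv.exists_bound_of_continuous (hs1.continuous_deriv le_rfl)
  refine ⟨max B0 (max B1 B2), hs, fun u hu => f.zero_of_le_dist ?_, fun u => (h0 u).trans ?_,
    fun u => (h1 u).trans ?_, fun u => (h2 u).trans ?_⟩
  · rw [Real.dist_eq]
    have := abs_sub_abs_le_abs_sub u c
    linarith
  all_goals simp

lemma osc_eq (h : Amp ρ B) (α β : ℝ) :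
    osc ρ α β = ∫ u in (-4 : ℝ)..4, ex (α * u + β * u ^ 3) * ρ u := by
  rw [intervalIntegral.integral_of_le (by norm_num), osc, setIntegral_eq_integral_of_forall_compl_eq_zero]
  intro x hx
  rw [h.supp x, Complex.ofReal_zero, mul_zero]
  by_contra hc
  have := abs_lt.1 (not_le.1 hc)
  exact hx ⟨by linarith [this.1], by linarith [this.2]⟩

lemma osc_le (h : Amp ρ B) (α β : ℝ) : ‖osc ρ α β‖ ≤ 8 * B := by
  rw [h.osc_eq]
  refine (intervalIntegral.norm_integral_le_of_norm_le_const (C := B) ?_).trans_eq ?_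
  · intro x _
    rw [norm_mul, norm_ex, one_mul, Complex.norm_real]; exact h.b0 x
  · norm_num [abs_of_pos, mul_comm]

/-- Decay in `α` where the phase has no stationary point: on the support of `ρ` the term `3βu²` is at
most half of `α`. -/
lemma osc_decay (h : Amp ρ B) {α β : ℝ} (hab : 96 * |β| ≤ |α|) :
    α ^ 2 * ‖osc ρ α β‖ ≤ 256 * B := by
  rcases eq_or_ne α 0 with rfl | hα
  · simp [h.nonneg]
  have hα' : 0 < |α| := abs_pos.2 hα
  rw [h.osc_eq]
  have key := nonstat (l := -4) (r := 4) (lam := |α| / 2) (E := 1) (B := B) (f0 := ρ)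
    (φ := fun u => α * u + β * u ^ 3) (p := fun u => α + β * (3 * u ^ 2))
    (q := fun u => β * (6 * u)) (s := fun _ => β * 6)
    (by norm_num) (by positivity) zero_le_one h.d0 h.d1 h.c2
    (fun x => by
      refine (((hasDerivAt_id x).const_mul α).add (((hasDerivAt_id x).pow 3).const_mul β)).congr_deriv ?_
      simp)
    (fun x => by
      refine ((((hasDerivAt_id x).pow 2).const_mul 3).const_mul β |>.const_add α).congr_deriv ?_
      simp; left; ring)
    (fun x => by
      refine (((hasDerivAt_id x).const_mul 6).const_mul β).congr_deriv ?_
      simp)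
    continuous_const h.b0 h.b1 h.b2
    (fun x hx => by
      have h1 : |β * (3 * x ^ 2)| ≤ |α| / 2 := by
        rw [abs_mul, abs_of_nonneg (by positivity : 0 ≤ 3 * x ^ 2)]
        have : x ^ 2 ≤ 16 := by nlinarith [hx.1, hx.2]
        nlinarith [abs_nonneg β]
      have := abs_sub_abs_le_abs_sub α (-(β * (3 * x ^ 2)))
      rw [abs_neg, sub_neg_eq_add] at this
      linarith)
    (fun x hx => by
      rw [abs_mul, abs_mul]
      have : |x| ≤ 4 := abs_le.2 ⟨hx.1, hx.2⟩
      norm_num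
      nlinarith [abs_nonneg β])
    (fun x hx => by
      rw [abs_mul]; norm_num; linarith [abs_nonneg β])
    (h.supp _ (by norm_num)) (h.supp _ (by norm_num [abs_of_pos]))
    (h.deriv_supp (by norm_num)) (h.deriv_supp (by norm_num [abs_of_pos]))
  refine (mul_le_mul_of_nonneg_left key (sq_nonneg α)).trans_eq ?_
  rw [div_pow, sq_abs]; field_simp; ring

lemma integrable (h : Amp ρ B) (α β : ℝ) :
    Integrable fun u => ex (α * u + β * u ^ 3) * (ρ u : ℂ) := by
  apply Continuous.integrable_of_hasCompactSupport
  · exact (continuous_ex.comp (by fun_prop)).mul (Complex.continuous_ofReal.comp h.c0)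
  · exact HasCompactSupport.mul_left (f' := fun u => (ρ u : ℂ))
      (h.hasCompactSupport.comp_left (g := fun x : ℝ => (x : ℂ)) Complex.ofReal_zero)

/-- Weyl differencing: the squared modulus of an integral is the integral of the autocorrelation of
the integrand, in symmetric form. -/
lemma autocorr {F : ℝ → ℂ} (hF : Integrable F) :
    (∫ u, F u) * (starRingEnd ℂ) (∫ u, F u)
      = ∫ h, ∫ v, F (v + h / 2) * (starRingEnd ℂ) (F (v - h / 2)) := by
  have hF' : Integrable fun u => (starRingEnd ℂ) (F u) := by
    have := (Complex.conjCLE : ℂ →L[ℝ] ℂ).integrable_comp hF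
    simpa using this
  have h1 : Integrable (fun z : ℝ × ℝ => (starRingEnd ℂ) (F z.1) * F z.2) (volume.prod volume) :=
    hF'.mul_prod hF
  have h2 := (measurePreserving_prod_add (volume : Measure ℝ) (volume : Measure ℝ)).integrable_comp_of_integrable h1
  calc (∫ u, F u) * (starRingEnd ℂ) (∫ u, F u)
      = ∫ v, ∫ h, (starRingEnd ℂ) (F v) * F (v + h) := by
        rw [← integral_conj, mul_comm, ← integral_mul_const]
        congr 1; ext v
        rw [← integral_const_mul, ← integral_add_left_eq_self _ v]
    _ = ∫ h, ∫ v, (starRingEnd ℂ) (F v) * F (v + h) := integral_integral_swap h2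
    _ = _ := by
        congr 1; ext h
        rw [← integral_sub_right_eq_self _ (h / 2)]
        congr 1; ext v
        rw [mul_comm, show v - h / 2 + h = v + h / 2 by ring]

/-- Bound for the inner integral of the differenced cubic phase. The difference at step `k` has phase
`3βkv²` up to a constant, hence derivative `6βkv`. The support condition forces `v > 1/4`, so this
derivative is of size `|βk|` throughout and `nonstat` applies. -/
lemma inner_le (h : Amp ρ B) (hpos : ∀ u ≤ 1 / 2, ρ u = 0) (α β k : ℝ) :
    ‖∫ v, ex (α * (v + k / 2) + β * (v + k / 2) ^ 3) * (ρ (v + k / 2) : ℂ) *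
      (starRingEnd ℂ) (ex (α * (v - k / 2) + β * (v - k / 2) ^ 3) * (ρ (v - k / 2) : ℂ))‖
      ≤ 2000 * B ^ 2 * (1 + (β * k) ^ 2)⁻¹ := by
  have hB := h.nonneg
  set f0 : ℝ → ℝ := fun v => ρ (v + k / 2) * ρ (v - k / 2) with hf0
  have ha : ∀ v : ℝ, HasDerivAt (fun v : ℝ => v + k / 2) 1 v := fun v =>
    (hasDerivAt_id v).add_const _
  have hs : ∀ v : ℝ, HasDerivAt (fun v : ℝ => v - k / 2) 1 v := fun v =>
    (hasDerivAt_id v).sub_const _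
  have z0 : ∀ v : ℝ, v ∉ Set.Ioc (1 / 4 : ℝ) 4 → f0 v = 0 := by
    intro v hv
    simp only [Set.mem_Ioc, not_and_or, not_lt, not_le] at hv
    simp only [hf0]
    rcases hv with hv | hv <;> rcases le_total 0 k with hk | hk
    · rw [hpos (v - k / 2) (by linarith), mul_zero]
    · rw [hpos (v + k / 2) (by linarith), zero_mul]
    · rw [h.supp (v + k / 2) (by rw [abs_of_nonneg] <;> linarith), zero_mul]
    · rw [h.supp (v - k / 2) (by rw [abs_of_nonneg] <;> linarith), mul_zero]
  have hpd : ∀ u < 1 / 2, deriv ρ u = 0 := fun u hu =>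
    deriv_zero (U := Set.Iio (1 / 2)) isOpen_Iio (fun v hv => hpos v (le_of_lt hv)) hu
  have heq : (∫ v, ex (α * (v + k / 2) + β * (v + k / 2) ^ 3) * (ρ (v + k / 2) : ℂ) *
      (starRingEnd ℂ) (ex (α * (v - k / 2) + β * (v - k / 2) ^ 3) * (ρ (v - k / 2) : ℂ)))
      = ∫ v in (1 / 4 : ℝ)..4, ex (α * k + β * (3 * v ^ 2 * k + k ^ 3 / 4)) * (f0 v : ℂ) := by
    have : ∀ v : ℝ, ex (α * (v + k / 2) + β * (v + k / 2) ^ 3) * (ρ (v + k / 2) : ℂ) *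
      (starRingEnd ℂ) (ex (α * (v - k / 2) + β * (v - k / 2) ^ 3) * (ρ (v - k / 2) : ℂ))
      = ex (α * k + β * (3 * v ^ 2 * k + k ^ 3 / 4)) * (f0 v : ℂ) := by
      intro v
      rw [map_mul, conj_ex, Complex.conj_ofReal,
        show α * k + β * (3 * v ^ 2 * k + k ^ 3 / 4) = (α * (v + k / 2) + β * (v + k / 2) ^ 3)
          + -(α * (v - k / 2) + β * (v - k / 2) ^ 3) by ring,
        ex_add (α * (v + k / 2) + β * (v + k / 2) ^ 3)]
      simp only [hf0, Complex.ofReal_mul]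
      generalize ex (α * (v + k / 2) + β * (v + k / 2) ^ 3) = X
      generalize ex (-(α * (v - k / 2) + β * (v - k / 2) ^ 3)) = Y
      ring
    simp_rw [this]
    rw [intervalIntegral.integral_of_le (by norm_num),
      setIntegral_eq_integral_of_forall_compl_eq_zero]
    intro v hv
    rw [z0 v hv, Complex.ofReal_zero, mul_zero]
  rw [heq]
  have b0 : ∀ v, |f0 v| ≤ B ^ 2 := fun v => by
    simp only [hf0, abs_mul]; rw [sq]; gcongr <;> exact h.b0 _
  have triv : ‖∫ v in (1 / 4 : ℝ)..4, ex (α * k + β * (3 * v ^ 2 * k + k ^ 3 / 4)) * (f0 v : ℂ)‖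
      ≤ 1000 * B ^ 2 := by
    refine (intervalIntegral.norm_integral_le_of_norm_le_const (C := B ^ 2) ?_).trans ?_
    · intro x _
      rw [norm_mul, norm_ex, one_mul, Complex.norm_real]; exact b0 x
    · norm_num [abs_of_pos]; nlinarith [sq_nonneg B]
  have fine : ‖∫ v in (1 / 4 : ℝ)..4, ex (α * k + β * (3 * v ^ 2 * k + k ^ 3 / 4)) * (f0 v : ℂ)‖
      * (β * k) ^ 2 ≤ 1000 * B ^ 2 := by
    rcases eq_or_ne (β * k) 0 with h0 | h0
    · rw [h0]; simp; positivity
    have hbk : 0 < |β * k| := abs_pos.2 h0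
    have key := nonstat (l := 1 / 4) (r := 4) (lam := 3 / 2 * |β * k|) (E := 4) (B := 4 * B ^ 2)
      (f0 := f0) (f1 := fun v => deriv ρ (v + k / 2) * ρ (v - k / 2)
        + ρ (v + k / 2) * deriv ρ (v - k / 2))
      (f2 := fun v => deriv (deriv ρ) (v + k / 2) * ρ (v - k / 2)
        + 2 * (deriv ρ (v + k / 2) * deriv ρ (v - k / 2))
        + ρ (v + k / 2) * deriv (deriv ρ) (v - k / 2))
      (φ := fun v => α * k + β * (3 * v ^ 2 * k + k ^ 3 / 4)) (p := fun v => β * k * 6 * v)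
      (q := fun _ => β * k * 6) (s := fun _ => 0)
      (by norm_num) (by positivity) (by norm_num)
      (fun v => by
        refine (((h.d0 _).comp v (ha v)).mul ((h.d0 _).comp v (hs v))).congr_deriv ?_
        simp)
      (fun v => by
        refine ((((h.d1 _).comp v (ha v)).mul ((h.d0 _).comp v (hs v))).add
          (((h.d0 _).comp v (ha v)).mul ((h.d1 _).comp v (hs v)))).congr_deriv ?_
        simp; ring)
      (by have := h.c0; have := h.c1; have := h.c2; fun_prop)
      (fun v => by
        refine (((((hasDerivAt_id v).pow 2).const_mul 3).mul_const k |>.add_const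
          (k ^ 3 / 4)).const_mul β |>.const_add (α * k)).congr_deriv ?_
        simp; ring)
      (fun v => by
        refine ((hasDerivAt_id v).const_mul (β * k * 6)).congr_deriv ?_
        simp)
      (fun v => hasDerivAt_const v _)
      continuous_const
      (fun v => (b0 v).trans (by nlinarith [sq_nonneg B]))
      (fun v => by
        refine (abs_add_le _ _).trans ?_
        have e1 : |deriv ρ (v + k / 2) * ρ (v - k / 2)| ≤ B ^ 2 := by
          rw [abs_mul, sq]; gcongr; exacts [h.b1 _, h.b0 _]
        have e2 : |ρ (v + k / 2) * deriv ρ (v - k / 2)| ≤ B ^ 2 := by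
          rw [abs_mul, sq]; gcongr; exacts [h.b0 _, h.b1 _]
        nlinarith [sq_nonneg B])
      (fun v => by
        refine (abs_add_three _ _ _).trans ?_
        have e1 : |deriv (deriv ρ) (v + k / 2) * ρ (v - k / 2)| ≤ B ^ 2 := by
          rw [abs_mul, sq]; gcongr; exacts [h.b2 _, h.b0 _]
        have e2 : |2 * (deriv ρ (v + k / 2) * deriv ρ (v - k / 2))| ≤ 2 * B ^ 2 := by
          rw [abs_mul, abs_mul, sq, abs_two]; gcongr; exacts [h.b1 _, h.b1 _]
        have e3 : |ρ (v + k / 2) * deriv (deriv ρ) (v - k / 2)| ≤ B ^ 2 := by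
          rw [abs_mul, sq]; gcongr; exacts [h.b0 _, h.b2 _]
        linarith)
      (fun v hv => by
        rw [abs_mul (β * k * 6), abs_mul (β * k), abs_of_nonneg (by linarith [hv.1] : 0 ≤ v),
          show |(6 : ℝ)| = 6 by norm_num]
        nlinarith [mul_le_mul_of_nonneg_left hv.1 hbk.le])
      (fun v _ => by rw [abs_mul]; norm_num; linarith)
      (fun v _ => by rw [abs_zero]; positivity)
      (z0 _ (by norm_num))
      (by
        simp only [hf0]
        rcases le_total 0 k with hk | hk
        · rw [h.supp _ (by rw [abs_of_nonneg] <;> linarith : (3:ℝ) ≤ |4 + k / 2|), zero_mul]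
        · rw [h.supp _ (by rw [abs_of_nonneg] <;> linarith : (3:ℝ) ≤ |4 - k / 2|), mul_zero])
      (by
        rcases le_total 0 k with hk | hk
        · rw [hpos (1 / 4 - k / 2) (by linarith), hpd (1 / 4 - k / 2) (by linarith)]; simp
        · rw [hpos (1 / 4 + k / 2) (by linarith), hpd (1 / 4 + k / 2) (by linarith)]; simp)
      (by
        rcases le_total 0 k with hk | hk
        · have : (3:ℝ) < |4 + k / 2| := by rw [abs_of_nonneg] <;> linarith
          rw [h.supp _ this.le, h.deriv_supp this]; simp
        · have : (3:ℝ) < |4 - k / 2| := by rw [abs_of_nonneg] <;> linarith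
          rw [h.supp _ this.le, h.deriv_supp this]; simp)
    refine (mul_le_mul_of_nonneg_right key (sq_nonneg (β * k))).trans ?_
    have : 4 * B ^ 2 * (1 + 4 * 4 + 3 * 4 ^ 2) / (3 / 2 * |β * k|) ^ 2 * (4 - 1 / 4) * (β * k) ^ 2
        = 1300 / 3 * B ^ 2 := by
      rw [mul_pow (3 / 2 : ℝ), sq_abs]
      generalize β * k = c at h0
      field_simp; ring
    rw [this]; nlinarith [sq_nonneg B]
  rw [← div_eq_mul_inv, le_div_iff₀ (by positivity), mul_add, mul_one]
  linarith

/-- Second-order van der Corput bound `|osc ρ α β| ≲ |β|^{-1/2}`, uniform in `α`. The amplitude lives on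
`u > 1/2`, away from the zero `u = 0` of the second derivative of the cubic phase. -/
lemma osc_vdc (h : Amp ρ B) (hpos : ∀ u ≤ 1 / 2, ρ u = 0) (α β : ℝ) :
    |β| * ‖osc ρ α β‖ ^ 2 ≤ 2000 * B ^ 2 * Real.pi := by
  have hB := h.nonneg
  rcases eq_or_ne β 0 with rfl | hβ
  · simp; positivity
  have hβ' : 0 < |β| := abs_pos.2 hβ
  have e := autocorr (h.integrable α β)
  have hI : ‖osc ρ α β‖ ^ 2 ≤ ∫ k, 2000 * B ^ 2 * (1 + (β * k) ^ 2)⁻¹ := by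
    have : ‖osc ρ α β‖ ^ 2 = ‖osc ρ α β * (starRingEnd ℂ) (osc ρ α β)‖ := by
      rw [norm_mul, RCLike.norm_conj, sq]
    rw [this, osc, e]
    refine norm_integral_le_of_norm_le ?_ (Filter.Eventually.of_forall fun k => ?_)
    · exact (integrable_inv_one_add_sq.comp_mul_left' hβ).const_mul _
    · exact h.inner_le hpos α β k
  rw [integral_const_mul, Measure.integral_comp_mul_left (fun x => (1 + x ^ 2)⁻¹),
    integral_univ_inv_one_add_sq, smul_eq_mul, abs_inv] at hI
  calc |β| * ‖osc ρ α β‖ ^ 2 ≤ |β| * (2000 * B ^ 2 * (|β|⁻¹ * Real.pi)) := by gcongr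
    _ = _ := by field_simp

end Amp

/-! ### Dyadic frequency pieces -/

/-- A nonnegative continuous compactly supported cutoff at frequency scale `M` whose cubic oscillatory
integrals satisfy, with constant `K`, the trivial size bound `≲ M`, the van der Corput bound
`≲ (M|τ|)^{-1/2}`, and the decay `≲ M⁻¹ z⁻²` off the stationary region `|z| ≲ |τ| M²`. -/
structure Piece (χ : ℝ → ℝ) (M K : ℝ) : Prop where
  cont : Continuous χ
  cpt : HasCompactSupport χ
  nonneg : ∀ a, 0 ≤ χ a
  size : ∀ z τ, ‖osc χ z τ‖ ≤ K * M
  vdc : ∀ z τ, |τ| ≤ 4 → ‖osc χ z τ‖ ^ 2 * (M * |τ|) ≤ K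
  decay : ∀ z τ, 96 * (|τ| * M ^ 2) ≤ |z| → ‖osc χ z τ‖ * (M * z ^ 2) ≤ K

lemma Piece.mono {χ : ℝ → ℝ} {M K K' : ℝ} (h : Piece χ M K) (hM : 0 ≤ M) (hK : K ≤ K') :
    Piece χ M K' :=
  ⟨h.cont, h.cpt, h.nonneg, fun z τ => (h.size z τ).trans (by gcongr),
    fun z τ ht => (h.vdc z τ ht).trans hK, fun z τ ht => (h.decay z τ ht).trans hK⟩

/-- The low-frequency cutoff. At scale `1` the van der Corput bound follows from the size bound since
`|τ| ≤ 4`. -/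
lemma Piece.low {ρ : ℝ → ℝ} {B : ℝ} (h : Amp ρ B) (h0 : ∀ a, 0 ≤ ρ a) :
    Piece ρ 1 (256 * B + 256 * B ^ 2) := by
  have hB := h.nonneg
  refine ⟨h.c0, h.hasCompactSupport, h0, fun z τ => (h.osc_le z τ).trans (by nlinarith [sq_nonneg B]),
    fun z τ ht => ?_, fun z τ ht => ?_⟩
  · have h1 := h.osc_le z τ
    have : ‖osc ρ z τ‖ ^ 2 * (1 * |τ|) ≤ (8 * B) ^ 2 * (1 * 4) := by gcongr
    nlinarith
  · have := h.osc_decay (α := z) (β := τ) (by simpa using ht)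
    rw [one_mul, mul_comm]; nlinarith [sq_nonneg B]

lemma osc_neg (ρ : ℝ → ℝ) (z τ : ℝ) : osc (fun a => ρ (-a)) z τ = osc ρ (-z) (-τ) := by
  unfold osc
  rw [← integral_neg_eq_self]
  congr 1; ext u
  simp only [neg_neg]
  congr 2; ring

lemma osc_scale (ρ : ℝ → ℝ) {N : ℝ} (hN : 0 < N) (z τ : ℝ) :
    osc (fun a => ρ (a / N)) z τ = N * osc ρ (z * N) (τ * N ^ 3) := by
  unfold osc
  have := Measure.integral_comp_div (fun u : ℝ => ex (z * N * u + τ * N ^ 3 * u ^ 3) * (ρ u : ℂ)) N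
  rw [abs_of_pos hN, Complex.real_smul] at this
  rw [← this]
  congr 1; ext u
  congr 2; field_simp

/-- A symmetrized rescaled bump at frequency `±N`; the bounds follow from those of `Amp` by scaling. -/
lemma Piece.high {ρ : ℝ → ℝ} {B N : ℝ} (h : Amp ρ B) (h0 : ∀ a, 0 ≤ ρ a)
    (hpos : ∀ u ≤ 1 / 2, ρ u = 0) (hN : 0 < N) :
    Piece (fun a => ρ (a / N) + ρ (-(a / N))) N (512 * B + 8000 * Real.pi * B ^ 2) := by
  have hB := h.nonneg
  have hpi := Real.pi_pos
  have hc : HasCompactSupport fun a => ρ (a / N) := by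
    have := h.hasCompactSupport.comp_homeomorph (Homeomorph.mulRight₀ N⁻¹ (inv_ne_zero hN.ne'))
    simpa [Function.comp_def, div_eq_mul_inv] using this
  have hc' : HasCompactSupport fun a => ρ (-(a / N)) := by
    have := h.hasCompactSupport.comp_homeomorph
      (Homeomorph.mulRight₀ (-N⁻¹) (neg_ne_zero.2 (inv_ne_zero hN.ne')))
    simpa [Function.comp_def, div_eq_mul_inv] using this
  have c0 : Continuous ρ := h.c0
  have cc : Continuous fun a => ρ (a / N) := by fun_prop
  have cc' : Continuous fun a => ρ (-(a / N)) := by fun_prop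
  have key : ∀ z τ, osc (fun a => ρ (a / N) + ρ (-(a / N))) z τ
      = N * (osc ρ (z * N) (τ * N ^ 3) + osc ρ (-(z * N)) (-(τ * N ^ 3))) := by
    intro z τ
    rw [mul_add, ← osc_neg, ← osc_scale _ hN, ← osc_scale (fun a => ρ (-a)) hN]
    unfold osc
    rw [← integral_add]
    · congr 1; ext u; push_cast; ring
    · refine Continuous.integrable_of_hasCompactSupport
        ((continuous_ex.comp (by fun_prop)).mul (Complex.continuous_ofReal.comp cc)) ?_
      exact HasCompactSupport.mul_left (f' := fun u => (ρ (u / N) : ℂ))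
        (hc.comp_left (g := fun x : ℝ => (x : ℂ)) Complex.ofReal_zero)
    · refine Continuous.integrable_of_hasCompactSupport
        ((continuous_ex.comp (by fun_prop)).mul (Complex.continuous_ofReal.comp cc')) ?_
      exact HasCompactSupport.mul_left (f' := fun u => (ρ (-(u / N)) : ℂ))
        (hc'.comp_left (g := fun x : ℝ => (x : ℂ)) Complex.ofReal_zero)
  have nrm : ∀ z τ, ‖osc (fun a => ρ (a / N) + ρ (-(a / N))) z τ‖
      ≤ N * (‖osc ρ (z * N) (τ * N ^ 3)‖ + ‖osc ρ (-(z * N)) (-(τ * N ^ 3))‖) := by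
    intro z τ
    rw [key, norm_mul, Complex.norm_real, Real.norm_of_nonneg hN.le]
    gcongr; exact norm_add_le _ _
  refine ⟨cc.add cc', ?_, fun a => add_nonneg (h0 _) (h0 _), fun z τ => ?_,
    fun z τ _ => ?_, fun z τ ht => ?_⟩
  · exact hc.add hc'
  · refine (nrm z τ).trans ?_
    have e1 := h.osc_le (z * N) (τ * N ^ 3)
    have e2 := h.osc_le (-(z * N)) (-(τ * N ^ 3))
    rw [mul_comm N]
    have : 0 ≤ 8000 * Real.pi * B ^ 2 := by positivity
    exact mul_le_mul_of_nonneg_right (by linarith) hN.le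
  · have e1 := h.osc_vdc hpos (z * N) (τ * N ^ 3)
    have e2 := h.osc_vdc hpos (-(z * N)) (-(τ * N ^ 3))
    rw [abs_neg] at e2
    rw [abs_mul, abs_of_pos (by positivity : 0 < N ^ 3)] at e1 e2
    set X := ‖osc ρ (z * N) (τ * N ^ 3)‖
    set Y := ‖osc ρ (-(z * N)) (-(τ * N ^ 3))‖
    calc _ ≤ (N * (X + Y)) ^ 2 * (N * |τ|) := by gcongr; exact nrm z τ
      _ = (X + Y) ^ 2 * (|τ| * N ^ 3) := by ring
      _ ≤ (2 * (X ^ 2 + Y ^ 2)) * (|τ| * N ^ 3) := by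
        gcongr; nlinarith [sq_nonneg (X - Y)]
      _ ≤ _ := by nlinarith
  · have a1 : 96 * |τ * N ^ 3| ≤ |z * N| := by
      rw [abs_mul, abs_mul, abs_of_pos (by positivity : 0 < N ^ 3), abs_of_pos hN]
      nlinarith
    have e1 := h.osc_decay a1
    have e2 := h.osc_decay (α := -(z * N)) (β := -(τ * N ^ 3)) (by simpa only [abs_neg] using a1)
    set X := ‖osc ρ (z * N) (τ * N ^ 3)‖
    set Y := ‖osc ρ (-(z * N)) (-(τ * N ^ 3))‖
    calc _ ≤ (N * (X + Y)) * (N * z ^ 2) := by gcongr; exact nrm z τ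
      _ = (z * N) ^ 2 * X + (-(z * N)) ^ 2 * Y := by ring
      _ ≤ 512 * B := by linarith
      _ ≤ _ := le_add_of_nonneg_right (by positivity)

/-- A dyadic cover of the line by pieces with a common constant: each `a` lies where some `χ j` is at
least `1`, with `2 ^ j ≤ 1 + |a|`. -/
lemma exists_dyadic : ∃ (χ : ℕ → ℝ → ℝ) (K : ℝ), 1 ≤ K ∧ (∀ j, Piece (χ j) (2 ^ j) K) ∧
    ∀ a, ∃ j, 2 ^ j ≤ 1 + |a| ∧ 1 ≤ χ j a := by
  let f : ContDiffBump (0 : ℝ) := ⟨2, 3, by norm_num, by norm_num⟩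
  let g : ContDiffBump (3 / 2 : ℝ) := ⟨1 / 2, 1, by norm_num, by norm_num⟩
  obtain ⟨B0, hf⟩ := Amp.of_bump f (by simp [f])
  obtain ⟨B1, hg⟩ := Amp.of_bump g (by norm_num [g, abs_of_pos])
  have hpos : ∀ u ≤ 1 / 2, g u = 0 := fun u hu => g.zero_of_le_dist (by
    rw [Real.dist_eq, abs_of_nonpos (by linarith)]; simp only [g]; linarith)
  have hlow := Piece.low hf (fun a => f.nonneg)
  have hhigh := fun j : ℕ => Piece.high (N := 2 ^ j) hg (fun a => g.nonneg) hpos (by positivity)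
  set K0 := 256 * B0 + 256 * B0 ^ 2
  set K1 := 512 * B1 + 8000 * Real.pi * B1 ^ 2
  refine ⟨fun j => if j = 0 then f else fun a => g (a / 2 ^ j) + g (-(a / 2 ^ j)),
    max 1 (max K0 K1), le_max_left _ _, fun j => ?_, fun a => ?_⟩
  · by_cases hj : j = 0
    · subst hj; simpa using hlow.mono zero_le_one (by simp)
    · simpa [hj] using (hhigh j).mono (by positivity) (by simp)
  · by_cases ha : |a| ≤ 2
    · refine ⟨0, by simp, ?_⟩
      simp only [if_true]
      rw [f.one_of_mem_closedBall (by simpa [Real.dist_eq, f] using ha)]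
    · push Not at ha
      obtain ⟨j, hj1, hj2⟩ := exists_nat_pow_near (x := |a|) (y := 2) (by linarith) (by norm_num)
      have hj0 : j ≠ 0 := by rintro rfl; simp at hj2; linarith
      have hp : (0 : ℝ) < 2 ^ j := by positivity
      refine ⟨j, by linarith, ?_⟩
      simp only [hj0, if_false]
      have hone : g (|a| / 2 ^ j) = 1 := by
        apply g.one_of_mem_closedBall
        have h1 : 1 ≤ |a| / 2 ^ j := by rwa [le_div_iff₀ hp, one_mul]
        have h2 : |a| / 2 ^ j ≤ 2 := by
          rw [div_le_iff₀ hp]; rw [pow_succ] at hj2; linarith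
        rw [Metric.mem_closedBall, Real.dist_eq, abs_le]
        simp only [g]; constructor <;> linarith
      rcases abs_cases a with ⟨h, -⟩ | ⟨h, -⟩ <;> rw [h] at hone
      · rw [hone]; linarith [g.nonneg' (-(a / 2 ^ j))]
      · rw [← neg_div, hone]; linarith [g.nonneg' (a / 2 ^ j)]

/-! ### Products of one-dimensional bounds and the majorant -/

/-- Pointwise bound for a product `X * Y` when the factor `X`, at scale `A ≤ N`, is in its decay region.
The two alternatives are those controlled by `maj`; the first is the bound
`X * Y ≲ N^{7/6} |x|^{-5/6}` raised to the sixth power. -/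
lemma pair_decay {X Y A N K x z : ℝ} (hX : 0 ≤ X) (hY : 0 ≤ Y) (hA : 1 ≤ A) (hAN : A ≤ N)
    (hK : 1 ≤ K) (hXA : X ≤ K * A) (hYN : Y ≤ K * N) (hz : X * (A * z ^ 2) ≤ K) (hxz : |x| ≤ |z|) :
    ((X * Y) ^ 6 * |x| ^ 5 ≤ (96 * K ^ 2) ^ 6 * N ^ 7 ∧ |x| ≤ 384 * N ^ 2) ∨
      X * Y * (1 + x ^ 2) ≤ 96 * K ^ 2 * N := by
  have hx2 : x ^ 2 ≤ z ^ 2 := sq_le_sq.2 hxz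
  have h1 : X * (A * x ^ 2) ≤ K := by
    refine le_trans ?_ hz; gcongr
  have hN : 1 ≤ N := hA.trans hAN
  rcases le_total |x| 1 with hx | hx
  · left
    refine ⟨?_, by nlinarith⟩
    have e : X ^ 6 * |x| ^ 5 ≤ K ^ 6 * A := by
      refine (sq_le_sq₀ (by positivity) (by positivity)).1 ?_
      have hA0 : 0 < A := by linarith
      have : (X ^ 6 * |x| ^ 5) ^ 2 * A ^ 5 = X ^ 7 * (X * (A * x ^ 2)) ^ 5 := by
        have : (|x| ^ 5) ^ 2 = (x ^ 2) ^ 5 := by rw [← sq_abs x]; ring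
        rw [mul_pow, this]; ring
      have : (X ^ 6 * |x| ^ 5) ^ 2 * A ^ 5 ≤ (K ^ 6 * A) ^ 2 * A ^ 5 := by
        rw [this]
        calc _ ≤ (K * A) ^ 7 * K ^ 5 := by gcongr
          _ = _ := by ring
      exact le_of_mul_le_mul_right this (by positivity)
    calc (X * Y) ^ 6 * |x| ^ 5 = (X ^ 6 * |x| ^ 5) * Y ^ 6 := by ring
      _ ≤ (K ^ 6 * N) * (K * N) ^ 6 :=
        mul_le_mul (e.trans (by gcongr)) (by gcongr) (by positivity) (by positivity)
      _ = (1 * K ^ 2) ^ 6 * N ^ 7 := by ring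
      _ ≤ _ := by gcongr; norm_num
  · right
    have hx1 : 1 ≤ x ^ 2 := by rw [← sq_abs]; nlinarith
    have h2 : X * x ^ 2 ≤ K := by
      refine le_trans ?_ h1; gcongr; nlinarith
    calc X * Y * (1 + x ^ 2) ≤ X * Y * (2 * x ^ 2) := by gcongr; linarith
      _ = 2 * ((X * x ^ 2) * Y) := by ring
      _ ≤ 2 * (K * (K * N)) := by gcongr
      _ ≤ _ := by nlinarith [mul_pos (pow_pos (by linarith : 0 < K) 2) (by linarith : 0 < N)]

/-- Pointwise bound in the stationary region. The size and van der Corput bounds for the lower-scale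
factor give `Y ≲ |τ|^{-1/3}`, those for the other give `X ≲ (M|τ|)^{-1/2}`, and `|x| ≲ |τ| M²` trades
`|τ|^{-5/6}` for `M^{5/3} |x|^{-5/6}`. -/
lemma pair_main {X Y M L K x τ : ℝ} (hY : 0 ≤ Y) (hL : 1 ≤ L) (hLM : L ≤ M)
    (hK : 1 ≤ K) (hYL : Y ≤ K * L) (hXv : X ^ 2 * (M * |τ|) ≤ K) (hYv : Y ^ 2 * (L * |τ|) ≤ K)
    (hx : |x| ≤ 96 * (|τ| * M ^ 2)) :
    (X * Y) ^ 6 * |x| ^ 5 ≤ (96 * K ^ 2) ^ 6 * M ^ 7 := by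
  have hM : 1 ≤ M := hL.trans hLM
  have h3 : Y ^ 3 * |τ| ≤ K ^ 2 := by
    calc Y ^ 3 * |τ| = Y * (Y ^ 2 * |τ|) := by ring
      _ ≤ (K * L) * (Y ^ 2 * |τ|) := by gcongr
      _ = K * (Y ^ 2 * (L * |τ|)) := by ring
      _ ≤ K * K := by gcongr
      _ = _ := by ring
  calc (X * Y) ^ 6 * |x| ^ 5 ≤ (X * Y) ^ 6 * (96 * (|τ| * M ^ 2)) ^ 5 := by gcongr
    _ = 96 ^ 5 * ((X ^ 2 * (M * |τ|)) ^ 3 * (Y ^ 3 * |τ|) ^ 2) * M ^ 7 := by ring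
    _ ≤ 96 ^ 5 * (K ^ 3 * (K ^ 2) ^ 2) * M ^ 7 := by gcongr
    _ = 96 ^ 5 * (K ^ 7 * M ^ 7) := by ring
    _ ≤ 96 ^ 6 * (K ^ 12 * M ^ 7) := by gcongr <;> norm_num
    _ = _ := by ring

/-- Product of two one-dimensional integrals at scales `L ≤ M`, with a common `τ` and with one of the
linear coefficients at least `|x|`: either `|x| ≲ M²` and the product is `≲ M^{7/6} |x|^{-5/6}`
(stated in sixth powers), or it is `≲ M / (1 + x²)`. -/
lemma pair_bound {χ χ' : ℝ → ℝ} {M L K x z w τ : ℝ} (h : Piece χ M K) (h' : Piece χ' L K)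
    (hL : 1 ≤ L) (hLM : L ≤ M) (hK : 1 ≤ K) (hτ : |τ| ≤ 4) (hx : |x| ≤ |z| ∨ |x| ≤ |w|) :
    ((‖osc χ z τ‖ * ‖osc χ' w τ‖) ^ 6 * |x| ^ 5 ≤ (96 * K ^ 2) ^ 6 * M ^ 7 ∧ |x| ≤ 384 * M ^ 2) ∨
      ‖osc χ z τ‖ * ‖osc χ' w τ‖ * (1 + x ^ 2) ≤ 96 * K ^ 2 * M := by
  have hM : 1 ≤ M := hL.trans hLM
  have hYM : ‖osc χ' w τ‖ ≤ K * M := (h'.size _ _).trans (by gcongr)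
  by_cases hc : |x| ≤ 96 * (|τ| * M ^ 2)
  · left
    refine ⟨pair_main (norm_nonneg _) hL hLM hK (h'.size _ _) (h.vdc _ _ hτ)
      (h'.vdc _ _ hτ) hc, hc.trans ?_⟩
    nlinarith [sq_nonneg M]
  · push Not at hc
    rcases hx with hx | hx
    · exact pair_decay (norm_nonneg _) (norm_nonneg _) hM le_rfl hK (h.size _ _) hYM
        (h.decay _ _ (hc.le.trans hx)) hx
    · have h2 : 96 * (|τ| * L ^ 2) ≤ |w| := by
        refine le_trans ?_ (hc.le.trans hx); gcongr
      have := pair_decay (norm_nonneg _) (norm_nonneg (osc χ z τ)) hL hLM hK (h'.size w τ)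
        (h.size _ _) (h'.decay _ _ h2) hx
      rwa [mul_comm ‖osc χ' w τ‖] at this

/-- The integrable majorant `C (N^{7/6} |x|^{-5/6} 1_{|x| ≤ 384 N²} + N / (1 + x²))` of the kernel at
scale `N`, valued in `ℝ≥0∞`. At `x = 0` the convention `0 ^ (-5/6) = 0` makes it finite, so it is a
bound only for `x ≠ 0`. -/
def maj (C N x : ℝ) : ℝ≥0∞ :=
  (Set.Icc (-(384 * N ^ 2)) (384 * N ^ 2)).indicator
    (fun x => ENNReal.ofReal (C * N ^ (7 / 6 : ℝ) * |x| ^ (-(5 / 6) : ℝ))) x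
    + ENNReal.ofReal (C * N * (1 + x ^ 2)⁻¹)

lemma le_maj {C N x P : ℝ} (hC : 0 ≤ C) (hN : 0 ≤ N) (hP : 0 ≤ P) (hx : x ≠ 0)
    (h : (P ^ 6 * |x| ^ 5 ≤ C ^ 6 * N ^ 7 ∧ |x| ≤ 384 * N ^ 2) ∨ P * (1 + x ^ 2) ≤ C * N) :
    ENNReal.ofReal P ≤ maj C N x := by
  rcases h with ⟨h, h2⟩ | h
  · refine le_trans ?_ le_self_add
    rw [Set.indicator_of_mem (Set.mem_Icc.2 (abs_le.1 h2))]
    apply ENNReal.ofReal_le_ofReal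
    have hx' : 0 < |x| := abs_pos.2 hx
    refine (pow_le_pow_iff_left₀ hP (by positivity) (n := 6) (by norm_num)).1 ?_
    have e1 : (N ^ (7 / 6 : ℝ)) ^ 6 = N ^ 7 := by
      rw [← Real.rpow_natCast, ← Real.rpow_mul hN]; norm_num
    have e2 : (|x| ^ (-(5 / 6) : ℝ)) ^ 6 = (|x| ^ 5)⁻¹ := by
      rw [← Real.rpow_natCast, ← Real.rpow_mul hx'.le, ← Real.rpow_natCast, ← Real.rpow_neg hx'.le]
      norm_num
    rw [mul_pow, mul_pow, e1, e2, ← div_eq_mul_inv, le_div_iff₀ (by positivity)]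
    exact h
  · refine le_trans ?_ le_add_self
    apply ENNReal.ofReal_le_ofReal
    rw [← div_eq_mul_inv, le_div_iff₀ (by positivity)]; exact h

lemma measurable_maj (C N : ℝ) : Measurable (maj C N) := by
  unfold maj
  refine Measurable.add (Measurable.indicator ?_ measurableSet_Icc) ?_ <;> fun_prop

lemma lintegral_rpow_Icc {R : ℝ} (hR : 0 ≤ R) :
    ∫⁻ x in Set.Icc (-R) R, ENNReal.ofReal (|x| ^ (-(5 / 6) : ℝ))
      = ENNReal.ofReal (12 * R ^ (1 / 6 : ℝ)) := by
  have hi : IntegrableOn (fun x : ℝ => x ^ (-(5 / 6) : ℝ)) (Set.Ioc 0 R) := by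
    rw [← intervalIntegrable_iff_integrableOn_Ioc_of_le hR]
    exact intervalIntegral.intervalIntegrable_rpow' (by norm_num)
  have hv : ∫⁻ x in Set.Ioc 0 R, ENNReal.ofReal (|x| ^ (-(5 / 6) : ℝ))
      = ENNReal.ofReal (6 * R ^ (1 / 6 : ℝ)) := by
    rw [setLIntegral_congr_fun (g := fun x => ENNReal.ofReal (x ^ (-(5 / 6) : ℝ))) measurableSet_Ioc
      (fun x hx => by simp only [abs_of_pos hx.1]),
      ← ofReal_integral_eq_lintegral_ofReal hi, ← intervalIntegral.integral_of_le hR,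
      integral_rpow (Or.inl (by norm_num))]
    · congr 1
      rw [Real.zero_rpow (by norm_num)]
      norm_num
      ring
    · filter_upwards [ae_restrict_mem measurableSet_Ioc] with x hx
      exact Real.rpow_nonneg hx.1.le _
  have hv' : ∫⁻ x in Set.Ico (-R) 0, ENNReal.ofReal (|x| ^ (-(5 / 6) : ℝ))
      = ENNReal.ofReal (6 * R ^ (1 / 6 : ℝ)) := by
    rw [← hv, ← lintegral_indicator measurableSet_Ico, ← lintegral_indicator measurableSet_Ioc,
      ← lintegral_neg_eq_self]
    congr 1; ext x
    by_cases h : x ∈ Set.Ioc 0 R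
    · rw [Set.indicator_of_mem h, Set.indicator_of_mem (by constructor <;> linarith [h.1, h.2]), abs_neg]
    · rw [Set.indicator_of_notMem h, Set.indicator_of_notMem]
      intro h'; exact h (by constructor <;> linarith [h'.1, h'.2])
  have hu : Set.Icc (-R) R = (Set.Ico (-R) 0 ∪ {0}) ∪ Set.Ioc 0 R := by
    ext x; simp only [Set.mem_Icc, Set.mem_union, Set.mem_Ico, Set.mem_singleton_iff, Set.mem_Ioc]
    constructor
    · rintro ⟨h1, h2⟩
      rcases lt_trichotomy x 0 with h | h | h
      · exact Or.inl (Or.inl ⟨h1, h⟩)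
      · exact Or.inl (Or.inr h)
      · exact Or.inr ⟨h, h2⟩
    · rintro ((⟨h1, h2⟩ | h) | ⟨h1, h2⟩) <;> constructor <;> linarith
  rw [hu, lintegral_union measurableSet_Ioc, lintegral_union (measurableSet_singleton 0), hv, hv']
  · simp only [Measure.restrict_singleton, Real.volume_singleton, zero_smul, lintegral_zero_measure,
      add_zero]
    rw [← ENNReal.ofReal_add (by positivity) (by positivity)]
    congr 1; ring
  · simp
  · rw [Set.disjoint_left]
    rintro x (h | h) h'
    · exact absurd h.2 (not_lt.2 h'.1.le)
    · rw [Set.mem_singleton_iff] at h; exact absurd h'.1 (by simp [h])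

/-- The majorant has integral `≲ N^{3/2}`; this exponent produces the threshold `r > 3/4`. -/
lemma lintegral_maj {C N : ℝ} (hC : 0 ≤ C) (hN : 1 ≤ N) :
    ∫⁻ x, maj C N x ≤ ENNReal.ofReal (40 * C * N ^ (3 / 2 : ℝ)) := by
  have hN0 : 0 < N := by linarith
  unfold maj
  rw [lintegral_add_right _ (by fun_prop), lintegral_indicator measurableSet_Icc]
  have e1 : ∫⁻ x in Set.Icc (-(384 * N ^ 2)) (384 * N ^ 2),
      ENNReal.ofReal (C * N ^ (7 / 6 : ℝ) * |x| ^ (-(5 / 6) : ℝ))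
      ≤ ENNReal.ofReal (36 * C * N ^ (3 / 2 : ℝ)) := by
    simp_rw [ENNReal.ofReal_mul (by positivity : 0 ≤ C * N ^ (7 / 6 : ℝ))]
    rw [lintegral_const_mul _ (by fun_prop), lintegral_rpow_Icc (by positivity),
      ← ENNReal.ofReal_mul (by positivity)]
    apply ENNReal.ofReal_le_ofReal
    have h3 : (384 : ℝ) ^ (1 / 6 : ℝ) ≤ 3 := by
      rw [show (3 : ℝ) = (729 : ℝ) ^ (1 / 6 : ℝ) by
        rw [show (729 : ℝ) = 3 ^ (6 : ℝ) by norm_num, ← Real.rpow_mul (by norm_num)]; norm_num]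
      exact Real.rpow_le_rpow (by norm_num) (by norm_num) (by norm_num)
    have h4 : (N ^ 2) ^ (1 / 6 : ℝ) = N ^ (1 / 3 : ℝ) := by
      rw [← Real.rpow_natCast, ← Real.rpow_mul hN0.le]; norm_num
    rw [Real.mul_rpow (by norm_num) (by positivity), h4]
    have h5 : N ^ (3 / 2 : ℝ) = N ^ (7 / 6 : ℝ) * N ^ (1 / 3 : ℝ) := by
      rw [← Real.rpow_add hN0]; norm_num
    rw [h5]
    calc _ = 12 * C * (384 : ℝ) ^ (1 / 6 : ℝ) * (N ^ (7 / 6 : ℝ) * N ^ (1 / 3 : ℝ)) := by ring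
      _ ≤ 12 * C * 3 * (N ^ (7 / 6 : ℝ) * N ^ (1 / 3 : ℝ)) := by gcongr
      _ = _ := by ring
  have e2 : ∫⁻ x : ℝ, ENNReal.ofReal (C * N * (1 + x ^ 2)⁻¹)
      ≤ ENNReal.ofReal (4 * C * N ^ (3 / 2 : ℝ)) := by
    rw [← ofReal_integral_eq_lintegral_ofReal (integrable_inv_one_add_sq.const_mul _)
      (Filter.Eventually.of_forall fun x => by positivity), integral_const_mul,
      integral_univ_inv_one_add_sq]
    apply ENNReal.ofReal_le_ofReal
    have : N ≤ N ^ (3 / 2 : ℝ) := by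
      conv_lhs => rw [← Real.rpow_one N]
      exact Real.rpow_le_rpow_of_exponent_le hN (by norm_num)
    calc C * N * Real.pi ≤ C * N ^ (3 / 2 : ℝ) * 4 := by gcongr; exact Real.pi_le_four
      _ = _ := by ring
  refine (add_le_add e1 e2).trans_eq ?_
  rw [← ENNReal.ofReal_add (by positivity) (by positivity)]
  congr 1; ring

/-! ### The kernel and the `TT*` estimate -/

/-- The phase `2π(xξ₁ + yξ₂) + tξ₁(ξ₁² + ξ₂²)` of the Zakharov–Kuznetsov group. -/
def Th (x y t : ℝ) (ξ : ℝ × ℝ) : ℝ :=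
  2 * Real.pi * (x * ξ.1 + y * ξ.2) + t * ξ.1 * (ξ.1 ^ 2 + ξ.2 ^ 2)

lemma sqrt3_mul : Real.sqrt 3 * Real.sqrt 3 = 3 := Real.mul_self_sqrt (by norm_num)

/-- The linear change of frequency variables `(ξ₁, ξ₂) ↦ (a, b)` with inverse `ξ₁ = a + b`,
`ξ₂ = √3 (a - b)`. -/
def rot : (ℝ × ℝ) ≃ₗ[ℝ] (ℝ × ℝ) where
  toFun ξ := ((ξ.1 + Real.sqrt 3 / 3 * ξ.2) / 2, (ξ.1 - Real.sqrt 3 / 3 * ξ.2) / 2)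
  invFun p := (p.1 + p.2, Real.sqrt 3 * (p.1 - p.2))
  map_add' ξ η := by ext <;> simp <;> ring
  map_smul' c ξ := by ext <;> simp <;> ring
  left_inv ξ := by
    ext
    · simp only; ring
    · simp only; linear_combination (ξ.2 / 3) * sqrt3_mul
  right_inv p := by
    ext
    · simp only; linear_combination ((p.1 - p.2) / 6) * sqrt3_mul
    · simp only; linear_combination (-(p.1 - p.2) / 6) * sqrt3_mul

/-- In the variables `(a, b) = rot ξ` the phase separates, because `ξ₁(ξ₁² + ξ₂²) = 4(a³ + b³)`. -/
lemma Th_rot (x y t : ℝ) (ξ : ℝ × ℝ) :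
    Th x y t ξ = (2 * Real.pi * (x + Real.sqrt 3 * y) * (rot ξ).1 + 4 * t * (rot ξ).1 ^ 3)
      + (2 * Real.pi * (x - Real.sqrt 3 * y) * (rot ξ).2 + 4 * t * (rot ξ).2 ^ 3) := by
  simp only [Th, rot, LinearEquiv.coe_mk, LinearMap.coe_mk, AddHom.coe_mk]
  linear_combination (-(2 * Real.pi * y * ξ.2) / 3 - t * ξ.1 * ξ.2 ^ 2 / 3) * sqrt3_mul

lemma rot_normSq (ξ : ℝ × ℝ) : 2 * ((rot ξ).1 ^ 2 + (rot ξ).2 ^ 2) ≤ ξ.1 ^ 2 + ξ.2 ^ 2 := by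
  simp only [rot, LinearEquiv.coe_mk, LinearMap.coe_mk, AddHom.coe_mk]
  have : 2 * (((ξ.1 + Real.sqrt 3 / 3 * ξ.2) / 2) ^ 2 + ((ξ.1 - Real.sqrt 3 / 3 * ξ.2) / 2) ^ 2)
    = ξ.1 ^ 2 + ξ.2 ^ 2 / 3 := by linear_combination (ξ.2 ^ 2 / 9) * sqrt3_mul
  rw [this]; nlinarith [sq_nonneg ξ.2]

lemma continuous_rot : Continuous rot := rot.toLinearMap.continuous_of_finiteDimensional

lemma continuous_Th : Continuous fun p : (ℝ × ℝ × ℝ) × (ℝ × ℝ) => Th p.1.1 p.1.2.1 p.1.2.2 p.2 := by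
  unfold Th; fun_prop

/-- The kernel of a tensor cutoff in the separated variables is a product of two one-dimensional cubic
integrals, up to the Jacobian `c`. -/
lemma exists_kernel_eq : ∃ c : ℝ, 0 ≤ c ∧ ∀ (χ χ' : ℝ → ℝ) (x y t : ℝ),
    ∫ ξ : ℝ × ℝ, ex (Th x y t ξ) * ((χ (rot ξ).1 * χ' (rot ξ).2 : ℝ) : ℂ)
      = c * (osc χ (2 * Real.pi * (x + Real.sqrt 3 * y)) (4 * t)
          * osc χ' (2 * Real.pi * (x - Real.sqrt 3 * y)) (4 * t)) := by
  have hdet : LinearMap.det rot.toLinearMap ≠ 0 := rot.isUnit_det'.ne_zero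
  refine ⟨|(LinearMap.det rot.toLinearMap)⁻¹|, abs_nonneg _, fun χ χ' x y t => ?_⟩
  set G : ℝ × ℝ → ℂ := fun p =>
    (ex (2 * Real.pi * (x + Real.sqrt 3 * y) * p.1 + 4 * t * p.1 ^ 3) * (χ p.1 : ℂ))
      * (ex (2 * Real.pi * (x - Real.sqrt 3 * y) * p.2 + 4 * t * p.2 ^ 3) * (χ' p.2 : ℂ)) with hG
  have h1 : ∀ ξ, ex (Th x y t ξ) * ((χ (rot ξ).1 * χ' (rot ξ).2 : ℝ) : ℂ) = G (rot ξ) := by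
    intro ξ
    rw [Th_rot, ex_add]; simp only [hG]; push_cast; ring
  have hemb : MeasurableEmbedding rot.toLinearMap :=
    rot.toContinuousLinearEquiv.toHomeomorph.measurableEmbedding
  have h2 := hemb.integral_map (μ := (volume : Measure (ℝ × ℝ))) G
  rw [Measure.map_linearMap_addHaar_eq_smul_addHaar _ hdet, integral_smul_measure,
    ENNReal.toReal_ofReal (abs_nonneg _)] at h2
  simp_rw [h1]
  refine h2.symm.trans ?_
  rw [Complex.real_smul]
  congr 1
  exact integral_prod_mul
    (fun a => ex (2 * Real.pi * (x + Real.sqrt 3 * y) * a + 4 * t * a ^ 3) * (χ a : ℂ))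
    (fun b => ex (2 * Real.pi * (x - Real.sqrt 3 * y) * b + 4 * t * b ^ 3) * (χ' b : ℂ))

/-- The kernel at scales `2 ^ j`, `2 ^ k` is dominated by the majorant at the larger scale, uniformly
in `y` and in `|t| ≤ 1`. -/
lemma kernel_le {χ : ℕ → ℝ → ℝ} {K c : ℝ} (hK : 1 ≤ K) (hχ : ∀ j, Piece (χ j) (2 ^ j) K)
    (j k : ℕ) {x y t : ℝ} (hx : x ≠ 0) (ht : |t| ≤ 1) (hc : 0 ≤ c)
    (hker : ∫ ξ : ℝ × ℝ, ex (Th x y t ξ) * ((χ j (rot ξ).1 * χ k (rot ξ).2 : ℝ) : ℂ)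
      = c * (osc (χ j) (2 * Real.pi * (x + Real.sqrt 3 * y)) (4 * t)
          * osc (χ k) (2 * Real.pi * (x - Real.sqrt 3 * y)) (4 * t))) :
    ‖∫ ξ : ℝ × ℝ, ex (Th x y t ξ) * ((χ j (rot ξ).1 * χ k (rot ξ).2 : ℝ) : ℂ)‖ₑ
      ≤ ENNReal.ofReal c * maj (96 * K ^ 2) (2 ^ max j k) x := by
  rw [hker, enorm_mul, ← ofReal_norm, ← ofReal_norm, norm_mul, Complex.norm_real,
    Real.norm_of_nonneg hc]
  gcongr
  set z := 2 * Real.pi * (x + Real.sqrt 3 * y) with hz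
  set w := 2 * Real.pi * (x - Real.sqrt 3 * y) with hw
  -- `z + w = 4πx`, so one of the two linear coefficients is at least `|x|`.
  have hzw : |x| ≤ |z| ∨ |x| ≤ |w| := by
    by_contra! h
    have h1 : |z + w| ≤ |z| + |w| := abs_add_le z w
    have h2 : z + w = 4 * Real.pi * x := by rw [hz, hw]; ring
    rw [h2, abs_mul, abs_of_pos (by positivity)] at h1
    have := Real.pi_gt_three
    nlinarith [abs_pos.2 hx]
  have ht4 : |4 * t| ≤ 4 := by rw [abs_mul]; norm_num; linarith
  apply le_maj (by positivity) (by positivity) (by positivity) hx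
  rcases le_total k j with h | h
  · rw [max_eq_left h]
    exact pair_bound (hχ j) (hχ k) (one_le_pow₀ (by norm_num))
      (pow_le_pow_right₀ (by norm_num) h) hK ht4 hzw
  · rw [max_eq_right h, mul_comm ‖osc (χ j) z (4 * t)‖]
    exact pair_bound (hχ k) (hχ j) (one_le_pow₀ (by norm_num))
      (pow_le_pow_right₀ (by norm_num) h) hK ht4 hzw.symm

/-- The (formal) adjoint of the linearized operator `F ↦ ∫ e^{i Th x (Y x) (T x) ξ} F(ξ) dξ`, where
`Y`, `T` choose a point `(x₂, t)` for each `x = x₁`. -/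
def dual (Y T : ℝ → ℝ) (g : ℝ → ℂ) (ξ : ℝ × ℝ) : ℂ :=
  ∫ x, ex (-Th x (Y x) (T x) ξ) * g x

lemma Th_sub (x y t x' y' t' : ℝ) (ξ : ℝ × ℝ) :
    Th (x - x') (y - y') (t - t') ξ = Th x y t ξ - Th x' y' t' ξ := by unfold Th; ring

lemma measurable_phase {Y T : ℝ → ℝ} (hY : Measurable Y) (hT : Measurable T) :
    Measurable fun p : ℝ × (ℝ × ℝ) => Th p.1 (Y p.1) (T p.1) p.2 := by
  unfold Th; fun_prop

lemma measurable_ex : Measurable ex := continuous_ex.measurable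

lemma aesm_dual {Y T : ℝ → ℝ} (hY : Measurable Y) (hT : Measurable T) {g : ℝ → ℂ}
    (hg : Integrable g) : AEStronglyMeasurable (dual Y T g) volume := by
  have : AEStronglyMeasurable (fun p : (ℝ × ℝ) × ℝ => ex (-Th p.2 (Y p.2) (T p.2) p.1) * g p.2)
      (volume.prod volume) := by
    refine AEStronglyMeasurable.mul ?_ hg.aestronglyMeasurable.comp_snd
    exact (measurable_ex.comp ((measurable_phase hY hT).comp measurable_swap).neg).aestronglyMeasurable
  exact this.integral_prod_right'

lemma mul_le_sq_add_sq (a b : ℝ≥0∞) : a * b ≤ a ^ 2 + b ^ 2 := by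
  rcases le_total a b with h | h
  · exact le_trans (by rw [sq]; gcongr) le_add_self
  · exact le_trans (by rw [sq]; gcongr) le_self_add

/-- The `TT*` step: expanding the square gives the quadratic form of a kernel dominated by `H(x₂ - x₁)`,
which is bounded on `L²` by the integral of `H`, whatever `Y` and `T` are. -/
lemma dual_bound {Y T : ℝ → ℝ} (hY : Measurable Y) (hT : Measurable T)
    (hT1 : ∀ x, T x ∈ Set.Icc (0 : ℝ) 1) {g : ℝ → ℂ} (hg : Integrable g)
    {w : ℝ × ℝ → ℝ} (hw : Integrable w) (hw0 : ∀ ξ, 0 ≤ w ξ) {H : ℝ → ℝ≥0∞} (hH : Measurable H)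
    (hk : ∀ x y t, |t| ≤ 1 → ‖∫ ξ : ℝ × ℝ, ex (Th x y t ξ) * (w ξ : ℂ)‖ₑ ≤ H x) :
    ∫⁻ ξ, ENNReal.ofReal (w ξ) * ‖dual Y T g ξ‖ₑ ^ 2 ≤ 2 * (∫⁻ x, H x) * ∫⁻ x, ‖g x‖ₑ ^ 2 := by
  set Γ : (ℝ × ℝ) → (ℝ × ℝ) → ℂ := fun ξ z =>
    (w ξ : ℂ) * ((ex (-Th z.1 (Y z.1) (T z.1) ξ) * g z.1)
      * (starRingEnd ℂ) (ex (-Th z.2 (Y z.2) (T z.2) ξ) * g z.2)) with hΓ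
  have hgc : Integrable fun x => (starRingEnd ℂ) (g x) := by
    have := (Complex.conjCLE : ℂ →L[ℝ] ℂ).integrable_comp hg
    simpa using this
  have hΓi : Integrable (Function.uncurry Γ) (volume.prod volume) := by
    have hb : Integrable (fun p : (ℝ × ℝ) × (ℝ × ℝ) =>
        (w p.1 : ℂ) * (g p.2.1 * (starRingEnd ℂ) (g p.2.2))) (volume.prod volume) :=
      hw.ofReal.mul_prod (hg.mul_prod hgc)
    have hm : AEStronglyMeasurable (fun p : (ℝ × ℝ) × (ℝ × ℝ) =>
        ex (-Th p.2.1 (Y p.2.1) (T p.2.1) p.1) * ex (Th p.2.2 (Y p.2.2) (T p.2.2) p.1))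
        (volume.prod volume) := by
      apply Measurable.aestronglyMeasurable
      have m1 : Measurable fun p : (ℝ × ℝ) × (ℝ × ℝ) => Th p.2.1 (Y p.2.1) (T p.2.1) p.1 :=
        (measurable_phase hY hT).comp (by fun_prop : Measurable fun p : (ℝ × ℝ) × (ℝ × ℝ) => (p.2.1, p.1))
      have m2 : Measurable fun p : (ℝ × ℝ) × (ℝ × ℝ) => Th p.2.2 (Y p.2.2) (T p.2.2) p.1 :=
        (measurable_phase hY hT).comp (by fun_prop : Measurable fun p : (ℝ × ℝ) × (ℝ × ℝ) => (p.2.2, p.1))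
      exact (measurable_ex.comp m1.neg).mul (measurable_ex.comp m2)
    refine (hb.bdd_mul (c := 1) hm (Filter.Eventually.of_forall fun p => ?_)).congr
      (Filter.Eventually.of_forall fun p => ?_)
    · rw [norm_mul, norm_ex, norm_ex, one_mul]
    · simp only [hΓ, Function.uncurry, map_mul, conj_ex, neg_neg]; ring
  have h1 : ∀ ξ, ∫ z, Γ ξ z = ((w ξ * ‖dual Y T g ξ‖ ^ 2 : ℝ) : ℂ) := by
    intro ξ
    simp only [hΓ]
    rw [integral_const_mul, Measure.volume_eq_prod,
      integral_prod_mul (fun x => ex (-Th x (Y x) (T x) ξ) * g x)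
        (fun x => (starRingEnd ℂ) (ex (-Th x (Y x) (T x) ξ) * g x)), integral_conj,
      Complex.mul_conj, Complex.normSq_eq_norm_sq]
    simp only [dual]; push_cast; rfl
  have h2 : ∫⁻ ξ, ENNReal.ofReal (w ξ) * ‖dual Y T g ξ‖ₑ ^ 2 = ‖∫ ξ, ∫ z, Γ ξ z‖ₑ := by
    have hi : Integrable fun ξ => w ξ * ‖dual Y T g ξ‖ ^ 2 := by
      have := hΓi.integral_prod_left
      simp only [Function.uncurry, h1] at this
      exact this.re.congr (Filter.Eventually.of_forall fun ξ => Complex.ofReal_re _)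
    simp_rw [h1]
    rw [integral_complex_ofReal, ← ofReal_norm, Complex.norm_real, Real.norm_eq_abs, abs_of_nonneg
      (integral_nonneg fun ξ => mul_nonneg (hw0 ξ) (sq_nonneg _)),
      ofReal_integral_eq_lintegral_ofReal hi
        (Filter.Eventually.of_forall fun ξ => mul_nonneg (hw0 ξ) (sq_nonneg _))]
    congr 1; ext ξ
    rw [ENNReal.ofReal_mul (hw0 ξ), ENNReal.ofReal_pow (norm_nonneg _), ofReal_norm]
  have h3 : ∀ z : ℝ × ℝ, ‖∫ ξ, Γ ξ z‖ₑ ≤ ‖g z.1‖ₑ ^ 2 * H (z.2 - z.1) + ‖g z.2‖ₑ ^ 2 * H (z.2 - z.1) := by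
    intro z
    have e : ∀ ξ, Γ ξ z = (g z.1 * (starRingEnd ℂ) (g z.2)) *
        (ex (Th (z.2 - z.1) (Y z.2 - Y z.1) (T z.2 - T z.1) ξ) * (w ξ : ℂ)) := by
      intro ξ
      rw [Th_sub, sub_eq_add_neg, ex_add]
      simp only [hΓ, map_mul, conj_ex, neg_neg]; ring
    simp_rw [e]
    rw [integral_const_mul, enorm_mul, enorm_mul, ← add_mul, RCLike.enorm_conj]
    refine mul_le_mul' (mul_le_sq_add_sq _ _) (hk _ _ _ ?_)
    have a1 := hT1 z.1
    have a2 := hT1 z.2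
    rw [abs_le]; constructor <;> linarith [a1.1, a1.2, a2.1, a2.2]
  have hgm : AEMeasurable (fun x => ‖g x‖ₑ ^ 2) volume := hg.aestronglyMeasurable.enorm.pow_const 2
  have m1 : AEMeasurable (fun z : ℝ × ℝ => ‖g z.1‖ₑ ^ 2 * H (z.2 - z.1)) (volume.prod volume) :=
    hgm.comp_fst.mul (hH.comp (by fun_prop)).aemeasurable
  have m2 : AEMeasurable (fun z : ℝ × ℝ => ‖g z.2‖ₑ ^ 2 * H (z.2 - z.1)) (volume.prod volume) :=
    hgm.comp_snd.mul (hH.comp (by fun_prop)).aemeasurable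
  rw [h2, integral_integral_swap hΓi]
  refine (enorm_integral_le_lintegral_enorm _).trans ((lintegral_mono h3).trans_eq ?_)
  rw [Measure.volume_eq_prod, lintegral_add_left' m1, lintegral_prod _ m1, lintegral_prod_symm _ m2]
  have i1 : ∀ x, ∫⁻ y, ‖g x‖ₑ ^ 2 * H (y - x) = ‖g x‖ₑ ^ 2 * ∫⁻ y, H y := fun x => by
    rw [lintegral_const_mul _ (by fun_prop : Measurable fun y => H (y - x)),
      lintegral_sub_right_eq_self]
  have i2 : ∀ y, ∫⁻ x, ‖g y‖ₑ ^ 2 * H (y - x) = ‖g y‖ₑ ^ 2 * ∫⁻ y, H y := fun y => by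
    rw [lintegral_const_mul _ (by fun_prop : Measurable fun x => H (y - x)),
      lintegral_sub_left_eq_self]
  simp only [i1, i2]
  rw [lintegral_mul_const'' _ hgm]
  ring

/-! ### Summation over dyadic blocks -/

lemma weight_le {r : ℝ} (hr : 0 ≤ r) {ξ : ℝ × ℝ} {j k : ℕ} (hj : 2 ^ j ≤ 1 + |(rot ξ).1|)
    (hk : 2 ^ k ≤ 1 + |(rot ξ).2|) :
    (1 + ξ.1 ^ 2 + ξ.2 ^ 2) ^ (-r) ≤ 2 ^ r * ((2 : ℝ) ^ max j k) ^ (-(2 * r)) := by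
  set N : ℝ := 2 ^ max j k with hN
  have hN0 : 0 < N := by positivity
  have key : N ^ 2 / 2 ≤ 1 + ξ.1 ^ 2 + ξ.2 ^ 2 := by
    have h := rot_normSq ξ
    have hsq : ∀ u : ℝ, N ≤ 1 + |u| → N ^ 2 ≤ 2 + 2 * u ^ 2 := fun u hu => by
      nlinarith [sq_abs u, sq_nonneg (1 - |u|), abs_nonneg u]
    rcases le_total k j with hkj | hkj
    · rw [max_eq_left hkj] at hN
      have := hsq _ (hN ▸ hj)
      nlinarith [sq_nonneg (rot ξ).1, sq_nonneg (rot ξ).2]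
    · rw [max_eq_right hkj] at hN
      have := hsq _ (hN ▸ hk)
      nlinarith [sq_nonneg (rot ξ).1, sq_nonneg (rot ξ).2]
  refine (Real.rpow_le_rpow_of_nonpos (by positivity) key (by linarith)).trans_eq ?_
  rw [Real.div_rpow (by positivity) (by norm_num), ← Real.rpow_natCast, ← Real.rpow_mul hN0.le,
    Real.rpow_neg (by norm_num) r, div_inv_eq_mul, mul_comm]
  congr 2; push_cast; ring

lemma pow_max_rpow_le {s : ℝ} (hs : 0 ≤ s) (j k : ℕ) :
    ((2 : ℝ) ^ max j k) ^ (-s) ≤ ((2 : ℝ) ^ (-(s / 2))) ^ j * ((2 : ℝ) ^ (-(s / 2))) ^ k := by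
  set q : ℝ := (2 : ℝ) ^ (-(s / 2)) with hq
  have hq1 : q ≤ 1 := Real.rpow_le_one_of_one_le_of_nonpos (by norm_num) (by linarith)
  have hq0 : 0 ≤ q := by positivity
  have e : ((2 : ℝ) ^ max j k) ^ (-s) = q ^ (2 * max j k) := by
    rw [hq, ← Real.rpow_natCast, ← Real.rpow_natCast, ← Real.rpow_mul (by norm_num),
      ← Real.rpow_mul (by norm_num)]
    congr 1; push_cast; ring
  rw [e, ← pow_add]
  exact pow_le_pow_of_le_one hq0 hq1 (by omega)

/-- The dual estimate in `L²((1 + |ξ|²)^{-r})`. The block `(j, k)` contributes `N^{-2r} N^{3/2}` with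
`N = 2 ^ max j k`, which is summable because `r > 3/4`. -/
lemma exists_dual_weight {r : ℝ} (hr : 3 / 4 < r) : ∃ A : ℝ≥0∞, A ≠ ⊤ ∧
    ∀ Y T : ℝ → ℝ, Measurable Y → Measurable T → (∀ x, T x ∈ Set.Icc (0 : ℝ) 1) →
    ∀ g : ℝ → ℂ, Integrable g →
      ∫⁻ ξ : ℝ × ℝ, ENNReal.ofReal ((1 + ξ.1 ^ 2 + ξ.2 ^ 2) ^ (-r)) * ‖dual Y T g ξ‖ₑ ^ 2
        ≤ A * ∫⁻ x, ‖g x‖ₑ ^ 2 := by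
  obtain ⟨χ, K, hK, hχ, hcov⟩ := exists_dyadic
  obtain ⟨c, hc, hker⟩ := exists_kernel_eq
  set s : ℝ := 2 * r - 3 / 2 with hs
  have hs0 : 0 < s := by linarith
  set q : ℝ := (2 : ℝ) ^ (-(s / 2)) with hq
  have hq0 : 0 ≤ q := by positivity
  have hq1 : q < 1 := Real.rpow_lt_one_of_one_lt_of_neg (by norm_num) (by linarith)
  set D : ℝ := 2 ^ r * (2 * (c * (40 * (96 * K ^ 2)))) with hD
  have hD0 : 0 ≤ D := by positivity
  set Q : ℝ≥0∞ := ENNReal.ofReal q with hQ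
  refine ⟨ENNReal.ofReal D * ((1 - Q)⁻¹ * (1 - Q)⁻¹), ?_, fun Y T hY hT hT1 g hg => ?_⟩
  · have : (1 - Q)⁻¹ ≠ ⊤ := by
      rw [ENNReal.inv_ne_top]
      exact (tsub_pos_of_lt (ENNReal.ofReal_lt_one.2 hq1)).ne'
    finiteness
  set G : ℝ≥0∞ := ∫⁻ x, ‖g x‖ₑ ^ 2 with hG
  set w : ℕ × ℕ → ℝ × ℝ → ℝ := fun p ξ => χ p.1 (rot ξ).1 * χ p.2 (rot ξ).2 with hw
  set cf : ℕ × ℕ → ℝ≥0∞ := fun p =>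
    ENNReal.ofReal (2 ^ r * ((2 : ℝ) ^ max p.1 p.2) ^ (-(2 * r))) with hcf
  have hw0 : ∀ p ξ, 0 ≤ w p ξ := fun p ξ => mul_nonneg ((hχ _).nonneg _) ((hχ _).nonneg _)
  have hwc : ∀ p, Continuous (w p) := fun p =>
    ((hχ _).cont.comp (continuous_fst.comp continuous_rot)).mul
      ((hχ _).cont.comp (continuous_snd.comp continuous_rot))
  have hwi : ∀ p, Integrable (w p) := fun p => by
    refine (hwc p).integrable_of_hasCompactSupport ?_
    have h1 : HasCompactSupport fun y : ℝ × ℝ => χ p.1 y.1 * χ p.2 y.2 := by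
      refine HasCompactSupport.of_support_subset_isCompact
        ((hχ p.1).cpt.isCompact.prod (hχ p.2).cpt.isCompact) fun y hy => ?_
      exact ⟨subset_closure (left_ne_zero_of_mul hy), subset_closure (right_ne_zero_of_mul hy)⟩
    exact h1.comp_homeomorph rot.toContinuousLinearEquiv.toHomeomorph
  have hpt : ∀ ξ : ℝ × ℝ, ENNReal.ofReal ((1 + ξ.1 ^ 2 + ξ.2 ^ 2) ^ (-r)) * ‖dual Y T g ξ‖ₑ ^ 2
      ≤ ∑' p, cf p * (ENNReal.ofReal (w p ξ) * ‖dual Y T g ξ‖ₑ ^ 2) := by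
    intro ξ
    obtain ⟨j, hj, hj'⟩ := hcov (rot ξ).1
    obtain ⟨k, hk, hk'⟩ := hcov (rot ξ).2
    refine le_trans ?_ (ENNReal.le_tsum (j, k))
    rw [← mul_assoc]
    gcongr
    calc _ ≤ cf (j, k) * 1 := by
            rw [mul_one]; exact ENNReal.ofReal_le_ofReal (weight_le (by linarith) hj hk)
      _ ≤ _ := by
            gcongr
            rw [ENNReal.one_le_ofReal]
            exact one_le_mul_of_one_le_of_one_le hj' hk'
  have hae := aesm_dual hY hT hg
  have hdb : ∀ p, ∫⁻ ξ, ENNReal.ofReal (w p ξ) * ‖dual Y T g ξ‖ₑ ^ 2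
      ≤ 2 * ENNReal.ofReal (c * (40 * (96 * K ^ 2) * ((2 : ℝ) ^ max p.1 p.2) ^ (3 / 2 : ℝ))) * G := by
    intro p
    set N : ℝ := 2 ^ max p.1 p.2 with hN
    -- The kernel bound is only available off the null set `{0}`, where `H` is set to `⊤`.
    refine (dual_bound hY hT hT1 hg (hwi p) (hw0 p)
      (H := fun x => ENNReal.ofReal c * maj (96 * K ^ 2) N x
        + ({0} : Set ℝ).indicator (fun _ => ⊤) x) ?_ ?_).trans ?_
    · exact ((measurable_maj _ _).const_mul _).add
        (measurable_const.indicator (measurableSet_singleton 0))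
    · intro x y t ht
      by_cases hx : x = 0
      · simp [hx]
      · exact (kernel_le hK hχ p.1 p.2 hx ht hc (hker _ _ x y t)).trans le_self_add
    · gcongr
      rw [lintegral_add_left ((measurable_maj _ _).const_mul _),
        lintegral_indicator (measurableSet_singleton 0), lintegral_const_mul _ (measurable_maj _ _)]
      simp only [Measure.restrict_singleton, Real.volume_singleton, zero_smul,
        lintegral_zero_measure, add_zero]
      rw [ENNReal.ofReal_mul hc]
      gcongr
      exact lintegral_maj (by positivity) (one_le_pow₀ (by norm_num))
  calc _ ≤ ∫⁻ ξ, ∑' p, cf p * (ENNReal.ofReal (w p ξ) * ‖dual Y T g ξ‖ₑ ^ 2) := lintegral_mono hpt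
    _ = ∑' p, ∫⁻ ξ, cf p * (ENNReal.ofReal (w p ξ) * ‖dual Y T g ξ‖ₑ ^ 2) := by
        refine lintegral_tsum fun p => ?_
        exact (((hwc p).measurable.ennreal_ofReal.aemeasurable).mul
          (hae.enorm.pow_const 2)).const_mul _
    _ ≤ ∑' p : ℕ × ℕ, ENNReal.ofReal D * G * (Q ^ p.1 * Q ^ p.2) := by
        refine ENNReal.tsum_le_tsum fun p => ?_
        rw [lintegral_const_mul' _ _ ENNReal.ofReal_ne_top]
        refine (mul_le_mul_right (hdb p) _).trans ?_
        have hN : (0 : ℝ) < 2 ^ max p.1 p.2 := by positivity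
        have e : ((2 : ℝ) ^ max p.1 p.2) ^ (-s) =
            ((2 : ℝ) ^ max p.1 p.2) ^ (-(2 * r)) * ((2 : ℝ) ^ max p.1 p.2) ^ (3 / 2 : ℝ) := by
          rw [← Real.rpow_add hN, hs]; congr 1; ring
        have key : cf p * (2 * ENNReal.ofReal
            (c * (40 * (96 * K ^ 2) * ((2 : ℝ) ^ max p.1 p.2) ^ (3 / 2 : ℝ))))
            ≤ ENNReal.ofReal D * (Q ^ p.1 * Q ^ p.2) := by
          have e2 : (2 : ℝ≥0∞) = ENNReal.ofReal 2 := by simp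
          rw [e2, hcf, hQ, ← ENNReal.ofReal_pow hq0, ← ENNReal.ofReal_pow hq0,
            ← ENNReal.ofReal_mul (pow_nonneg hq0 _), ← ENNReal.ofReal_mul hD0,
            ← ENNReal.ofReal_mul (by norm_num), ← ENNReal.ofReal_mul (by positivity)]
          apply ENNReal.ofReal_le_ofReal
          calc _ = D * ((2 : ℝ) ^ max p.1 p.2) ^ (-s) := by rw [e, hD]; ring
            _ ≤ _ := mul_le_mul_of_nonneg_left (pow_max_rpow_le hs0.le p.1 p.2) hD0
        calc _ = cf p * (2 * ENNReal.ofReal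
              (c * (40 * (96 * K ^ 2) * ((2 : ℝ) ^ max p.1 p.2) ^ (3 / 2 : ℝ)))) * G := by ring
          _ ≤ ENNReal.ofReal D * (Q ^ p.1 * Q ^ p.2) * G := by gcongr
          _ = _ := by ring
    _ = _ := by
        rw [ENNReal.tsum_mul_left, ENNReal.tsum_prod (f := fun j k => Q ^ j * Q ^ k)]
        simp only [ENNReal.tsum_mul_left, ENNReal.tsum_mul_right, ENNReal.tsum_geometric]
        ring

/-! ### Duality -/

lemma aesm_linearized {Y T : ℝ → ℝ} (hY : Measurable Y) (hT : Measurable T) {F : ℝ × ℝ → ℂ}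
    (hF : Integrable F) :
    AEStronglyMeasurable (fun x => ∫ ξ, ex (Th x (Y x) (T x) ξ) * F ξ) volume := by
  have : AEStronglyMeasurable (fun p : ℝ × (ℝ × ℝ) => ex (Th p.1 (Y p.1) (T p.1) p.2) * F p.2)
      (volume.prod volume) :=
    (measurable_ex.comp (measurable_phase hY hT)).aestronglyMeasurable.mul
      hF.aestronglyMeasurable.comp_snd
  exact this.integral_prod_right'

lemma norm_ex_integral_le (F : ℝ × ℝ → ℂ) (θ : ℝ × ℝ → ℝ) :
    ‖∫ ξ, ex (θ ξ) * F ξ‖ ≤ ∫ ξ, ‖F ξ‖ := by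
  refine (norm_integral_le_integral_norm _).trans_eq ?_
  simp only [norm_mul, norm_ex, one_mul]

/-- Cauchy–Schwarz with a pair of reciprocal weights. -/
lemma weighted_cauchy_schwarz (r : ℝ) {f h : ℝ × ℝ → ℂ} (hf : AEStronglyMeasurable f volume)
    (hh : AEStronglyMeasurable h volume) :
    (∫⁻ ξ, ‖f ξ‖ₑ * ‖h ξ‖ₑ) ^ 2
      ≤ (∫⁻ ξ : ℝ × ℝ, ENNReal.ofReal ((1 + ξ.1 ^ 2 + ξ.2 ^ 2) ^ r) * ‖f ξ‖ₑ ^ 2)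
        * ∫⁻ ξ : ℝ × ℝ, ENNReal.ofReal ((1 + ξ.1 ^ 2 + ξ.2 ^ 2) ^ (-r)) * ‖h ξ‖ₑ ^ 2 := by
  set W : ℝ → ℝ × ℝ → ℝ≥0∞ := fun s ξ => ENNReal.ofReal ((1 + ξ.1 ^ 2 + ξ.2 ^ 2) ^ s) with hW
  have hpos : ∀ ξ : ℝ × ℝ, 0 < 1 + ξ.1 ^ 2 + ξ.2 ^ 2 := fun ξ => by positivity
  have hWm : ∀ s, Measurable (W s) := fun s => by simp only [hW]; fun_prop
  have hadd : ∀ s t ξ, W s ξ * W t ξ = W (s + t) ξ := fun s t ξ => by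
    simp only [hW]
    rw [← ENNReal.ofReal_mul (Real.rpow_nonneg (hpos ξ).le _), Real.rpow_add (hpos ξ)]
  have hsq : ∀ s ξ (a : ℝ≥0∞), (W (s / 2) ξ * a) ^ (2 : ℝ) = W s ξ * a ^ 2 := fun s ξ a => by
    rw [ENNReal.rpow_two, mul_pow, sq (W _ _), hadd, add_halves]
  have hcs := ENNReal.lintegral_mul_le_Lp_mul_Lq volume Real.HolderConjugate.two_two
    (f := fun ξ => W (r / 2) ξ * ‖f ξ‖ₑ) (g := fun ξ => W (-r / 2) ξ * ‖h ξ‖ₑ)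
    ((hWm _).aemeasurable.mul hf.enorm) ((hWm _).aemeasurable.mul hh.enorm)
  simp only [Pi.mul_apply, hsq] at hcs
  have e : ∀ ξ, W (r / 2) ξ * ‖f ξ‖ₑ * (W (-r / 2) ξ * ‖h ξ‖ₑ) = ‖f ξ‖ₑ * ‖h ξ‖ₑ := fun ξ => by
    rw [mul_mul_mul_comm, hadd, show r / 2 + -r / 2 = 0 by ring]
    simp [hW]
  simp only [e] at hcs
  refine (pow_le_pow_left' hcs 2).trans_eq ?_
  rw [mul_pow, ← ENNReal.rpow_two, ← ENNReal.rpow_two, ← ENNReal.rpow_mul, ← ENNReal.rpow_mul]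
  norm_num [hW]

/-- Duality: the dual estimate tested on `g`, the restriction to `s` of the linearized operator applied
to `F`, bounds `‖g‖²` by a multiple of `‖g‖`, and `‖g‖` is finite because `s` has finite measure. -/
lemma linearized_bound {r : ℝ} {A : ℝ≥0∞} {Y T : ℝ → ℝ} (hY : Measurable Y) (hT : Measurable T)
    (hA : ∀ g : ℝ → ℂ, Integrable g →
      ∫⁻ ξ : ℝ × ℝ, ENNReal.ofReal ((1 + ξ.1 ^ 2 + ξ.2 ^ 2) ^ (-r)) * ‖dual Y T g ξ‖ₑ ^ 2
        ≤ A * ∫⁻ x, ‖g x‖ₑ ^ 2)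
    {F : ℝ × ℝ → ℂ} (hF : Integrable F) {s : Set ℝ} (hs : MeasurableSet s) (hsv : volume s ≠ ⊤) :
    ∫⁻ x in s, ‖∫ ξ, ex (Th x (Y x) (T x) ξ) * F ξ‖ₑ ^ 2
      ≤ A * ∫⁻ ξ : ℝ × ℝ, ENNReal.ofReal ((1 + ξ.1 ^ 2 + ξ.2 ^ 2) ^ r) * ‖F ξ‖ₑ ^ 2 := by
  set v : ℝ → ℂ := fun x => ∫ ξ, ex (Th x (Y x) (T x) ξ) * F ξ with hv
  set g : ℝ → ℂ := s.indicator v with hg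
  have hvm : AEStronglyMeasurable v volume := aesm_linearized hY hT hF
  have hvb : ∀ x, ‖v x‖ ≤ ∫ ξ, ‖F ξ‖ := fun x => norm_ex_integral_le F _
  have : IsFiniteMeasure (volume.restrict s) := ⟨by simpa using hsv.lt_top⟩
  have hgi : Integrable g := by
    rw [hg, integrable_indicator_iff hs]
    exact Integrable.of_bound hvm.restrict _ (Filter.Eventually.of_forall hvb)
  have hgc : Integrable fun x => (starRingEnd ℂ) (g x) := by
    have := (Complex.conjCLE : ℂ →L[ℝ] ℂ).integrable_comp hgi
    simpa using this
  have hS : ∫⁻ x in s, ‖v x‖ₑ ^ 2 = ∫⁻ x, ‖g x‖ₑ ^ 2 := by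
    rw [← lintegral_indicator hs]
    congr 1; ext x
    by_cases hx : x ∈ s <;> simp [hg, hx]
  have hSt : ∫⁻ x, ‖g x‖ₑ ^ 2 ≠ ⊤ := by
    rw [← hS]
    refine ne_top_of_le_ne_top (b := ∫⁻ x in s, ENNReal.ofReal (∫ ξ, ‖F ξ‖) ^ 2) ?_
      (lintegral_mono fun x => ?_)
    · rw [setLIntegral_const]; finiteness
    · gcongr
      rw [← ofReal_norm]
      exact ENNReal.ofReal_le_ofReal (hvb x)
  set Γ : ℝ → ℝ × ℝ → ℂ := fun x ξ =>
    (starRingEnd ℂ) (g x) * (ex (Th x (Y x) (T x) ξ) * F ξ) with hΓ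
  have hΓi : Integrable (Function.uncurry Γ) (volume.prod volume) := by
    refine ((hgc.mul_prod hF).bdd_mul (c := 1)
      (measurable_ex.comp (measurable_phase hY hT)).aestronglyMeasurable
      (Filter.Eventually.of_forall fun p => ?_)).congr (Filter.Eventually.of_forall fun p => ?_)
    · exact (norm_ex _).le
    · simp only [hΓ, Function.uncurry, Function.comp]; ring
  have h1 : ∀ x, ∫ ξ, Γ x ξ = ((‖g x‖ ^ 2 : ℝ) : ℂ) := fun x => by
    simp only [hΓ]
    rw [integral_const_mul]
    by_cases hx : x ∈ s
    · have : g x = v x := Set.indicator_of_mem hx v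
      rw [← Complex.normSq_eq_norm_sq, ← Complex.mul_conj, mul_comm, this]
    · have : g x = 0 := Set.indicator_of_notMem hx v
      simp [this]
  have h2 : ∀ ξ, ∫ x, Γ x ξ = F ξ * (starRingEnd ℂ) (dual Y T g ξ) := fun ξ => by
    rw [dual, ← integral_conj, ← integral_const_mul]
    congr 1; ext x
    simp only [hΓ, map_mul, conj_ex, neg_neg]; ring
  have h3 : ∫⁻ x, ‖g x‖ₑ ^ 2 = ‖∫ x, ∫ ξ, Γ x ξ‖ₑ := by
    have hi : Integrable fun x => ‖g x‖ ^ 2 := by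
      have := hΓi.integral_prod_left
      simp only [Function.uncurry, h1] at this
      exact this.re.congr (Filter.Eventually.of_forall fun ξ => Complex.ofReal_re _)
    simp_rw [h1]
    rw [integral_complex_ofReal, ← ofReal_norm, Complex.norm_real, Real.norm_eq_abs, abs_of_nonneg
      (integral_nonneg fun x => sq_nonneg _), ofReal_integral_eq_lintegral_ofReal hi
        (Filter.Eventually.of_forall fun x => sq_nonneg _)]
    congr 1; ext x
    rw [ENNReal.ofReal_pow (norm_nonneg _), ofReal_norm]
  have h4 : ∫⁻ x, ‖g x‖ₑ ^ 2 ≤ ∫⁻ ξ, ‖F ξ‖ₑ * ‖dual Y T g ξ‖ₑ := by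
    rw [h3, integral_integral_swap hΓi]
    refine (enorm_integral_le_lintegral_enorm _).trans_eq ?_
    simp only [h2, enorm_mul, RCLike.enorm_conj]
  rw [hS]
  set S := ∫⁻ x, ‖g x‖ₑ ^ 2
  have h5 := (pow_le_pow_left' h4 2).trans
    (weighted_cauchy_schwarz r hF.aestronglyMeasurable (aesm_dual hY hT hgi))
  have h6 := h5.trans (mul_le_mul_right (hA g hgi) _)
  rcases eq_or_ne S 0 with h0 | h0
  · simp [h0]
  · rw [sq, ← mul_assoc, mul_comm _ A] at h6
    exact (ENNReal.mul_le_mul_iff_left h0 hSt).1 h6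

/-! ### Passage to the supremum -/

/-- Every finite maximum of measurable functions is attained at a measurable choice of index. -/
lemma exists_measurable_argmax {f : ℕ → ℝ → ℝ≥0∞} (hf : ∀ k, Measurable (f k)) (n : ℕ) :
    ∃ j : ℝ → ℕ, Measurable j ∧ ∀ x, ∀ k ≤ n, f k x ≤ f (j x) x := by
  induction n with
  | zero => exact ⟨fun _ => 0, measurable_const, fun x k hk => by simp [Nat.le_zero.1 hk]⟩
  | succ n ih =>
    obtain ⟨j, hj, hmax⟩ := ih
    have hm : Measurable fun x => f (j x) x :=
      (measurable_from_prod_countable_right (f := fun p : ℕ × ℝ => f p.1 p.2) hf).comp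
        (hj.prodMk measurable_id)
    refine ⟨fun x => if f (j x) x < f (n + 1) x then n + 1 else j x,
      Measurable.ite (measurableSet_lt hm (hf _)) measurable_const hj, fun x k hk => ?_⟩
    dsimp only
    split_ifs with h
    · rcases Nat.le_succ_iff.1 hk with hk | rfl
      · exact (hmax x k hk).trans h.le
      · exact le_rfl
    · rcases Nat.le_succ_iff.1 hk with hk | rfl
      · exact hmax x k hk
      · exact not_lt.1 h

/-- Linearization of a maximal function: an `L²` bound, uniform over measurable choices of the
index and over bounded intervals, passes to the supremum. -/
lemma lintegral_iSup_sq_le {f : ℕ → ℝ → ℝ≥0∞} (hf : ∀ k, Measurable (f k)) {B : ℝ≥0∞}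
    (hB : ∀ j : ℝ → ℕ, Measurable j → ∀ R : ℝ, ∫⁻ x in Set.Icc (-R) R, f (j x) x ^ 2 ≤ B) :
    ∫⁻ x, (⨆ k, f k x) ^ 2 ≤ B := by
  set h : ℕ → ℝ → ℝ≥0∞ := fun n => (Set.Icc (-(n : ℝ)) n).indicator
    fun x => ((Finset.range (n + 1)).sup fun k => f k x) ^ 2 with hh
  have hm : ∀ n, Measurable (h n) := fun n =>
    Measurable.indicator (Measurable.pow_const (by
      simp only [Finset.sup_eq_iSup]
      exact .iSup fun k => .iSup fun _ => hf k) 2) measurableSet_Icc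
  have hmono : Monotone h := by
    intro m n hmn x
    have hc : (m : ℝ) ≤ n := by exact_mod_cast hmn
    simp only [hh]
    refine (Set.indicator_le_indicator_of_subset (Set.Icc_subset_Icc (neg_le_neg hc) hc)
      (fun _ => zero_le) x).trans (Set.indicator_le_indicator ?_)
    gcongr
  have hle : ∀ x, (⨆ k, f k x) ^ 2 ≤ ⨆ n, h n x := by
    intro x
    rw [ENNReal.iSup_pow_of_ne_zero (by norm_num)]
    refine iSup_le fun k => ?_
    obtain ⟨m, hm⟩ := exists_nat_ge |x|
    refine le_iSup_of_le (max k m) ?_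
    have hx : x ∈ Set.Icc (-((max k m : ℕ) : ℝ)) (max k m : ℕ) :=
      abs_le.1 (hm.trans (by exact_mod_cast le_max_right k m))
    simp only [hh]
    rw [Set.indicator_of_mem hx]
    gcongr
    exact Finset.le_sup (f := fun k => f k x)
      (Finset.mem_range.2 (Nat.lt_succ_of_le (le_max_left k m)))
  refine (lintegral_mono hle).trans ?_
  rw [lintegral_iSup hm hmono]
  refine iSup_le fun n => ?_
  obtain ⟨j, hj, hmax⟩ := exists_measurable_argmax hf n
  simp only [hh]
  rw [lintegral_indicator measurableSet_Icc]
  refine (lintegral_mono fun x => ?_).trans (hB j hj n)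
  gcongr
  exact Finset.sup_le fun k hk => hmax x k (Nat.le_of_lt_succ (Finset.mem_range.1 hk))

lemma continuous_ex_integral {F : ℝ × ℝ → ℂ} (hF : Integrable F) :
    Continuous fun p : ℝ × ℝ × ℝ => ∫ ξ, ex (Th p.1 p.2.1 p.2.2 ξ) * F ξ := by
  refine continuous_of_dominated (bound := fun ξ => ‖F ξ‖) (fun p => ?_) (fun p => ?_) hF.norm ?_
  · refine (Continuous.aestronglyMeasurable ?_).mul hF.aestronglyMeasurable
    exact continuous_ex.comp (continuous_Th.comp (Continuous.prodMk_right p))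
  · exact Filter.Eventually.of_forall fun ξ => by rw [norm_mul, norm_ex, one_mul]
  · exact Filter.Eventually.of_forall fun ξ =>
      (continuous_ex.comp (continuous_Th.comp (Continuous.prodMk_left ξ))).mul continuous_const

/-- The maximal estimate for the extension operator with integrable data `F`. -/
lemma exists_maximal {r : ℝ} (hr : 3 / 4 < r) : ∃ A : ℝ≥0∞, A ≠ ⊤ ∧ ∀ F : ℝ × ℝ → ℂ,
    Integrable F →
      ∫⁻ x, (⨆ y : ℝ, ⨆ t ∈ Set.Icc (0 : ℝ) 1, ‖∫ ξ, ex (Th x y t ξ) * F ξ‖ₑ) ^ 2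
        ≤ A * ∫⁻ ξ : ℝ × ℝ, ENNReal.ofReal ((1 + ξ.1 ^ 2 + ξ.2 ^ 2) ^ r) * ‖F ξ‖ₑ ^ 2 := by
  obtain ⟨A, hA, hdual⟩ := exists_dual_weight hr
  refine ⟨A, hA, fun F hF => ?_⟩
  have hV := continuous_ex_integral hF
  set d : ℕ → ℝ × Set.Icc (0 : ℝ) 1 := TopologicalSpace.denseSeq _ with hd
  set f : ℕ → ℝ → ℝ≥0∞ := fun k x => ‖∫ ξ, ex (Th x (d k).1 (d k).2 ξ) * F ξ‖ₑ with hf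
  have hfm : ∀ k, Measurable (f k) := fun k =>
    (hV.comp (by fun_prop : Continuous fun x : ℝ => (x, (d k).1, ((d k).2 : ℝ)))).enorm.measurable
  have hsup : ∀ x, (⨆ y : ℝ, ⨆ t ∈ Set.Icc (0 : ℝ) 1, ‖∫ ξ, ex (Th x y t ξ) * F ξ‖ₑ)
      ≤ ⨆ k, f k x := by
    intro x
    refine iSup_le fun y => iSup₂_le fun t ht => ?_
    have hc : Continuous fun p : ℝ × Set.Icc (0 : ℝ) 1 =>
        ‖∫ ξ, ex (Th x p.1 p.2 ξ) * F ξ‖ₑ :=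
      (hV.comp (by fun_prop :
        Continuous fun p : ℝ × Set.Icc (0 : ℝ) 1 => (x, p.1, (p.2 : ℝ)))).enorm
    exact (TopologicalSpace.denseRange_denseSeq _).induction_on
      (p := fun p : ℝ × Set.Icc (0 : ℝ) 1 => ‖∫ ξ, ex (Th x p.1 p.2 ξ) * F ξ‖ₑ ≤ ⨆ k, f k x)
      (y, ⟨t, ht⟩) (isClosed_le hc continuous_const) fun k => le_iSup (fun k => f k x) k
  refine (lintegral_mono fun x => pow_le_pow_left' (hsup x) 2).trans ?_
  refine lintegral_iSup_sq_le hfm fun j hj R => ?_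
  have hY : Measurable fun x => (d (j x)).1 := (measurable_from_top (f := fun k => (d k).1)).comp hj
  have hT : Measurable fun x => ((d (j x)).2 : ℝ) :=
    (measurable_from_top (f := fun k => ((d k).2 : ℝ))).comp hj
  exact linearized_bound hY hT (hdual _ _ hY hT fun x => (d (j x)).2.2) hF measurableSet_Icc
    (by simp)

lemma U_eq (t : ℝ) (φ : ℝ × ℝ → ℂ) (x y : ℝ) :
    U t φ (x, y) = ∫ ξ, ex (Th x y t ξ) * FT φ ξ := by
  unfold U FTinv
  congr 1; ext ξ
  rw [Th, ex_add]
  simp only [ex]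
  rw [mul_comm Complex.I, mul_assoc (Complex.exp _)]

/-- `L²_{x₁} L^∞_{x₂ T}` maximal function estimate for the free ZK group. -/
theorem stmt1 (r : ℝ) (hr : 3/4 < r) :
    ∃ C : ℝ, 0 < C ∧ ∀ T : ℝ, 0 ≤ T → T ≤ 1 → ∀ φ : SchwartzMap (ℝ × ℝ) ℂ,
      L2x1LinfNorm T (fun t => U t ⇑φ) ≤ ENNReal.ofReal C * HsNorm r ⇑φ := by
  obtain ⟨A, hA, hmax⟩ := exists_maximal hr
  have hA' : A ^ ((1 : ℝ) / 2) ≠ ⊤ := ENNReal.rpow_ne_top_of_nonneg (by norm_num) hA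
  refine ⟨(A ^ ((1 : ℝ) / 2)).toReal + 1, by positivity, fun T hT0 hT1 φ => ?_⟩
  by_cases hF : Integrable (FT φ)
  · calc L2x1LinfNorm T (fun t => U t ⇑φ)
        ≤ (∫⁻ x, (⨆ y : ℝ, ⨆ t ∈ Set.Icc (0 : ℝ) 1, ‖∫ ξ, ex (Th x y t ξ) * FT φ ξ‖ₑ) ^ 2)
            ^ ((1 : ℝ) / 2) := by
          unfold L2x1LinfNorm
          gcongr with x
          rw [ENNReal.rpow_two]
          gcongr with y t
          refine iSup_le fun ht => ?_
          beta_reduce; rw [U_eq]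
          exact le_iSup_of_le ⟨ht.1, ht.2.trans hT1⟩ le_rfl
      _ ≤ (A * ∫⁻ ξ : ℝ × ℝ, ENNReal.ofReal ((1 + ξ.1 ^ 2 + ξ.2 ^ 2) ^ r) * ‖FT φ ξ‖ₑ ^ 2)
            ^ ((1 : ℝ) / 2) := by gcongr; exact hmax _ hF
      _ = A ^ ((1 : ℝ) / 2) * HsNorm r φ := by
          rw [ENNReal.mul_rpow_of_nonneg _ _ (by norm_num)]
          simp only [HsNorm, ENNReal.rpow_two]
          rfl
      _ ≤ _ := by
          gcongr
          rw [ENNReal.ofReal_add (by positivity) (by norm_num), ENNReal.ofReal_toReal hA']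
          exact le_self_add
  · -- Without integrability of `FT φ` the integral defining `U t φ` takes its junk value `0`.
    have hU : ∀ t x y, U t φ (x, y) = 0 := fun t x y => by
      rw [U_eq]
      refine integral_undef fun h => hF ?_
      have hc : Continuous fun ξ => ex (-Th x y t ξ) := continuous_ex.comp
        (continuous_Th.comp (Continuous.prodMk_right (x, y, t))).neg
      refine (h.bdd_mul (c := 1) hc.aestronglyMeasurable
        (Filter.Eventually.of_forall fun ξ => (norm_ex _).le)).congr
        (Filter.Eventually.of_forall fun ξ => ?_)
      simp only
      rw [← mul_assoc, ← ex_add, neg_add_cancel]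
      simp [ex]
    simp [L2x1LinfNorm, hU]
end
end

section
/- There exists a constant C > 0 such that for every T with 0 ≤ T ≤ 1 and every Schwartz function φ₀ on ℝ² (Kato smoothing effect): sup_{x₁ ∈ ℝ} (∫_ℝ ∫₀^T |∂_{x₁}(U(t)φ₀)(x₁,x₂)|² dt dx₂)^{1/2} ≤ C ‖φ₀‖_{L²(ℝ²)}. -/
/-!
Fix `x₁`. With `Φ = FT φ`, differentiating under the integral sign gives
`∂_{x₁} U(t)φ(x₁, x₂) = ∫ e^{2πi x₂ξ₂} e^{itξ₁(ξ₁² + ξ₂²)} a(ξ) dξ`, where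
`a(ξ) = e^{2πi x₁ξ₁} 2πiξ₁ Φ(ξ)` is integrable. Plancherel in `x₂` (for fixed `t`) leaves the `L²`
norm in `(t, ξ₂)` of the inner integral over `ξ₁`. For fixed `ξ₂ ≠ 0` the map
`ξ₁ ↦ ξ₁(ξ₁² + ξ₂²)` is a diffeomorphism of `ℝ` with derivative `3ξ₁² + ξ₂²`, so that this inner
integral is a Fourier integral in the new variable, and Plancherel in `t` over the whole line
(`smoothing_1d`) yields
`∫ 2π |a(ξ)|² / (3ξ₁² + ξ₂²) dξ ≤ (8π³/3) ∫ |Φ|² = (8π³/3) ‖φ‖²`.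

The frequency-side functions are only known to be integrable, hence the form of Plancherel needed
is `∫ |Ĝ|² ≤ ∫ |G|²` in `[0, ∞]` for integrable `G` (`plancherel_le`).
-/

open MeasureTheory
open scoped ENNReal NNReal

noncomputable section

open scoped FourierTransform SchwartzMap ContDiff

/-- One half of Plancherel for the Fourier integral of an integrable function. When the right-hand side
is finite, the `L²` Fourier transform of `G` agrees almost everywhere with the Fourier integral,
because both define the same distribution; when it is infinite there is nothing to prove. -/
theorem plancherel_le (G : ℝ → ℂ) (hG : Integrable G) :
    ∫⁻ t, ‖𝓕 G t‖ₑ ^ 2 ≤ ∫⁻ x, ‖G x‖ₑ ^ 2 := by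
  by_cases hfin : ∫⁻ x, ‖G x‖ₑ ^ 2 = ⊤
  · simp [hfin]
  have hmem : MemLp G 2 volume := by
    refine ⟨hG.1, ?_⟩
    rw [eLpNorm_lt_top_iff_lintegral_rpow_enorm_lt_top (by norm_num) (by norm_num)]
    simpa using lt_top_iff_ne_top.2 hfin
  set g : Lp ℂ 2 (volume : Measure ℝ) := hmem.toLp G with hg
  -- Test both sides against smooth compactly supported functions and move the transform over.
  have key : ∀ᵐ x : ℝ, (𝓕 g : Lp ℂ 2 (volume : Measure ℝ)) x = 𝓕 G x := by
    apply ae_eq_of_integral_contDiff_smul_eq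
    · exact (Lp.memLp _).locallyIntegrable (by norm_num)
    · exact (VectorFourier.fourierIntegral_continuous Real.continuous_fourierChar
        (by fun_prop) hG).locallyIntegrable
    intro ψ hψ hψc
    have h1 : HasCompactSupport (Complex.ofRealCLM ∘ ψ) := hψc.comp_left rfl
    have h2 : ContDiff ℝ ∞ (Complex.ofRealCLM ∘ ψ) := by fun_prop
    set Ψ : 𝓢(ℝ, ℂ) := h1.toSchwartzMap h2 with hΨ
    have h3 := DFunLike.congr_fun (Lp.fourier_toTemperedDistribution_eq g) Ψ
    rw [TemperedDistribution.fourier_apply, Lp.toTemperedDistribution_apply,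
      Lp.toTemperedDistribution_apply] at h3
    have h4 : ∫ x, (𝓕 Ψ) x • g x = ∫ x, (𝓕 Ψ) x • G x := by
      apply integral_congr_ae
      filter_upwards [hmem.coeFn_toLp] with x hx
      rw [hx]
    have h5 : ∫ x, (𝓕 Ψ) x • G x = ∫ x, Ψ x • 𝓕 G x := by
      have := VectorFourier.integral_fourierIntegral_smul_eq_flip (L := innerₗ ℝ)
        Real.continuous_fourierChar continuous_inner (Ψ.integrable (μ := volume)) hG
      have hf : (innerₗ ℝ : ℝ →ₗ[ℝ] ℝ →ₗ[ℝ] ℝ).flip = innerₗ ℝ := flip_innerₗ ℝ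
      rw [hf] at this
      exact this
    rw [h4, h5] at h3
    simpa [hΨ] using h3.symm
  have e1 : ∫⁻ t, ‖𝓕 G t‖ₑ ^ 2 = ‖(𝓕 g : Lp ℂ 2 (volume : Measure ℝ))‖ₑ ^ 2 := by
    rw [Lp.enorm_def, eLpNorm_congr_ae key,
      eLpNorm_eq_lintegral_rpow_enorm_toReal (by norm_num) (by norm_num),
      ← ENNReal.rpow_natCast, ← ENNReal.rpow_mul]
    simp
  have e2 : ∫⁻ t, ‖G t‖ₑ ^ 2 = ‖g‖ₑ ^ 2 := by
    rw [Lp.enorm_def, eLpNorm_congr_ae hmem.coeFn_toLp,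
      eLpNorm_eq_lintegral_rpow_enorm_toReal (by norm_num) (by norm_num),
      ← ENNReal.rpow_natCast, ← ENNReal.rpow_mul]
    simp
  rw [e1, e2, ← ofReal_norm, ← ofReal_norm, Lp.norm_fourier_eq]

/-- `plancherel_le` with the kernel `e^{2πitx}` that occurs in `FTinv`. -/
theorem plancherel_exp_le (G : ℝ → ℂ) (hG : Integrable G) :
    ∫⁻ t : ℝ, ‖∫ x : ℝ, Complex.exp (((2 * Real.pi * (t * x) : ℝ) : ℂ) * Complex.I) * G x‖ₑ ^ 2
      ≤ ∫⁻ x, ‖G x‖ₑ ^ 2 := by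
  have h (t : ℝ) : ∫ x : ℝ, Complex.exp (((2 * Real.pi * (t * x) : ℝ) : ℂ) * Complex.I) * G x
      = 𝓕 G (-t) := by
    rw [Real.fourier_real_eq_integral_exp_smul]
    congr 1 with x
    simp only [smul_eq_mul]
    congr 3
    push_cast; ring
  simp_rw [h]
  have hneg := (Measure.measurePreserving_neg (volume : Measure ℝ)).lintegral_comp_emb
    (MeasurableEquiv.neg ℝ).measurableEmbedding (fun t => ‖𝓕 G t‖ₑ ^ 2)
  rw [hneg]
  exact plancherel_le G hG

open Real in
/-- The one-dimensional smoothing estimate at transverse frequency `y ≠ 0`. The substitution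
`τ = x(x² + y²)/(2π)`, a diffeomorphism of the line, turns the oscillatory integral into a Fourier
integral in `τ`; the reciprocal Jacobian that remains after Plancherel is the gain. -/
theorem smoothing_1d (y : ℝ) (hy : y ≠ 0) (g : ℝ → ℂ) (hg : Integrable g) :
    ∫⁻ t : ℝ, ‖∫ x : ℝ, Complex.exp (Complex.I * ((t * x * (x ^ 2 + y ^ 2) : ℝ) : ℂ)) * g x‖ₑ ^ 2
      ≤ ∫⁻ x, ENNReal.ofReal (2 * π / (3 * x ^ 2 + y ^ 2)) * ‖g x‖ₑ ^ 2 := by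
  set p : ℝ → ℝ := fun x => x * (x ^ 2 + y ^ 2) / (2 * π) with hp
  set p' : ℝ → ℝ := fun x => (3 * x ^ 2 + y ^ 2) / (2 * π) with hp'
  have hpi : 0 < 2 * π := by positivity
  have hpos (x : ℝ) : 0 < p' x := by
    have : 0 < y ^ 2 := by positivity
    simp only [hp']; positivity
  have hd (x : ℝ) : HasDerivAt p (p' x) x := by
    have := ((hasDerivAt_id x).mul (((hasDerivAt_id x).pow 2).add_const (y ^ 2))).div_const (2 * π)
    convert! this using 1
    simp [hp']; ring
  have hmono : StrictMono p := strictMono_of_hasDerivAt_pos hd hpos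
  have hcont : Continuous p := by fun_prop
  have hsurj : Function.Surjective p := by
    intro z
    have hc : 0 < y ^ 2 / (2 * π) := by positivity
    set R : ℝ := |z| / (y ^ 2 / (2 * π)) with hR
    have hR0 : 0 ≤ R := by positivity
    have hRz : R * (y ^ 2 / (2 * π)) = |z| := div_mul_cancel₀ _ hc.ne'
    have hle : |z| ≤ p R := by
      rw [← hRz]
      simp only [hp]
      rw [← mul_div_assoc]
      gcongr
      nlinarith [sq_nonneg R]
    have hodd : p (-R) = -p R := by simp only [hp]; ring
    refine mem_range_of_exists_le_of_exists_ge hcont ⟨-R, ?_⟩ ⟨R, ?_⟩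
    · rw [hodd]; linarith [neg_abs_le z]
    · exact (le_abs_self z).trans hle
  obtain ⟨q, hq⟩ := hmono.injective.hasLeftInverse
  -- `G` is the density of `g` in the variable `τ = p x`, so that `p' x • G (p x) = g x`.
  set G : ℝ → ℂ := fun τ => ((p' (q τ))⁻¹ : ℝ) • g (q τ) with hGdef
  have hGp (x : ℝ) : |p' x| • G (p x) = g x := by
    simp only [hGdef, hq x, abs_of_pos (hpos x), smul_smul]
    rw [mul_inv_cancel₀ (hpos x).ne', one_smul]
  have himg : p '' Set.univ = Set.univ := by rw [Set.image_univ, hsurj.range_eq]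
  have hdw : ∀ x ∈ Set.univ, HasDerivWithinAt p (p' x) Set.univ x :=
    fun x _ => (hd x).hasDerivWithinAt
  have hG : Integrable G := by
    have := integrableOn_image_iff_integrableOn_abs_deriv_smul MeasurableSet.univ hdw
      hmono.injective.injOn G
    rw [himg] at this
    simp only [hGp, integrableOn_univ] at this
    exact this.2 hg
  have h1 (t : ℝ) : ∫ x : ℝ, Complex.exp (Complex.I * ((t * x * (x ^ 2 + y ^ 2) : ℝ) : ℂ)) * g x
      = ∫ x : ℝ, Complex.exp (((2 * Real.pi * (t * x) : ℝ) : ℂ) * Complex.I) * G x := by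
    have := integral_image_eq_integral_abs_deriv_smul MeasurableSet.univ hdw
      hmono.injective.injOn
      (fun x => Complex.exp (((2 * Real.pi * (t * x) : ℝ) : ℂ) * Complex.I) * G x)
    rw [himg] at this
    simp only [Measure.restrict_univ] at this
    rw [this]
    congr 1 with x
    rw [← mul_smul_comm, hGp, mul_comm Complex.I]
    congr 4
    simp only [hp]; field_simp
  simp_rw [h1]
  refine (plancherel_exp_le G hG).trans (le_of_eq ?_)
  have := lintegral_image_eq_lintegral_abs_deriv_mul MeasurableSet.univ hdw
      hmono.injective.injOn (fun x => ‖G x‖ₑ ^ 2)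
  rw [himg] at this
  simp only [Measure.restrict_univ] at this
  rw [this]
  congr 1 with x
  have h2 : ‖g x‖ₑ = ENNReal.ofReal (p' x) * ‖G (p x)‖ₑ := by
    rw [← hGp x, enorm_smul, Real.enorm_eq_ofReal_abs, abs_abs, abs_of_pos (hpos x)]
  have h3 : 2 * π / (3 * x ^ 2 + y ^ 2) = (p' x)⁻¹ := by simp [hp']
  rw [h2, h3, mul_pow, ← mul_assoc, abs_of_pos (hpos x), ← ENNReal.ofReal_pow (hpos x).le,
    ← ENNReal.ofReal_mul (by have := hpos x; positivity)]
  congr 2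
  have := (hpos x).ne'
  field_simp

/-- `FT` maps Schwartz functions to Schwartz functions and preserves the `L²` norm. The product `ℝ × ℝ`
carries the sup norm, so Mathlib's transform is taken on the isomorphic inner product space
`WithLp 2 (ℝ × ℝ)`, whose volume corresponds to the product measure. -/
theorem FT_schwartz (φ : 𝓢(ℝ × ℝ, ℂ)) :
    ∃ Φ : 𝓢(ℝ × ℝ, ℂ), FT φ = Φ ∧ ∫⁻ ξ, ‖Φ ξ‖ₑ ^ 2 = eLpNorm φ 2 volume ^ 2 := by
  let e : WithLp 2 (ℝ × ℝ) ≃L[ℝ] ℝ × ℝ := WithLp.prodContinuousLinearEquiv 2 ℝ ℝ ℝ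
  let φ' : 𝓢(WithLp 2 (ℝ × ℝ), ℂ) := SchwartzMap.compCLMOfContinuousLinearEquiv ℂ e φ
  let Φ : 𝓢(ℝ × ℝ, ℂ) := SchwartzMap.compCLMOfContinuousLinearEquiv ℂ e.symm (𝓕 φ')
  have mpo := WithLp.volume_preserving_ofLp ℝ ℝ
  have mpt := WithLp.volume_preserving_toLp ℝ ℝ
  have emt : MeasurableEmbedding (WithLp.toLp 2 : ℝ × ℝ → WithLp 2 (ℝ × ℝ)) :=
    (MeasurableEquiv.toLp 2 (ℝ × ℝ)).measurableEmbedding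
  have emo : MeasurableEmbedding (WithLp.ofLp : WithLp 2 (ℝ × ℝ) → ℝ × ℝ) :=
    (MeasurableEquiv.toLp 2 (ℝ × ℝ)).symm.measurableEmbedding
  refine ⟨Φ, ?_, ?_⟩
  · ext ξ
    have h1 : Φ ξ = 𝓕 (φ' : WithLp 2 (ℝ × ℝ) → ℂ) (WithLp.toLp 2 ξ) := rfl
    rw [h1, Real.fourier_eq', ← mpt.integral_comp emt]
    simp only [FT]
    congr 1 with x
    have h2 : φ' (WithLp.toLp 2 x) = φ x := rfl
    rw [h2, smul_eq_mul]
    congr 3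
    simp [WithLp.prod_inner_apply]
    ring
  · have h1 : ∫⁻ ξ, ‖Φ ξ‖ₑ ^ 2 = ∫⁻ v, ‖(𝓕 φ') v‖ₑ ^ 2 :=
      mpt.lintegral_comp_emb emt (fun v => ‖(𝓕 φ') v‖ₑ ^ 2)
    have h2 : ∫⁻ ξ, ‖φ' ξ‖ₑ ^ 2 = ∫⁻ v, ‖φ v‖ₑ ^ 2 :=
      mpo.lintegral_comp_emb emo (fun v => ‖φ v‖ₑ ^ 2)
    have h3 : ∫⁻ v, ‖(𝓕 φ') v‖ₑ ^ 2 = ∫⁻ v, ‖φ' v‖ₑ ^ 2 := by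
      have h4 (f : 𝓢(WithLp 2 (ℝ × ℝ), ℂ)) :
          ∫⁻ v, ‖f v‖ₑ ^ 2 = ENNReal.ofReal (∫ v, ‖f v‖ ^ 2) := by
        rw [ofReal_integral_eq_lintegral_ofReal]
        · congr 1 with v
          rw [ENNReal.ofReal_pow (norm_nonneg _), ofReal_norm]
        · exact (f.memLp 2).integrable_norm_pow (by norm_num)
        · exact Filter.Eventually.of_forall fun v => by positivity
      rw [h4, h4, SchwartzMap.integral_norm_sq_fourier]
    rw [h1, h3, h2, eLpNorm_eq_lintegral_rpow_enorm_toReal (by norm_num) (by norm_num),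
      ← ENNReal.rpow_natCast, ← ENNReal.rpow_mul]
    simp

/-- The multiplier `e^{itξ₁(ξ₁² + ξ₂²)}` of the group `U t`. -/
def phase (t : ℝ) (ξ : ℝ × ℝ) : ℂ :=
  Complex.exp (Complex.I * ((t * ξ.1 * (ξ.1 ^ 2 + ξ.2 ^ 2) : ℝ) : ℂ))

theorem norm_phase (t : ℝ) (ξ : ℝ × ℝ) : ‖phase t ξ‖ = 1 := by
  rw [phase, mul_comm, Complex.norm_exp_ofReal_mul_I]

theorem continuous_phase : Continuous fun q : ℝ × (ℝ × ℝ) => phase q.1 q.2 := by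
  unfold phase
  fun_prop

/-- The amplitude `e^{2πix₁ξ₁} · 2πiξ₁ · Φ(ξ)`: the part of the integrand of `∂_{x₁} U(t)φ` that
depends neither on `t` nor on `x₂`, where `Φ = FT φ`. -/
def amp (Φ : 𝓢(ℝ × ℝ, ℂ)) (x₁ : ℝ) (ξ : ℝ × ℝ) : ℂ :=
  Complex.exp (((2 * Real.pi * (x₁ * ξ.1) : ℝ) : ℂ) * Complex.I) *
    (2 * Real.pi * Complex.I * ξ.1 * Φ ξ)

theorem continuous_amp (Φ : 𝓢(ℝ × ℝ, ℂ)) (x₁ : ℝ) : Continuous (amp Φ x₁) := by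
  have := Φ.continuous
  unfold amp
  fun_prop

theorem norm_amp (Φ : 𝓢(ℝ × ℝ, ℂ)) (x₁ : ℝ) (ξ : ℝ × ℝ) :
    ‖amp Φ x₁ ξ‖ = 2 * Real.pi * |ξ.1| * ‖Φ ξ‖ := by
  rw [amp, norm_mul, Complex.norm_exp_ofReal_mul_I]
  simp [abs_of_pos Real.pi_pos]

theorem integrable_amp (Φ : 𝓢(ℝ × ℝ, ℂ)) (x₁ : ℝ) : Integrable (amp Φ x₁) := by
  refine ((Φ.integrable_pow_mul volume 1).const_mul (2 * Real.pi)).mono'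
    (continuous_amp Φ x₁).aestronglyMeasurable (Filter.Eventually.of_forall fun ξ => ?_)
  rw [norm_amp, pow_one, mul_assoc]
  gcongr
  exact norm_fst_le ξ

/-- Differentiation under the integral sign defining `U t φ`. -/
theorem pd1_U (φ Φ : 𝓢(ℝ × ℝ, ℂ)) (h : FT φ = Φ) (t x₁ x₂ : ℝ) :
    pd1 (U t φ) (x₁, x₂) = ∫ ξ : ℝ × ℝ,
      Complex.exp (((2 * Real.pi * (x₂ * ξ.2) : ℝ) : ℂ) * Complex.I) *
        (phase t ξ * amp Φ x₁ ξ) := by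
  -- Minus the dot product, because `VectorFourier` uses the kernel `e^{-2πi L v w}`.
  let L : (ℝ × ℝ) →L[ℝ] (ℝ × ℝ) →L[ℝ] ℝ :=
    -((ContinuousLinearMap.mul ℝ ℝ).bilinearComp (.fst ℝ ℝ ℝ) (.fst ℝ ℝ ℝ) +
      (ContinuousLinearMap.mul ℝ ℝ).bilinearComp (.snd ℝ ℝ ℝ) (.snd ℝ ℝ ℝ))
  have hL (v w : ℝ × ℝ) : L v w = -(v.1 * w.1 + v.2 * w.2) := by simp [L]
  let F : ℝ × ℝ → ℂ := fun ξ => phase t ξ * Φ ξ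
  have hFn (ξ : ℝ × ℝ) : ‖F ξ‖ = ‖Φ ξ‖ := by simp [F, norm_phase]
  have hFc : Continuous F :=
    (continuous_phase.comp (Continuous.prodMk_right t)).mul Φ.continuous
  have hF : Integrable F :=
    Φ.integrable.mono hFc.aestronglyMeasurable (Filter.Eventually.of_forall fun ξ => (hFn ξ).le)
  have hF' : Integrable (fun ξ : ℝ × ℝ => ‖ξ‖ * ‖F ξ‖) := by
    simpa [hFn] using Φ.integrable_pow_mul volume 1
  have hU : U t φ = VectorFourier.fourierIntegral Real.fourierChar volume L.toLinearMap₁₂ F := by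
    ext x
    simp only [U, FTinv, VectorFourier.fourierIntegral, h]
    congr 1 with ξ
    rw [Circle.smul_def, Real.fourierChar_apply, smul_eq_mul]
    have hLξ : L.toLinearMap₁₂ ξ x = -(ξ.1 * x.1 + ξ.2 * x.2) := hL ξ x
    simp only [hLξ, F, phase]
    congr 4
    ring
  have hint : Integrable (fun ξ => Real.fourierChar (-L ξ (x₁, x₂)) •
      VectorFourier.fourierSMulRight L F ξ) := by
    refine (VectorFourier.fourierIntegral_convergent_iff (L := L.toLinearMap₁₂)
      Real.continuous_fourierChar L.continuous₂ (x₁, x₂)).2 ?_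
    refine (hF'.const_mul (2 * Real.pi * ‖L‖)).mono' hF.1.fourierSMulRight
      (Filter.Eventually.of_forall fun ξ => ?_)
    simpa [mul_assoc] using VectorFourier.norm_fourierSMulRight_le L F ξ
  rw [pd1, hU, VectorFourier.fderiv_fourierIntegral L hF hF', VectorFourier.fourierIntegral]
  refine (ContinuousLinearMap.integral_apply hint (1, 0)).trans ?_
  congr 1 with ξ
  simp only [Circle.smul_def, smul_apply, Real.fourierChar_apply,
    VectorFourier.fourierSMulRight_apply, hL, F, amp, smul_eq_mul, Complex.real_smul]
  have : Complex.exp (((2 * Real.pi * - -(ξ.1 * x₁ + ξ.2 * x₂) : ℝ) : ℂ) * Complex.I) =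
      Complex.exp (((2 * Real.pi * (x₂ * ξ.2) : ℝ) : ℂ) * Complex.I) *
      Complex.exp (((2 * Real.pi * (x₁ * ξ.1) : ℝ) : ℂ) * Complex.I) := by
    rw [← Complex.exp_add]
    congr 1
    push_cast; ring
  rw [this]
  push_cast
  ring

/-- The integral over `ξ₁` alone, at fixed `ξ₂ = y`: the Fourier transform of `∂_{x₁} U(t)φ(x₁, ·)`
in the second variable. -/
def slice (Φ : 𝓢(ℝ × ℝ, ℂ)) (x₁ t y : ℝ) : ℂ := ∫ x : ℝ, phase t (x, y) * amp Φ x₁ (x, y)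

theorem integrable_phase_mul_amp (Φ : 𝓢(ℝ × ℝ, ℂ)) (x₁ t : ℝ) :
    Integrable (fun ξ => phase t ξ * amp Φ x₁ ξ) :=
  (integrable_amp Φ x₁).mono
    (((continuous_phase.comp (Continuous.prodMk_right t)).mul
      (continuous_amp Φ x₁)).aestronglyMeasurable)
    (Filter.Eventually.of_forall fun ξ => by simp [norm_phase])

theorem pd1_U_slice (φ Φ : 𝓢(ℝ × ℝ, ℂ)) (h : FT φ = Φ) (t x₁ x₂ : ℝ) :
    pd1 (U t φ) (x₁, x₂) = ∫ y : ℝ,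
      Complex.exp (((2 * Real.pi * (x₂ * y) : ℝ) : ℂ) * Complex.I) * slice Φ x₁ t y := by
  have hint : Integrable (fun ξ : ℝ × ℝ =>
      Complex.exp (((2 * Real.pi * (x₂ * ξ.2) : ℝ) : ℂ) * Complex.I) *
        (phase t ξ * amp Φ x₁ ξ)) := by
    refine (integrable_phase_mul_amp Φ x₁ t).mono ?_ (Filter.Eventually.of_forall fun ξ => ?_)
    · exact (Continuous.aestronglyMeasurable (by fun_prop)).mul
        (integrable_phase_mul_amp Φ x₁ t).1
    · rw [norm_mul, Complex.norm_exp_ofReal_mul_I, one_mul]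
  rw [pd1_U φ Φ h, Measure.volume_eq_prod, integral_prod_symm _ hint]
  congr 1 with y
  rw [slice, ← integral_const_mul]

theorem measurable_slice (Φ : 𝓢(ℝ × ℝ, ℂ)) (x₁ : ℝ) :
    StronglyMeasurable (fun q : ℝ × ℝ => slice Φ x₁ q.1 q.2) := by
  have : Continuous (fun r : (ℝ × ℝ) × ℝ =>
      phase r.1.1 (r.2, r.1.2) * amp Φ x₁ (r.2, r.1.2)) :=
    (continuous_phase.comp (by fun_prop : Continuous
      fun r : (ℝ × ℝ) × ℝ => (r.1.1, (r.2, r.1.2)))).mul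
    ((continuous_amp Φ x₁).comp (by fun_prop))
  exact this.stronglyMeasurable.integral_prod_right

/-- The estimate at fixed `x₁`, global in time: Plancherel in `x₂`, then `smoothing_1d` in `t`, where
the factor `ξ₁²` coming from the derivative is absorbed by the Jacobian since
`ξ₁² / (3ξ₁² + ξ₂²) ≤ 1/3`. -/
theorem kato_fixed (φ Φ : 𝓢(ℝ × ℝ, ℂ)) (h : FT φ = Φ) (x₁ : ℝ) :
    ∫⁻ x₂ : ℝ, ∫⁻ t : ℝ, ‖pd1 (U t φ) (x₁, x₂)‖ₑ ^ 2
      ≤ ENNReal.ofReal (8 * Real.pi ^ 3 / 3) * ∫⁻ ξ, ‖Φ ξ‖ₑ ^ 2 := by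
  have hm : StronglyMeasurable (fun q : ℝ × ℝ => pd1 (U q.2 φ) (x₁, q.1)) := by
    simp_rw [pd1_U_slice φ Φ h]
    have h1 : StronglyMeasurable (fun r : (ℝ × ℝ) × ℝ =>
        Complex.exp (((2 * Real.pi * (r.1.1 * r.2) : ℝ) : ℂ) * Complex.I) *
          slice Φ x₁ r.1.2 r.2) :=
      (Continuous.stronglyMeasurable (by fun_prop)).mul
        ((measurable_slice Φ x₁).comp_measurable
          (by fun_prop : Measurable fun r : (ℝ × ℝ) × ℝ => (r.1.2, r.2)))
    exact h1.integral_prod_right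
  have hm2 := (measurable_slice Φ x₁).enorm.pow_const 2
  calc ∫⁻ x₂ : ℝ, ∫⁻ t : ℝ, ‖pd1 (U t φ) (x₁, x₂)‖ₑ ^ 2
      = ∫⁻ t : ℝ, ∫⁻ x₂ : ℝ, ‖pd1 (U t φ) (x₁, x₂)‖ₑ ^ 2 :=
        lintegral_lintegral_swap (hm.enorm.pow_const 2).aemeasurable
    _ ≤ ∫⁻ t : ℝ, ∫⁻ y : ℝ, ‖slice Φ x₁ t y‖ₑ ^ 2 := by
        refine lintegral_mono fun t => ?_
        simp_rw [pd1_U_slice φ Φ h]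
        exact plancherel_exp_le _ (integrable_phase_mul_amp Φ x₁ t).integral_prod_right
    _ = ∫⁻ y : ℝ, ∫⁻ t : ℝ, ‖slice Φ x₁ t y‖ₑ ^ 2 :=
        lintegral_lintegral_swap hm2.aemeasurable
    _ ≤ ∫⁻ y : ℝ, ∫⁻ x : ℝ, ENNReal.ofReal (8 * Real.pi ^ 3 / 3) * ‖Φ (x, y)‖ₑ ^ 2 := by
        refine lintegral_mono_ae ?_
        filter_upwards [(integrable_amp Φ x₁).prod_left_ae, Measure.ae_ne volume (0 : ℝ)]
          with y hy hy0
        refine (smoothing_1d y hy0 _ hy).trans (lintegral_mono fun x => ?_)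
        simp only [← ofReal_norm, norm_amp]
        rw [← ENNReal.ofReal_pow (by positivity), ← ENNReal.ofReal_pow (by positivity),
          ← ENNReal.ofReal_mul (by positivity), ← ENNReal.ofReal_mul (by positivity)]
        refine ENNReal.ofReal_le_ofReal ?_
        have : 0 < y ^ 2 := by positivity
        rw [mul_pow, mul_pow, sq_abs, ← mul_assoc]
        refine mul_le_mul_of_nonneg_right ?_ (by positivity)
        have h3 : x ^ 2 / (3 * x ^ 2 + y ^ 2) ≤ 1 / 3 := by
          rw [div_le_div_iff₀ (by positivity) (by positivity)]; linarith
        calc _ = 8 * Real.pi ^ 3 * (x ^ 2 / (3 * x ^ 2 + y ^ 2)) := by ring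
          _ ≤ 8 * Real.pi ^ 3 * (1 / 3) := by gcongr
          _ = _ := by ring
    _ = ENNReal.ofReal (8 * Real.pi ^ 3 / 3) * ∫⁻ ξ, ‖Φ ξ‖ₑ ^ 2 := by
        have hc : Measurable fun ξ : ℝ × ℝ => ‖Φ ξ‖ₑ ^ 2 :=
          (Φ.continuous.measurable.enorm).pow_const 2
        rw [← lintegral_const_mul _ hc, Measure.volume_eq_prod,
          lintegral_prod_symm' _ (hc.const_mul _)]

/-- Kato smoothing effect for the free ZK group. -/
theorem stmt2 :
    ∃ C : ℝ, 0 < C ∧ ∀ T : ℝ, 0 ≤ T → T ≤ 1 → ∀ φ : SchwartzMap (ℝ × ℝ) ℂ,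
      LinfX1L2Norm T (fun t => pd1 (U t ⇑φ)) ≤ ENNReal.ofReal C * eLpNorm (⇑φ) 2 volume := by
  refine ⟨√(8 * Real.pi ^ 3 / 3), by positivity, fun T _ _ φ => ?_⟩
  obtain ⟨Φ, hΦ, hnorm⟩ := FT_schwartz φ
  refine iSup_le fun x₁ => ?_
  rw [one_div, ENNReal.rpow_inv_le_iff (by norm_num)]
  calc ∫⁻ x₂ : ℝ, ∫⁻ t in Set.Icc (0:ℝ) T, (‖pd1 (U t φ) (x₁, x₂)‖₊ : ℝ≥0∞) ^ (2 : ℝ)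
      ≤ ∫⁻ x₂ : ℝ, ∫⁻ t : ℝ, ‖pd1 (U t φ) (x₁, x₂)‖ₑ ^ 2 := by
        refine lintegral_mono fun x₂ => ?_
        simp only [ENNReal.rpow_two]
        exact setLIntegral_le_lintegral _ _
    _ ≤ ENNReal.ofReal (8 * Real.pi ^ 3 / 3) * ∫⁻ ξ, ‖Φ ξ‖ₑ ^ 2 := kato_fixed φ Φ hΦ x₁
    _ = _ := by
        rw [hnorm, ENNReal.rpow_two, mul_pow, ← ENNReal.ofReal_pow (by positivity),
          Real.sq_sqrt (by positivity)]
end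
end

section
/- There exists a constant C > 0 such that for every T with 0 ≤ T ≤ 1 and every admissible source g on [0,T]×ℝ²: sup_{t ∈ [0,T]} ‖∂_{x₁} ∫₀^t U(t−τ) g(τ) dτ‖_{L²(ℝ²)} ≤ C ∫_ℝ (∫_ℝ ∫₀^T |g(τ,x₁,x₂)|² dτ dx₂)^{1/2} dx₁. -/
open MeasureTheory
open scoped ENNReal NNReal

noncomputable section

/-!
The estimate is the dual form of the local smoothing effect, proved here directly on the Fourier
side. Put `p(ξ) = ξ₁(ξ₁² + ξ₂²)`.

By Fubini the Duhamel integral is `FTinv` of `K(ξ) = ∫₀ᵗ e^{i(t-τ)p(ξ)} FT (g τ) ξ dτ`, and by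
Plancherel the `L²` norm of its `x₁`-derivative is at most that of `2π ξ₁ K(ξ)`. Writing the Fourier
transform in `x₁` as an integral and `g̃` for the partial Fourier transform in `x₂`,
`|K(ξ)| ≤ ∫ |B(x₁, ξ)| dx₁` with `B(x₁, ξ) = ∫₀ᵗ e^{-iτp(ξ)} g̃(τ, x₁, ξ₂) dτ` (`enorm_duhHat_le`).
Minkowski's inequality (`lintegral_sq_lintegral_le`) moves the `L²_ξ` norm inside the `x₁`-integral.

For fixed `x₁` and `ξ₂`, `B` is the Fourier transform in time of `1_{(0,t]} g̃` at the frequency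
`p(ξ)/2π`. Since `∂p/∂ξ₁ = 3ξ₁² + ξ₂² ≥ 3ξ₁²`, the change of variables `s = p(ξ)/2π` absorbs the
weight `ξ₁²`, and Plancherel in `τ` (`lintegral_phase_le`) followed by Plancherel in `x₂` bounds
`∫ |2πξ₁ B|² dξ` by `(8π³/3) ∫∫ |g|² dτ dx₂` (`Decay.lintegral_sliceInt_sq_le`).

The hypotheses on the source enter only through uniform decay of `g τ` and `FT (g τ)` in `τ`
(`Decay`), which justifies every exchange of integrals and the differentiation under the integral.
-/

open scoped FourierTransform SchwartzMap ContDiff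

/-! ### Plancherel for integrable functions -/

section Plancherel

variable {E : Type*} [NormedAddCommGroup E] [InnerProductSpace ℝ E] [FiniteDimensional ℝ E]
  [MeasurableSpace E] [BorelSpace E]

/-- On `L¹ ∩ L²` the Fourier integral agrees with the `L²` Fourier transform, because both represent
the same tempered distribution. -/
lemma fourier_ae_eq_Lp {f : E → ℂ} (hf : Integrable f) (hf2 : MemLp f 2) :
    𝓕 f =ᵐ[volume] (𝓕 (hf2.toLp f) : Lp (α := E) ℂ 2) := by
  have hcont : Continuous (𝓕 f) :=
    VectorFourier.fourierIntegral_continuous Real.continuous_fourierChar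
      (by exact continuous_inner) hf
  refine ae_eq_of_integral_contDiff_smul_eq hcont.locallyIntegrable
    ((Lp.memLp _).locallyIntegrable (by norm_num)) ?_
  intro φ hφ hφc
  have h1 : HasCompactSupport (fun x => (φ x : ℂ)) := hφc.comp_left (g := fun r : ℝ => (r : ℂ)) (by simp)
  have h2 : ContDiff ℝ ∞ (fun x => (φ x : ℂ)) := Complex.ofRealCLM.contDiff.comp hφ
  set ψ : 𝓢(E, ℂ) := h1.toSchwartzMap h2 with hψ
  have hψx : ∀ x, ψ x = φ x := fun x => rfl
  have key := congrArg (fun D => D ψ) (Lp.fourier_toTemperedDistribution_eq (hf2.toLp f))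
  simp only [TemperedDistribution.fourier_apply, Lp.toTemperedDistribution_apply] at key
  have e1 : ∫ x, φ x • 𝓕 f x = ∫ x, 𝓕 f x • ψ x := by
    refine integral_congr_ae (Filter.Eventually.of_forall fun x => ?_)
    simp [hψx, mul_comm]
  have e2 : ∫ x, 𝓕 f x • ψ x = ∫ x, f x • 𝓕 (ψ : E → ℂ) x :=
    by
      have := VectorFourier.integral_fourierIntegral_smul_eq_flip (L := innerₗ E) (μ := volume) (ν := volume)
        Real.continuous_fourierChar (by exact continuous_inner) hf ψ.integrable
      rw [flip_innerₗ] at this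
      exact this
  rw [e1, e2]
  have e3 : ∫ x, f x • 𝓕 (ψ : E → ℂ) x = ∫ x, (𝓕 ψ) x • (hf2.toLp f) x := by
    refine integral_congr_ae ?_
    filter_upwards [hf2.coeFn_toLp] with x hx
    rw [hx, SchwartzMap.fourier_coe, smul_eq_mul, smul_eq_mul, mul_comm]
  rw [e3, key]
  refine integral_congr_ae (Filter.Eventually.of_forall fun x => ?_)
  simp [hψx]

/-- Plancherel as an inequality valid for every integrable function: if `f ∉ L²` the right-hand
side is infinite. -/
lemma lintegral_fourier_sq_le {f : E → ℂ} (hf : Integrable f) :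
    ∫⁻ ξ, ‖𝓕 f ξ‖ₑ ^ 2 ≤ ∫⁻ x, ‖f x‖ₑ ^ 2 := by
  have h2 : ∀ h : E → ℂ, eLpNorm h 2 volume ^ 2 = ∫⁻ x, ‖h x‖ₑ ^ 2 := by
    intro h
    have := eLpNorm_nnreal_pow_eq_lintegral (p := 2) (f := h) (μ := volume) (by norm_num)
    simpa using this
  by_cases hf2 : MemLp f 2
  · rw [← h2, ← h2]
    gcongr
    rw [eLpNorm_congr_ae (fourier_ae_eq_Lp hf hf2)]
    have := Lp.norm_fourier_eq (hf2.toLp f)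
    rw [← eLpNorm_congr_ae hf2.coeFn_toLp, ← Lp.enorm_def, ← Lp.enorm_def, ← ofReal_norm, ← ofReal_norm, this]
  · have : eLpNorm f 2 volume = ⊤ := by
      by_contra hne
      exact hf2 ⟨hf.1, lt_top_iff_ne_top.2 hne⟩
    rw [← h2 f, this]
    simp

end Plancherel

/-! ### Transfer to `FT` and `FTinv` on `ℝ × ℝ` -/

section Transfer

/- `ℝ × ℝ` carries the sup norm, so facts about `𝓕` on inner product spaces are moved along the
volume-preserving identification with `WithLp 2 (ℝ × ℝ)`. -/

lemma FT_eq_fourier (f : ℝ × ℝ → ℂ) (ξ : ℝ × ℝ) :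
    FT f ξ = 𝓕 (fun v : WithLp 2 (ℝ × ℝ) => f v.ofLp) (WithLp.toLp 2 ξ) := by
  rw [Real.fourier_eq', FT]
  rw [← (WithLp.volume_preserving_ofLp ℝ ℝ).integral_comp
    (MeasurableEquiv.toLp 2 (ℝ × ℝ)).symm.measurableEmbedding]
  refine integral_congr_ae (Filter.Eventually.of_forall fun v => ?_)
  simp only [WithLp.prod_inner_apply, smul_eq_mul]
  congr 3
  simp
  ring

lemma FTinv_eq_fourier (f : ℝ × ℝ → ℂ) (x : ℝ × ℝ) :
    FTinv f x = 𝓕 (fun v : WithLp 2 (ℝ × ℝ) => f v.ofLp) (WithLp.toLp 2 (-x)) := by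
  rw [← FT_eq_fourier, FT, FTinv]
  refine integral_congr_ae (Filter.Eventually.of_forall fun v => ?_)
  dsimp only
  congr 3
  simp only [Prod.fst_neg, Prod.snd_neg]
  push_cast
  ring

lemma lintegral_FTinv_sq_le {f : ℝ × ℝ → ℂ} (hf : Integrable f) :
    ∫⁻ x, ‖FTinv f x‖ₑ ^ 2 ≤ ∫⁻ ξ, ‖f ξ‖ₑ ^ 2 := by
  have hme := (MeasurableEquiv.toLp 2 (ℝ × ℝ)).symm.measurableEmbedding
  have hp := WithLp.volume_preserving_ofLp ℝ ℝ
  have hf' : Integrable (fun v : WithLp 2 (ℝ × ℝ) => f v.ofLp) :=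
    (hp.integrable_comp_emb hme).2 hf
  have h := lintegral_fourier_sq_le hf'
  have e1 : ∫⁻ v : WithLp 2 (ℝ × ℝ), ‖f v.ofLp‖ₑ ^ 2 = ∫⁻ ξ, ‖f ξ‖ₑ ^ 2 :=
    hp.lintegral_comp_emb hme (fun ξ => ‖f ξ‖ₑ ^ 2)
  have e2 : ∫⁻ x, ‖FTinv f x‖ₑ ^ 2
      = ∫⁻ w, ‖𝓕 (fun v : WithLp 2 (ℝ × ℝ) => f v.ofLp) w‖ₑ ^ 2 := by
    simp_rw [FTinv_eq_fourier]
    rw [((Measure.measurePreserving_neg (volume : Measure (ℝ × ℝ)))).lintegral_comp_emb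
      (MeasurableEquiv.neg (ℝ × ℝ)).measurableEmbedding
      (fun x => ‖𝓕 (fun v : WithLp 2 (ℝ × ℝ) => f v.ofLp) (WithLp.toLp 2 x)‖ₑ ^ 2)]
    exact (WithLp.volume_preserving_toLp ℝ ℝ).lintegral_comp_emb
      (MeasurableEquiv.toLp 2 (ℝ × ℝ)).measurableEmbedding
      (fun w => ‖𝓕 (fun v : WithLp 2 (ℝ × ℝ) => f v.ofLp) w‖ₑ ^ 2)
  rw [e2, ← e1]
  exact h

/-- The Fourier transform `FT` acts continuously on Schwartz functions. -/
lemma exists_FT_clm : ∃ Φ : 𝓢(ℝ × ℝ, ℂ) →L[ℂ] 𝓢(ℝ × ℝ, ℂ),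
    ∀ (f : 𝓢(ℝ × ℝ, ℂ)) (ξ : ℝ × ℝ), Φ f ξ = FT f ξ := by
  let e := WithLp.prodContinuousLinearEquiv 2 ℝ ℝ ℝ
  refine ⟨(SchwartzMap.compCLMOfContinuousLinearEquiv ℂ e.symm).comp
    ((FourierTransform.fourierCLM ℂ 𝓢(WithLp 2 (ℝ × ℝ), ℂ)).comp
      (SchwartzMap.compCLMOfContinuousLinearEquiv ℂ e)), fun f ξ => ?_⟩
  rw [FT_eq_fourier]
  rfl

/-- The pairing `(ξ, x) ↦ -(x₁ξ₁ + x₂ξ₂)`, for which `VectorFourier.fourierIntegral` is `FTinv`. -/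
def negDot : (ℝ × ℝ) →L[ℝ] (ℝ × ℝ) →L[ℝ] ℝ :=
  -((ContinuousLinearMap.mul ℝ ℝ).bilinearComp (.fst ℝ ℝ ℝ) (.fst ℝ ℝ ℝ)
    + (ContinuousLinearMap.mul ℝ ℝ).bilinearComp (.snd ℝ ℝ ℝ) (.snd ℝ ℝ ℝ))

lemma negDot_apply (ξ x : ℝ × ℝ) : negDot ξ x = -(ξ.1 * x.1 + ξ.2 * x.2) := by
  simp [negDot]

lemma FTinv_eq_vector (f : ℝ × ℝ → ℂ) :
    FTinv f = VectorFourier.fourierIntegral Real.fourierChar volume negDot.toLinearMap₁₂ f := by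
  ext x
  rw [FTinv, VectorFourier.fourierIntegral]
  refine integral_congr_ae (Filter.Eventually.of_forall fun v => ?_)
  have : negDot.toLinearMap₁₂ v x = negDot v x := rfl
  simp only [this, negDot_apply, Circle.smul_def, Real.fourierChar_apply, smul_eq_mul]
  congr 4
  ring

lemma pd1_FTinv {K : ℝ × ℝ → ℂ} (hK : Integrable K)
    (hK' : Integrable (fun ξ => ‖ξ‖ * ‖K ξ‖)) :
    pd1 (FTinv K) = FTinv (fun ξ => (2 * Real.pi * Complex.I * ξ.1) * K ξ) := by
  ext x
  rw [pd1, FTinv_eq_vector, VectorFourier.fderiv_fourierIntegral _ hK hK', FTinv_eq_vector,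
    VectorFourier.fourierIntegral_continuousLinearMap_apply Real.continuous_fourierChar]
  · congr 1
    ext ξ
    simp [VectorFourier.fourierSMulRight_apply, negDot_apply]
    ring
  · refine Integrable.mono' (hK'.const_mul (2 * Real.pi * ‖negDot‖)) hK.1.fourierSMulRight
      (Filter.Eventually.of_forall fun ξ => ?_)
    have := VectorFourier.norm_fourierSMulRight_le negDot K ξ
    linarith

end Transfer

/-! ### Families with uniform decay -/

section Families

/-- A jointly continuous family of functions on `ℝ²` with decay `(1 + ‖x‖)⁻⁴`, uniform in the
parameter `τ`. -/
def Decay (G : ℝ → ℝ × ℝ → ℂ) (C : ℝ) : Prop :=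
  Continuous (fun p : ℝ × (ℝ × ℝ) => G p.1 p.2) ∧
    ∀ τ x, ‖G τ x‖ ≤ C * (1 + ‖x‖) ^ (-4 : ℝ)

/-- Compactness of the range makes the Schwartz seminorms bounded uniformly in the parameter. -/
lemma exists_decay {g : ℝ → 𝓢(ℝ × ℝ, ℂ)} (hg : Continuous g) (hc : IsCompact (Set.range g)) :
    ∃ C, Decay (fun τ => ⇑(g τ)) C := by
  have hb : ∀ k : ℕ, ∃ A, ∀ τ, SchwartzMap.seminorm ℂ k 0 (g τ) ≤ A := by
    intro k
    have hs : Continuous (SchwartzMap.seminorm ℂ k 0 : 𝓢(ℝ × ℝ, ℂ) → ℝ) :=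
      (schwartz_withSeminorms ℂ (ℝ × ℝ) ℂ).continuous_seminorm (k, 0)
    obtain ⟨A, hA⟩ := (hc.image hs).bddAbove
    exact ⟨A, fun τ => hA ⟨g τ, ⟨τ, rfl⟩, rfl⟩⟩
  obtain ⟨A, hA⟩ := hb 0
  obtain ⟨B, hB⟩ := hb 4
  refine ⟨8 * (A + B), ?_, fun τ x => ?_⟩
  · have h1 : Continuous fun τ => SchwartzMap.toBoundedContinuousFunctionCLM ℂ (ℝ × ℝ) ℂ (g τ) :=
      (ContinuousLinearMap.continuous _).comp hg
    exact (h1.comp continuous_fst).eval continuous_snd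
  · have h1 : ‖g τ x‖ ≤ A := (SchwartzMap.norm_le_seminorm ℂ (g τ) x).trans (hA τ)
    have h2 : ‖x‖ ^ 4 * ‖g τ x‖ ≤ B := (SchwartzMap.norm_pow_mul_le_seminorm ℂ (g τ) 4 x).trans (hB τ)
    have h3 : (1 + ‖x‖) ^ 4 ≤ 8 * (1 + ‖x‖ ^ 4) := by
      have := add_pow_le (zero_le_one) (norm_nonneg x) 4
      norm_num at this
      linarith
    have h4 : (0 : ℝ) < (1 + ‖x‖) ^ 4 := by positivity
    rw [Real.rpow_neg (by positivity), ← div_eq_mul_inv]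
    norm_cast
    rw [le_div_iff₀ h4]
    nlinarith [norm_nonneg (g τ x)]

variable {G : ℝ → ℝ × ℝ → ℂ} {C : ℝ}

lemma Decay.mul {c : ℝ → ℝ × ℝ → ℂ} (h : Decay G C)
    (hc : Continuous (fun p : ℝ × (ℝ × ℝ) => c p.1 p.2)) (hc1 : ∀ τ x, ‖c τ x‖ = 1) :
    Decay (fun τ x => c τ x * G τ x) C :=
  ⟨hc.mul h.1, fun τ x => by rw [norm_mul, hc1, one_mul]; exact h.2 τ x⟩

lemma Decay.integrable (h : Decay G C) (μ : Measure ℝ) [IsFiniteMeasure μ] :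
    Integrable (fun p : ℝ × (ℝ × ℝ) => G p.1 p.2) (μ.prod volume) := by
  have h1 : Integrable (fun x : ℝ × ℝ => C * (1 + ‖x‖) ^ (-4 : ℝ)) :=
    (integrable_one_add_norm (by simp; norm_num)).const_mul C
  exact Integrable.mono' (h1.comp_snd μ) h.1.aestronglyMeasurable
    (Filter.Eventually.of_forall fun p => h.2 p.1 p.2)

lemma Decay.integrable_norm_mul (h : Decay G C) (μ : Measure ℝ) [IsFiniteMeasure μ] :
    Integrable (fun p : ℝ × (ℝ × ℝ) => (‖p.2‖ : ℂ) * G p.1 p.2) (μ.prod volume) := by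
  have h1 : Integrable (fun x : ℝ × ℝ => C * (1 + ‖x‖) ^ (-3 : ℝ)) :=
    (integrable_one_add_norm (by simp; norm_num)).const_mul C
  refine Integrable.mono' (h1.comp_snd μ)
    (Continuous.mul (by fun_prop) h.1).aestronglyMeasurable
    (Filter.Eventually.of_forall fun p => ?_)
  have h2 := h.2 p.1 p.2
  have h3 : (0 : ℝ) < 1 + ‖p.2‖ := by positivity
  have h4 : (1 + ‖p.2‖) ^ (-3 : ℝ) = (1 + ‖p.2‖) * (1 + ‖p.2‖) ^ (-4 : ℝ) := by
    rw [← Real.rpow_one_add' h3.le (by norm_num)]; norm_num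
  rw [h4, norm_mul, Complex.norm_real, norm_norm]
  nlinarith [norm_nonneg p.2, norm_nonneg (G p.1 p.2)]

lemma Decay.norm_slice_le (h : Decay G C) (τ x₁ x₂ : ℝ) :
    ‖G τ (x₁, x₂)‖ ≤ C * (1 + ‖x₂‖) ^ (-4 : ℝ) := by
  have hC : 0 ≤ C := by
    have := h.2 0 0
    simp at this
    exact (norm_nonneg _).trans this
  refine (h.2 τ (x₁, x₂)).trans (mul_le_mul_of_nonneg_left ?_ hC)
  refine Real.rpow_le_rpow_of_nonpos (by positivity) ?_ (by norm_num)
  gcongr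
  exact norm_snd_le (x₁, x₂)

lemma integrable_slice_bound (C : ℝ) : Integrable (fun x : ℝ => C * (1 + ‖x‖) ^ (-4 : ℝ)) :=
  (integrable_one_add_norm (by simp)).const_mul C

lemma Decay.continuous_slice (h : Decay G C) (x₁ : ℝ) :
    Continuous fun p : ℝ × ℝ => G p.1 (x₁, p.2) :=
  h.1.comp (by fun_prop : Continuous fun p : ℝ × ℝ => (p.1, (x₁, p.2)))

lemma Decay.integrable_slice (h : Decay G C) (μ : Measure ℝ) [IsFiniteMeasure μ] (x₁ : ℝ) :
    Integrable (fun p : ℝ × ℝ => G p.1 (x₁, p.2)) (μ.prod volume) :=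
  Integrable.mono' ((integrable_slice_bound C).comp_snd μ)
    (h.continuous_slice x₁).aestronglyMeasurable
    (Filter.Eventually.of_forall fun p => h.norm_slice_le p.1 x₁ p.2)

end Families

/-! ### Minkowski's integral inequality in `L²` -/

section Minkowski

/-- Minkowski's integral inequality for `p = 2`, obtained by expanding the square and applying
Cauchy–Schwarz to the mixed products. -/
lemma lintegral_sq_lintegral_le {α β : Type*} [MeasurableSpace α] [MeasurableSpace β]
    {μ : Measure α} {ν : Measure β} [SFinite μ] [SFinite ν] {F : α → β → ℝ≥0∞}
    (hF : Measurable (Function.uncurry F)) :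
    ∫⁻ ξ, (∫⁻ x, F x ξ ∂μ) ^ 2 ∂ν ≤ (∫⁻ x, (∫⁻ ξ, F x ξ ^ 2 ∂ν) ^ ((1 : ℝ) / 2) ∂μ) ^ 2 := by
  have hm1 : ∀ x, Measurable (F x) := fun x => hF.of_uncurry_left
  have hm2 : ∀ ξ, Measurable fun x => F x ξ := fun ξ => hF.of_uncurry_right
  have hN : Measurable fun x => (∫⁻ ξ, F x ξ ^ 2 ∂ν) ^ ((1 : ℝ) / 2) :=
    (Measurable.lintegral_prod_right' (f := fun p : α × β => F p.1 p.2 ^ 2)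
      (hF.pow_const 2)).pow_const _
  calc ∫⁻ ξ, (∫⁻ x, F x ξ ∂μ) ^ 2 ∂ν
      = ∫⁻ ξ, ∫⁻ x, ∫⁻ y, F x ξ * F y ξ ∂μ ∂μ ∂ν := by
        refine lintegral_congr fun ξ => ?_
        rw [pow_two, ← lintegral_mul_const _ (hm2 ξ)]
        refine lintegral_congr fun x => ?_
        rw [lintegral_const_mul _ (hm2 ξ)]
    _ = ∫⁻ x, ∫⁻ y, ∫⁻ ξ, F x ξ * F y ξ ∂ν ∂μ ∂μ := by
        have hm : Measurable fun q : (β × α) × α => F q.1.2 q.1.1 * F q.2 q.1.1 :=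
          (hF.comp (by fun_prop : Measurable fun q : (β × α) × α => (q.1.2, q.1.1))).mul
            (hF.comp (by fun_prop : Measurable fun q : (β × α) × α => (q.2, q.1.1)))
        rw [lintegral_lintegral_swap hm.lintegral_prod_right'.aemeasurable]
        refine lintegral_congr fun x => ?_
        refine lintegral_lintegral_swap (Measurable.aemeasurable ?_)
        exact ((hm1 x).comp measurable_fst).mul
          (hF.comp (by fun_prop : Measurable fun q : β × α => (q.2, q.1)))
    _ ≤ ∫⁻ x, ∫⁻ y, (∫⁻ ξ, F x ξ ^ 2 ∂ν) ^ ((1 : ℝ) / 2) *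
          (∫⁻ ξ, F y ξ ^ 2 ∂ν) ^ ((1 : ℝ) / 2) ∂μ ∂μ := by
        refine lintegral_mono fun x => lintegral_mono fun y => ?_
        have := ENNReal.lintegral_mul_le_Lp_mul_Lq ν Real.HolderConjugate.two_two
          (hm1 x).aemeasurable (hm1 y).aemeasurable
        simpa using this
    _ = _ := by
        rw [pow_two, ← lintegral_mul_const _ hN]
        refine lintegral_congr fun x => ?_
        rw [lintegral_const_mul _ hN]

end Minkowski

/-! ### The smoothing effect in one frequency variable -/

section Smoothing

/-- One-dimensional local smoothing: with the substitution `s = ξ(ξ² + η²) / 2π`, whose derivative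
dominates `3ξ² / 2π`, the weighted norm in `ξ` is controlled by Plancherel in time. -/
lemma lintegral_phase_le {h : ℝ → ℂ} (hh : Integrable h) (η : ℝ) :
    ∫⁻ ξ : ℝ, ENNReal.ofReal (3 * ξ ^ 2) *
        ‖∫ τ, Complex.exp (-(Complex.I * ((τ * ξ * (ξ ^ 2 + η ^ 2) : ℝ) : ℂ))) * h τ‖ₑ ^ 2
      ≤ ENNReal.ofReal (2 * Real.pi) * ∫⁻ τ, ‖h τ‖ₑ ^ 2 := by
  have hpi := Real.pi_pos
  set p : ℝ → ℝ := fun ξ => ξ * (ξ ^ 2 + η ^ 2) / (2 * Real.pi) with hp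
  have hd : ∀ ξ, HasDerivAt p ((3 * ξ ^ 2 + η ^ 2) / (2 * Real.pi)) ξ := by
    intro ξ
    have := ((hasDerivAt_id ξ).mul (((hasDerivAt_id ξ).pow 2).add_const (η ^ 2))).div_const (2 * Real.pi)
    refine this.congr_deriv ?_
    simp
    ring
  have hinj : Function.Injective p := by
    have hm : StrictMono fun ξ : ℝ => ξ * (ξ ^ 2 + η ^ 2) := by
      intro a b hab
      dsimp only
      have : 0 < (b - a) * (b ^ 2 + a * b + a ^ 2 + η ^ 2) := by
        refine mul_pos (by linarith) ?_
        by_contra hcon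
        push Not at hcon
        nlinarith [sq_nonneg (a + b), sq_nonneg η, sq_nonneg a, sq_nonneg b,
          mul_pos (sub_pos.2 hab) (sub_pos.2 hab)]
      nlinarith
    intro a b hab
    simp only [hp] at hab
    apply hm.injective
    field_simp at hab
    simpa using hab
  have hF : ∀ ξ, ∫ τ, Complex.exp (-(Complex.I * ((τ * ξ * (ξ ^ 2 + η ^ 2) : ℝ) : ℂ))) * h τ
      = 𝓕 h (p ξ) := by
    intro ξ
    rw [Real.fourier_eq']
    refine integral_congr_ae (Filter.Eventually.of_forall fun τ => ?_)
    dsimp only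
    rw [smul_eq_mul]
    congr 2
    have : -2 * Real.pi * inner ℝ τ (p ξ) = -(τ * ξ * (ξ ^ 2 + η ^ 2)) := by
      simp [hp]; field_simp
    rw [this]; push_cast; ring
  simp_rw [hF]
  calc ∫⁻ ξ : ℝ, ENNReal.ofReal (3 * ξ ^ 2) * ‖𝓕 h (p ξ)‖ₑ ^ 2
      ≤ ∫⁻ ξ : ℝ, ENNReal.ofReal (2 * Real.pi) *
          (ENNReal.ofReal |(3 * ξ ^ 2 + η ^ 2) / (2 * Real.pi)| * ‖𝓕 h (p ξ)‖ₑ ^ 2) := by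
        refine lintegral_mono fun ξ => ?_
        rw [← mul_assoc, ← ENNReal.ofReal_mul (by positivity)]
        refine mul_le_mul' (ENNReal.ofReal_le_ofReal ?_) le_rfl
        rw [abs_of_nonneg (by positivity)]
        field_simp
        nlinarith [sq_nonneg η]
    _ = ENNReal.ofReal (2 * Real.pi) * ∫⁻ s in p '' Set.univ, ‖𝓕 h s‖ₑ ^ 2 := by
        rw [lintegral_const_mul' _ _ ENNReal.ofReal_ne_top,
          lintegral_image_eq_lintegral_abs_deriv_mul MeasurableSet.univ
            (fun ξ _ => (hd ξ).hasDerivWithinAt) hinj.injOn (fun s => ‖𝓕 h s‖ₑ ^ 2),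
          Measure.restrict_univ]
    _ ≤ ENNReal.ofReal (2 * Real.pi) * ∫⁻ s, ‖𝓕 h s‖ₑ ^ 2 := by
        gcongr
        exact Measure.restrict_le_self
    _ ≤ _ := mul_le_mul' le_rfl (lintegral_fourier_sq_le hh)

end Smoothing

/-! ### Slices in `x₁` -/

section Slices

/-- The partial Fourier transform of `G τ` in the second variable, at frequency `η`. -/
def pft (G : ℝ → ℝ × ℝ → ℂ) (τ x₁ η : ℝ) : ℂ :=
  ∫ x₂ : ℝ, Complex.exp ((-(2 * Real.pi * (x₂ * η)) : ℝ) * Complex.I) * G τ (x₁, x₂)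

/-- The time integral over `(0, t]` of `e^{-iτ ξ₁(ξ₁² + ξ₂²)}` against the partial Fourier transform
of the slice at `x₁`. -/
def sliceInt (G : ℝ → ℝ × ℝ → ℂ) (t x₁ : ℝ) (ξ : ℝ × ℝ) : ℂ :=
  ∫ τ in Set.Ioc 0 t, Complex.exp (-(Complex.I * ((τ * ξ.1 * (ξ.1 ^ 2 + ξ.2 ^ 2) : ℝ) : ℂ))) *
    pft G τ x₁ ξ.2

variable {G : ℝ → ℝ × ℝ → ℂ} {C : ℝ}

lemma norm_exp_real_mul_I (r : ℝ) : ‖Complex.exp ((r : ℂ) * Complex.I)‖ = 1 :=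
  Complex.norm_exp_ofReal_mul_I r

lemma Decay.integrable_pft (h : Decay G C) (t x₁ η : ℝ) :
    Integrable (fun τ => pft G τ x₁ η) (volume.restrict (Set.Ioc 0 t)) := by
  have h1 : Decay (fun τ x => Complex.exp ((-(2 * Real.pi * (x.2 * η)) : ℝ) * Complex.I) * G τ x) C :=
    h.mul (by fun_prop) (fun τ x => norm_exp_real_mul_I _)
  exact (h1.integrable_slice (volume.restrict (Set.Ioc 0 t)) x₁).integral_prod_left

lemma Decay.measurable_pft (h : Decay G C) :
    Measurable fun q : (ℝ × ℝ) × ℝ => pft G q.1.1 q.1.2 q.2 := by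
  have h1 : Continuous fun q : ((ℝ × ℝ) × ℝ) × ℝ =>
      Complex.exp ((-(2 * Real.pi * (q.2 * q.1.2)) : ℝ) * Complex.I) *
        G q.1.1.1 (q.1.1.2, q.2) :=
    Continuous.mul (by fun_prop) (h.1.comp (by fun_prop :
      Continuous fun q : ((ℝ × ℝ) × ℝ) × ℝ => (q.1.1.1, (q.1.1.2, q.2))))
  exact (h1.stronglyMeasurable.integral_prod_right (ν := volume)).measurable

lemma Decay.measurable_sliceInt (h : Decay G C) (t : ℝ) :
    Measurable fun q : ℝ × (ℝ × ℝ) => sliceInt G t q.1 q.2 := by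
  have h1 : Measurable fun q : (ℝ × (ℝ × ℝ)) × ℝ =>
      Complex.exp (-(Complex.I * ((q.2 * q.1.2.1 * (q.1.2.1 ^ 2 + q.1.2.2 ^ 2) : ℝ) : ℂ))) *
        pft G q.2 q.1.1 q.1.2.2 := by
    have hv : Measurable fun q : (ℝ × (ℝ × ℝ)) × ℝ => ((q.2, q.1.1), q.1.2.2) := by fun_prop
    have hp := h.measurable_pft.comp hv
    exact Measurable.mul (by fun_prop) hp
  exact (h1.stronglyMeasurable.integral_prod_right
    (ν := volume.restrict (Set.Ioc 0 t))).measurable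

/-- Plancherel in the second variable. -/
lemma Decay.lintegral_pft_sq_le (h : Decay G C) (τ x₁ : ℝ) :
    ∫⁻ η, ‖pft G τ x₁ η‖ₑ ^ 2 ≤ ∫⁻ x₂, ‖G τ (x₁, x₂)‖ₑ ^ 2 := by
  have hi : Integrable fun x₂ => G τ (x₁, x₂) :=
    Integrable.mono' (integrable_slice_bound C)
      ((h.continuous_slice x₁).comp (by fun_prop : Continuous fun x₂ : ℝ => (τ, x₂))
        ).aestronglyMeasurable
      (Filter.Eventually.of_forall fun x₂ => h.norm_slice_le τ x₁ x₂)
  refine le_trans (le_of_eq ?_) (lintegral_fourier_sq_le hi)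
  refine lintegral_congr fun η => ?_
  rw [Real.fourier_eq', pft]
  congr 2
  refine integral_congr_ae (Filter.Eventually.of_forall fun x => ?_)
  simp only [smul_eq_mul]
  congr 3
  simp
  ring

/-- The estimate for a fixed slice `x₁`: smoothing in `(τ, ξ₁)` and Plancherel in `x₂`. -/
lemma Decay.lintegral_sliceInt_sq_le (h : Decay G C) (t x₁ : ℝ) :
    ∫⁻ ξ : ℝ × ℝ, (ENNReal.ofReal (2 * Real.pi * |ξ.1|) * ‖sliceInt G t x₁ ξ‖ₑ) ^ 2
      ≤ ENNReal.ofReal (8 * Real.pi ^ 3 / 3) *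
        ∫⁻ x₂ : ℝ, ∫⁻ τ in Set.Icc 0 t, ‖G τ (x₁, x₂)‖ₑ ^ 2 := by
  have hpi := Real.pi_pos
  have hms : Measurable fun ξ : ℝ × ℝ => sliceInt G t x₁ ξ := by
    have hv : Measurable fun ξ : ℝ × ℝ => (x₁, ξ) := by fun_prop
    have hs := (h.measurable_sliceInt t).comp hv
    exact hs
  have hmp : Measurable fun q : ℝ × ℝ => pft G q.2 x₁ q.1 := by
    have hv : Measurable fun q : ℝ × ℝ => ((q.2, x₁), q.1) := by fun_prop
    have hs := h.measurable_pft.comp hv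
    exact hs
  have step : ∀ η : ℝ, ∫⁻ ξ₁ : ℝ,
      (ENNReal.ofReal (2 * Real.pi * |ξ₁|) * ‖sliceInt G t x₁ (ξ₁, η)‖ₑ) ^ 2
      ≤ ENNReal.ofReal (8 * Real.pi ^ 3 / 3) * ∫⁻ τ in Set.Ioc 0 t, ‖pft G τ x₁ η‖ₑ ^ 2 := by
    intro η
    have hh : Integrable ((Set.Ioc 0 t).indicator fun τ => pft G τ x₁ η) :=
      (integrable_indicator_iff measurableSet_Ioc).2 (h.integrable_pft t x₁ η)
    have key := lintegral_phase_le hh η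
    have e1 : ∫⁻ τ, ‖(Set.Ioc 0 t).indicator (fun τ => pft G τ x₁ η) τ‖ₑ ^ 2
        = ∫⁻ τ in Set.Ioc 0 t, ‖pft G τ x₁ η‖ₑ ^ 2 := by
      rw [← lintegral_indicator measurableSet_Ioc]
      refine lintegral_congr fun τ => ?_
      by_cases hτ : τ ∈ Set.Ioc 0 t <;> simp [hτ]
    have e2 : ∀ ξ₁ : ℝ, ∫ τ, Complex.exp (-(Complex.I * ((τ * ξ₁ * (ξ₁ ^ 2 + η ^ 2) : ℝ) : ℂ))) *
        (Set.Ioc 0 t).indicator (fun τ => pft G τ x₁ η) τ = sliceInt G t x₁ (ξ₁, η) := by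
      intro ξ₁
      rw [sliceInt, ← integral_indicator measurableSet_Ioc]
      refine integral_congr_ae (Filter.Eventually.of_forall fun τ => ?_)
      by_cases hτ : τ ∈ Set.Ioc 0 t <;> simp [hτ]
    simp_rw [e2, e1] at key
    calc ∫⁻ ξ₁ : ℝ, (ENNReal.ofReal (2 * Real.pi * |ξ₁|) * ‖sliceInt G t x₁ (ξ₁, η)‖ₑ) ^ 2
        = ∫⁻ ξ₁ : ℝ, ENNReal.ofReal (4 * Real.pi ^ 2 / 3) *
            (ENNReal.ofReal (3 * ξ₁ ^ 2) * ‖sliceInt G t x₁ (ξ₁, η)‖ₑ ^ 2) := by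
          refine lintegral_congr fun ξ₁ => ?_
          rw [mul_pow, ← mul_assoc, ← ENNReal.ofReal_mul (by positivity),
            ← ENNReal.ofReal_pow (by positivity), mul_pow, sq_abs]
          congr 2
          ring
      _ ≤ ENNReal.ofReal (4 * Real.pi ^ 2 / 3) *
            (ENNReal.ofReal (2 * Real.pi) * ∫⁻ τ in Set.Ioc 0 t, ‖pft G τ x₁ η‖ₑ ^ 2) := by
          rw [lintegral_const_mul' _ _ ENNReal.ofReal_ne_top]
          exact mul_le_mul' le_rfl key
      _ = _ := by
          rw [← mul_assoc, ← ENNReal.ofReal_mul (by positivity)]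
          congr 2
          ring
  calc ∫⁻ ξ : ℝ × ℝ, (ENNReal.ofReal (2 * Real.pi * |ξ.1|) * ‖sliceInt G t x₁ ξ‖ₑ) ^ 2
      = ∫⁻ η : ℝ, ∫⁻ ξ₁ : ℝ,
          (ENNReal.ofReal (2 * Real.pi * |ξ₁|) * ‖sliceInt G t x₁ (ξ₁, η)‖ₑ) ^ 2 := by
        rw [Measure.volume_eq_prod, lintegral_prod_symm _ (Measurable.aemeasurable (by fun_prop))]
    _ ≤ ∫⁻ η : ℝ, ENNReal.ofReal (8 * Real.pi ^ 3 / 3) *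
          ∫⁻ τ in Set.Ioc 0 t, ‖pft G τ x₁ η‖ₑ ^ 2 := lintegral_mono step
    _ = ENNReal.ofReal (8 * Real.pi ^ 3 / 3) *
          ∫⁻ τ in Set.Ioc 0 t, ∫⁻ η : ℝ, ‖pft G τ x₁ η‖ₑ ^ 2 := by
        rw [lintegral_const_mul' _ _ ENNReal.ofReal_ne_top,
          lintegral_lintegral_swap (Measurable.aemeasurable (hmp.enorm.pow_const 2))]
    _ ≤ ENNReal.ofReal (8 * Real.pi ^ 3 / 3) *
          ∫⁻ τ in Set.Ioc 0 t, ∫⁻ x₂ : ℝ, ‖G τ (x₁, x₂)‖ₑ ^ 2 :=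
        mul_le_mul' le_rfl (lintegral_mono fun τ => h.lintegral_pft_sq_le τ x₁)
    _ = ENNReal.ofReal (8 * Real.pi ^ 3 / 3) *
          ∫⁻ x₂ : ℝ, ∫⁻ τ in Set.Ioc 0 t, ‖G τ (x₁, x₂)‖ₑ ^ 2 := by
        rw [lintegral_lintegral_swap]
        exact ((h.continuous_slice x₁).measurable.enorm.pow_const 2).aemeasurable
    _ ≤ _ := mul_le_mul' le_rfl (lintegral_mono fun x₂ =>
        lintegral_mono_set Set.Ioc_subset_Icc_self)

end Slices

/-! ### The Duhamel integral -/

section Duhamel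

/-- The spatial Fourier transform of the Duhamel integral. -/
def duhHat (G : ℝ → ℝ × ℝ → ℂ) (t : ℝ) (ξ : ℝ × ℝ) : ℂ :=
  ∫ τ in Set.Ioc 0 t,
    Complex.exp (Complex.I * (((t - τ) * ξ.1 * (ξ.1 ^ 2 + ξ.2 ^ 2) : ℝ) : ℂ)) * FT (G τ) ξ

variable {G : ℝ → ℝ × ℝ → ℂ} {C : ℝ}

lemma norm_exp_I_mul_real (r : ℝ) : ‖Complex.exp (Complex.I * (r : ℂ))‖ = 1 :=
  Complex.norm_exp_I_mul_ofReal r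

lemma decay_duhHat_integrand (h : Decay (fun τ => FT (G τ)) C) (t : ℝ) :
    Decay (fun τ ξ => Complex.exp (Complex.I * (((t - τ) * ξ.1 * (ξ.1 ^ 2 + ξ.2 ^ 2) : ℝ) : ℂ)) *
      FT (G τ) ξ) C :=
  h.mul (by fun_prop) (fun τ x => norm_exp_I_mul_real _)

lemma integrable_duhHat (h : Decay (fun τ => FT (G τ)) C) (t : ℝ) :
    Integrable (duhHat G t) :=
  ((decay_duhHat_integrand h t).integrable (volume.restrict (Set.Ioc 0 t))).integral_prod_right

/-- This weighted integrability is what makes the Duhamel integral genuinely differentiable, so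
that `pd1` takes no junk value. -/
lemma integrable_norm_mul_duhHat (h : Decay (fun τ => FT (G τ)) C) (t : ℝ) :
    Integrable (fun ξ => ‖ξ‖ * ‖duhHat G t ξ‖) := by
  have h1 := ((decay_duhHat_integrand h t).integrable_norm_mul
    (volume.restrict (Set.Ioc 0 t))).integral_prod_right.norm
  refine h1.congr (Filter.Eventually.of_forall fun ξ => ?_)
  dsimp only
  rw [integral_const_mul, norm_mul, Complex.norm_real, norm_norm]
  rfl

/-- Fubini in `(τ, ξ)`. -/
lemma Duh_eq_FTinv (h : Decay (fun τ => FT (G τ)) C) {t : ℝ} (ht : 0 ≤ t) :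
    Duh G t = FTinv (duhHat G t) := by
  ext x
  rw [Duh, intervalIntegral.integral_of_le ht, FTinv]
  have hd := (decay_duhHat_integrand h t).mul
    (c := fun _ ξ => Complex.exp ((((2 * Real.pi * (x.1 * ξ.1 + x.2 * ξ.2)) : ℝ) : ℂ) * Complex.I))
    (by fun_prop) (fun τ ξ => norm_exp_real_mul_I _)
  simp only [U, FTinv]
  rw [integral_integral_swap (hd.integrable (volume.restrict (Set.Ioc 0 t)))]
  refine integral_congr_ae (Filter.Eventually.of_forall fun ξ => ?_)
  dsimp only
  rw [integral_const_mul]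
  rfl

/-- Up to unimodular factors, `duhHat G t ξ` is the integral over `x₁` of the slices
`sliceInt G t x₁ ξ`. -/
lemma enorm_duhHat_le (h : Decay G C) (t : ℝ) (ξ : ℝ × ℝ) :
    ‖duhHat G t ξ‖ₑ ≤ ∫⁻ x₁, ‖sliceInt G t x₁ ξ‖ₑ := by
  set μ := (volume : Measure ℝ).restrict (Set.Ioc 0 t) with hμ
  set c : ℝ → ℝ × ℝ → ℂ := fun τ x =>
    Complex.exp (Complex.I * (((t - τ) * ξ.1 * (ξ.1 ^ 2 + ξ.2 ^ 2) : ℝ) : ℂ)) *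
    Complex.exp (((-(2 * Real.pi * (x.1 * ξ.1 + x.2 * ξ.2)) : ℝ) : ℂ) * Complex.I) with hc
  have hd : Decay (fun τ x => c τ x * G τ x) C := by
    refine h.mul (by fun_prop) (fun τ x => ?_)
    rw [hc, norm_mul, norm_exp_I_mul_real, norm_exp_real_mul_I, one_mul]
  have hi := hd.integrable μ
  have e1 : duhHat G t ξ = ∫ τ, ∫ x, c τ x * G τ x ∂volume ∂μ := by
    rw [duhHat]
    refine integral_congr_ae (Filter.Eventually.of_forall fun τ => ?_)
    dsimp only
    rw [FT, ← integral_const_mul]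
    simp only [hc, mul_assoc]
  have e2 : duhHat G t ξ = ∫ x₁, ∫ x₂, ∫ τ, c τ (x₁, x₂) * G τ (x₁, x₂) ∂μ := by
    rw [e1, integral_integral_swap hi]
    have := hi.integral_prod_right
    rw [Measure.volume_eq_prod] at this ⊢
    rw [integral_prod _ this]
  have e3 : ∀ x₁, ∫ x₂, ∫ τ, c τ (x₁, x₂) * G τ (x₁, x₂) ∂μ
      = Complex.exp (Complex.I * ((t * ξ.1 * (ξ.1 ^ 2 + ξ.2 ^ 2) : ℝ) : ℂ)) *
        Complex.exp (((-(2 * Real.pi * (x₁ * ξ.1)) : ℝ) : ℂ) * Complex.I) *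
        sliceInt G t x₁ ξ := by
    intro x₁
    rw [← integral_integral_swap (hd.integrable_slice μ x₁), sliceInt, ← integral_const_mul]
    refine integral_congr_ae (Filter.Eventually.of_forall fun τ => ?_)
    dsimp only
    rw [pft, ← integral_const_mul, ← integral_const_mul]
    refine integral_congr_ae (Filter.Eventually.of_forall fun x₂ => ?_)
    simp only [hc, ← mul_assoc, ← Complex.exp_add]
    congr 2
    push_cast
    ring
  rw [e2]
  refine (enorm_integral_le_lintegral_enorm _).trans (lintegral_mono fun x₁ => ?_)
  dsimp only
  rw [e3, enorm_mul, enorm_mul, ← ofReal_norm, ← ofReal_norm, norm_exp_I_mul_real,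
    norm_exp_real_mul_I]
  simp

/-- The estimate at a fixed time for globally defined families: Plancherel in `ℝ²`, then
Minkowski over the slices `x₁`, then the estimate for each slice. -/
lemma eLpNorm_pd1_Duh_le {C' : ℝ} (h : Decay G C) (h' : Decay (fun τ => FT (G τ)) C') {t : ℝ}
    (ht : 0 ≤ t) :
    eLpNorm (pd1 (Duh G t)) 2 volume
      ≤ ENNReal.ofReal (8 * Real.pi ^ 3 / 3) ^ ((1 : ℝ) / 2) * L1x1L2Norm t G := by
  have hK := integrable_duhHat h' t
  have hK' := integrable_norm_mul_duhHat h' t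
  have hpi := Real.pi_pos
  rw [Duh_eq_FTinv h' ht, pd1_FTinv hK hK']
  have hn : ∀ ξ : ℝ × ℝ, ‖(2 * Real.pi * Complex.I * ξ.1 : ℂ)‖ = 2 * Real.pi * |ξ.1| := by
    intro ξ
    simp [abs_of_pos hpi]
  have hK1 : Integrable (fun ξ : ℝ × ℝ => (2 * Real.pi * Complex.I * ξ.1) * duhHat G t ξ) := by
    refine Integrable.mono' (hK'.const_mul (2 * Real.pi))
      (AEStronglyMeasurable.mul (by fun_prop) hK.1) (Filter.Eventually.of_forall fun ξ => ?_)
    rw [norm_mul, hn, ← mul_assoc]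
    gcongr
    exact norm_fst_le ξ
  have hsq := eLpNorm_nnreal_pow_eq_lintegral (p := 2) (μ := volume) (by norm_num)
    (f := FTinv fun ξ : ℝ × ℝ => (2 * Real.pi * Complex.I * ξ.1) * duhHat G t ξ)
  simp only [NNReal.coe_ofNat, ENNReal.rpow_ofNat, ENNReal.coe_ofNat] at hsq
  refine (ENNReal.pow_le_pow_left_iff two_ne_zero).1 ?_
  rw [hsq]
  have hF : Measurable (Function.uncurry fun (x₁ : ℝ) (ξ : ℝ × ℝ) =>
      ENNReal.ofReal (2 * Real.pi * |ξ.1|) * ‖sliceInt G t x₁ ξ‖ₑ) :=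
    Measurable.mul (by fun_prop) (h.measurable_sliceInt t).enorm
  refine (lintegral_FTinv_sq_le hK1).trans ?_
  calc ∫⁻ ξ : ℝ × ℝ, ‖(2 * Real.pi * Complex.I * ξ.1) * duhHat G t ξ‖ₑ ^ 2
      ≤ ∫⁻ ξ : ℝ × ℝ,
          (∫⁻ x₁, ENNReal.ofReal (2 * Real.pi * |ξ.1|) * ‖sliceInt G t x₁ ξ‖ₑ) ^ 2 := by
        refine lintegral_mono fun ξ => ?_
        dsimp only
        rw [enorm_mul, ← ofReal_norm (2 * Real.pi * Complex.I * ξ.1 : ℂ), hn,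
          lintegral_const_mul' _ _ ENNReal.ofReal_ne_top]
        gcongr
        exact enorm_duhHat_le h t ξ
    _ ≤ (∫⁻ x₁, (∫⁻ ξ : ℝ × ℝ,
          (ENNReal.ofReal (2 * Real.pi * |ξ.1|) * ‖sliceInt G t x₁ ξ‖ₑ) ^ 2) ^ ((1 : ℝ) / 2)) ^ 2 :=
        lintegral_sq_lintegral_le hF
    _ ≤ _ := by
        rw [L1x1L2Norm, ← lintegral_const_mul' _ _ (by finiteness)]
        gcongr with x₁
        rw [← ENNReal.mul_rpow_of_nonneg _ _ (by norm_num)]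
        refine ENNReal.rpow_le_rpow ((h.lintegral_sliceInt_sq_le t x₁).trans (le_of_eq ?_))
          (by norm_num)
        simp [enorm_eq_nnnorm]

end Duhamel

/-- `L^∞_T L²_x` bound of `∂_{x₁}` of the Duhamel term by the
`L¹_{x₁} L²_{x₂ T}` norm of the source. -/
theorem stmt3 :
    ∃ C : ℝ, 0 < C ∧ ∀ T : ℝ, 0 ≤ T → T ≤ 1 →
      ∀ g : ℝ → SchwartzMap (ℝ × ℝ) ℂ, ContinuousOn g (Set.Icc 0 T) →
        (⨆ t ∈ Set.Icc (0:ℝ) T,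
            eLpNorm (pd1 (Duh (fun τ => ⇑(g τ)) t)) 2 volume)
          ≤ ENNReal.ofReal C * L1x1L2Norm T (fun τ => ⇑(g τ)) := by
  have hpi := Real.pi_pos
  refine ⟨(8 * Real.pi ^ 3 / 3) ^ ((1 : ℝ) / 2), by positivity, fun T hT _ g hg => ?_⟩
  refine iSup₂_le fun t ht => ?_
  rw [← ENNReal.ofReal_rpow_of_pos (by positivity)]
  -- Freeze `g` outside `[0, T]`: this changes neither side and gives a globally continuous family
  -- with compact range.
  set g' : ℝ → 𝓢(ℝ × ℝ, ℂ) := Set.IccExtend hT ((Set.Icc 0 T).domRestrict g) with hg'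
  have hgg : ∀ τ ∈ Set.Icc 0 T, g' τ = g τ := fun τ hτ => Set.IccExtend_of_mem hT _ hτ
  have hgc : Continuous g' := (continuousOn_iff_continuous_domRestrict.1 hg).Icc_extend'
  have hgr : IsCompact (Set.range g') := by
    rw [hg', Set.IccExtend_range, Set.range_domRestrict]
    exact isCompact_Icc.image_of_continuousOn hg
  obtain ⟨C, hC⟩ := exists_decay hgc hgr
  obtain ⟨Φ, hΦ⟩ := exists_FT_clm
  obtain ⟨C', hC'⟩ := exists_decay (g := fun τ => Φ (g' τ)) (Φ.continuous.comp hgc) (by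
    rw [Set.range_comp' Φ g']
    exact hgr.image Φ.continuous)
  have hC'' : Decay (fun τ => FT (g' τ)) C' := by
    have : (fun τ => FT (g' τ)) = fun τ => ⇑(Φ (g' τ)) := by
      ext τ ξ
      exact (hΦ _ _).symm
    rw [this]
    exact hC'
  have hD : Duh (fun τ => ⇑(g τ)) t = Duh (fun τ => ⇑(g' τ)) t := by
    ext x
    refine intervalIntegral.integral_congr fun τ hτ => ?_
    rw [Set.uIcc_of_le ht.1] at hτ
    dsimp only
    rw [hgg τ ⟨hτ.1, hτ.2.trans ht.2⟩]
  have hL : L1x1L2Norm t (fun τ => ⇑(g' τ)) ≤ L1x1L2Norm T (fun τ => ⇑(g τ)) := by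
    refine lintegral_mono fun x₁ => ENNReal.rpow_le_rpow (lintegral_mono fun x₂ => ?_) (by norm_num)
    refine (lintegral_mono_set (Set.Icc_subset_Icc_right ht.2)).trans (le_of_eq ?_)
    refine setLIntegral_congr_fun measurableSet_Icc fun τ hτ => ?_
    dsimp only
    rw [hgg τ hτ]
  rw [hD]
  exact (eLpNorm_pd1_Duh_le hC hC'' ht.1).trans (mul_le_mul' le_rfl hL)
end
end
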